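/- Let γ₀ be an unconstrained minimizing geodesic joining p₋ to p₊. Then there exists ε₁ > 0 such that for every A with |A − 𝒜(γ₀)| < ε₁ there exist a function U ∈ G_A and a wave speed ν ∈ ℝ such that: U minimizes H over G_A; U is smooth and satisfies the traveling-wave system U''(y) = ∇W(U(y)) − ν J U'(y) for all y ∈ ℝ, with U(y) → p₋ as y → −∞ and U(y) → p₊ as y → +∞; and U satisfies the equipartition relation |U'(y)|² = 2 W(U(y)) for all y (U is the equipartition parametrization of the isoperimetric curve with constraint A). -/

import Mathlib

open MeasureTheory Set Filter Topology
open scoped ENNReal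

noncomputable section

/-- The Euclidean norm of a vector in `ℝ × ℝ`. -/
def enorm2 (v : ℝ × ℝ) : ℝ := Real.sqrt (v.1 ^ 2 + v.2 ^ 2)

/-- The degenerate length `E(γ) = ∫ₐᵇ F(γ(t)) |γ'(t)| dt` of a planar curve. -/
def degLen (F : ℝ × ℝ → ℝ) (a b : ℝ) (γ : ℝ → ℝ × ℝ) : ℝ :=
  ∫ t in a..b, F (γ t) * enorm2 (deriv γ t)

/-- The signed area `𝒜(γ) = ∫ₐᵇ γ¹(t) (γ²)'(t) dt` of a planar curve. -/
def sArea (a b : ℝ) (γ : ℝ → ℝ × ℝ) : ℝ :=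
  ∫ t in a..b, (γ t).1 * deriv (fun s => (γ s).2) t

/-- A locally Lipschitz curve on `[a,b]` joining `p` to `q`. -/
def IsCurve (a b : ℝ) (γ : ℝ → ℝ × ℝ) (p q : ℝ × ℝ) : Prop :=
  a ≤ b ∧ LocallyLipschitz γ ∧ γ a = p ∧ γ b = q

/-- The standing hypotheses on the potential `W`: smooth, nonnegative, vanishing exactly at the
two distinct wells `pm` and `pp`, with positive definite Hessians there, and bounded away from
zero near infinity (`liminf_{|p|→∞} W(p) > 0`). -/
structure TwoWell (W : ℝ × ℝ → ℝ) (pm pp : ℝ × ℝ) : Prop where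
  smooth : ContDiff ℝ (⊤ : ℕ∞) W
  nonneg : ∀ p, 0 ≤ W p
  wells_ne : pm ≠ pp
  zeroSet : ∀ p, W p = 0 ↔ p = pm ∨ p = pp
  hess_m : ∀ v : ℝ × ℝ, v ≠ 0 → 0 < iteratedFDeriv ℝ 2 W pm ![v, v]
  hess_p : ∀ v : ℝ × ℝ, v ≠ 0 → 0 < iteratedFDeriv ℝ 2 W pp ![v, v]
  coercive : ∃ c > 0, ∃ R : ℝ, ∀ p : ℝ × ℝ, R ≤ ‖p‖ → c ≤ W p

/-- The symplectic rotation `J(x,y) = (y,−x)` (the matrix with rows `(0,1)` and `(−1,0)`). -/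
def Jv (v : ℝ × ℝ) : ℝ × ℝ := (v.2, -v.1)

/-- The gradient of `W`. -/
def gradW (W : ℝ × ℝ → ℝ) (p : ℝ × ℝ) : ℝ × ℝ := (fderiv ℝ W p (1, 0), fderiv ℝ W p (0, 1))

/-- The Hamiltonian energy `H(u) = ∫_ℝ (½|u'|² + W(u))`, valued in `[0,∞]`. -/
def Hfun (W : ℝ × ℝ → ℝ) (u : ℝ → ℝ × ℝ) : ℝ≥0∞ :=
  ∫⁻ y : ℝ, ENNReal.ofReal ((1 / 2) * enorm2 (deriv u y) ^ 2 + W (u y))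

/-- The signed area `𝒜(u) = ∫_ℝ u¹ (u²)' dy` of an entire curve. -/
def areaLine (u : ℝ → ℝ × ℝ) : ℝ := ∫ y : ℝ, (u y).1 * deriv (fun z => (u z).2) y

/-- Membership of `u − g` in `H¹(ℝ;ℝ²)`: `u − g ∈ L²` and `u` is absolutely continuous with
`L²` derivative. -/
def ShiftH1 (g u : ℝ → ℝ × ℝ) : Prop :=
  ∃ v : ℝ → ℝ × ℝ, MemLp v 2 volume ∧ MemLp (fun y => u y - g y) 2 volume ∧
    ∀ s t : ℝ, u t - u s = ∫ y in s..t, v y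

/-- The admissible class `G_A = { u : u − g ∈ H¹(ℝ;ℝ²), 𝒜(u) = A }`. -/
def InGA (g : ℝ → ℝ × ℝ) (A : ℝ) (u : ℝ → ℝ × ℝ) : Prop :=
  ShiftH1 g u ∧ areaLine u = A

namespace TW

/-- energy density -/
def dens (W : ℝ × ℝ → ℝ) (u v : ℝ → ℝ × ℝ) (t : ℝ) : ℝ :=
  (1 / 2) * ((v t).1 ^ 2 + (v t).2 ^ 2) + W (u t)

/-- `u` is absolutely continuous with square integrable velocity `v` -/
structure Arc (u v : ℝ → ℝ × ℝ) : Prop where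
  mem : MemLp v 2 volume
  ftc : ∀ s t : ℝ, u t - u s = ∫ y in s..t, v y

/-- finite energy heteroclinic connection -/
structure Adm (W : ℝ × ℝ → ℝ) (pm pp : ℝ × ℝ) (u v : ℝ → ℝ × ℝ) : Prop extends Arc u v where
  iW : Integrable (fun t => W (u t))
  lm : Tendsto u atBot (𝓝 pm)
  lp : Tendsto u atTop (𝓝 pp)

/-- total energy -/
def En (W : ℝ × ℝ → ℝ) (u v : ℝ → ℝ × ℝ) : ℝ := ∫ t, dens W u v t

/-- conditionally convergent area -/
def HasArea (u v : ℝ → ℝ × ℝ) (A : ℝ) : Prop :=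
  Tendsto (fun st : ℝ × ℝ => ∫ t in st.1..st.2, (u t).1 * (v t).2) (atBot ×ˢ atTop) (𝓝 A)

lemma HasArea.unique {u v : ℝ → ℝ × ℝ} {A B : ℝ} (h1 : HasArea u v A) (h2 : HasArea u v B) :
    A = B := tendsto_nhds_unique h1 h2

lemma li_ii {E : Type*} [NormedAddCommGroup E] {f : ℝ → E} (hf : LocallyIntegrable f volume)
    (x y : ℝ) : IntervalIntegrable f volume x y :=
  intervalIntegrable_iff.mpr <|
    (hf.integrableOn_isCompact isCompact_uIcc).mono_set uIoc_subset_uIcc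

namespace Arc
variable {u v : ℝ → ℝ × ℝ}

lemma locInt (h : Arc u v) : LocallyIntegrable v volume := h.mem.locallyIntegrable (by norm_num)

lemma intv (h : Arc u v) (s t : ℝ) : IntervalIntegrable v volume s t :=
  li_ii h.locInt s t

lemma cont (h : Arc u v) : Continuous u := by
  have : u = fun t => u 0 + ∫ y in (0:ℝ)..t, v y := by
    funext t; rw [← h.ftc 0 t]; simp
  rw [this]
  exact continuous_const.add (intervalIntegral.continuous_primitive (fun a b => h.intv a b) 0)

lemma mem1 (h : Arc u v) : MemLp (fun t => (v t).1) 2 volume :=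
  (ContinuousLinearMap.fst ℝ ℝ ℝ).comp_memLp' h.mem

lemma mem2 (h : Arc u v) : MemLp (fun t => (v t).2) 2 volume :=
  (ContinuousLinearMap.snd ℝ ℝ ℝ).comp_memLp' h.mem

lemma sq1 (h : Arc u v) : Integrable (fun t => (v t).1 ^ 2) := h.mem1.integrable_sq
lemma sq2 (h : Arc u v) : Integrable (fun t => (v t).2 ^ 2) := h.mem2.integrable_sq

lemma intv1 (h : Arc u v) (s t : ℝ) : IntervalIntegrable (fun t => (v t).1) volume s t :=
  li_ii (h.mem1.locallyIntegrable (by norm_num)) s t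

lemma intv2 (h : Arc u v) (s t : ℝ) : IntervalIntegrable (fun t => (v t).2) volume s t :=
  li_ii (h.mem2.locallyIntegrable (by norm_num)) s t

lemma ftc1 (h : Arc u v) (s t : ℝ) : (u t).1 - (u s).1 = ∫ y in s..t, (v y).1 := by
  have := (ContinuousLinearMap.fst ℝ ℝ ℝ).intervalIntegral_comp_comm (h.intv s t)
  simp only [ContinuousLinearMap.coe_fst'] at this
  rw [this, ← h.ftc s t]; rfl

lemma ftc2 (h : Arc u v) (s t : ℝ) : (u t).2 - (u s).2 = ∫ y in s..t, (v y).2 := by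
  have := (ContinuousLinearMap.snd ℝ ℝ ℝ).intervalIntegral_comp_comm (h.intv s t)
  simp only [ContinuousLinearMap.coe_snd'] at this
  rw [this, ← h.ftc s t]; rfl

lemma ae_deriv (h : Arc u v) : ∀ᵐ t, HasDerivAt u (v t) t := by
  filter_upwards [LocallyIntegrable.ae_hasDerivAt_integral h.locInt] with t ht
  have : u = fun t => u 0 + ∫ y in (0:ℝ)..t, v y := by
    funext t; rw [← h.ftc 0 t]; simp
  rw [this]
  exact (ht 0).const_add (u 0)

lemma cont1 (h : Arc u v) : Continuous (fun t => (u t).1) := continuous_fst.comp h.cont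
lemma cont2 (h : Arc u v) : Continuous (fun t => (u t).2) := continuous_snd.comp h.cont

lemma intMul1 (h : Arc u v) {f : ℝ → ℝ} (hf : Continuous f) (s t : ℝ) :
    IntervalIntegrable (fun t => f t * (v t).1) volume s t :=
  (h.intv1 s t).continuousOn_mul hf.continuousOn

lemma intMul2 (h : Arc u v) {f : ℝ → ℝ} (hf : Continuous f) (s t : ℝ) :
    IntervalIntegrable (fun t => f t * (v t).2) volume s t :=
  (h.intv2 s t).continuousOn_mul hf.continuousOn

lemma intArea (h : Arc u v) (s t : ℝ) :
    IntervalIntegrable (fun t => (u t).1 * (v t).2) volume s t := h.intMul2 h.cont1 s t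

lemma intDens (h : Arc u v) {W : ℝ × ℝ → ℝ} (hW : Continuous W) (s t : ℝ) :
    IntervalIntegrable (dens W u v) volume s t := by
  unfold dens
  refine IntervalIntegrable.add ?_ ((hW.comp h.cont).intervalIntegrable s t)
  exact ((h.sq1.add h.sq2).const_mul (1/2)).intervalIntegrable

lemma norm_sub_le (h : Arc u v) {s t : ℝ} (hst : s ≤ t) :
    ‖u t - u s‖ ≤ ∫ y in s..t, ‖v y‖ := by
  rw [h.ftc]
  exact intervalIntegral.norm_integral_le_integral_norm hst

lemma shift (h : Arc u v) (τ : ℝ) : Arc (fun t => u (t + τ)) (fun t => v (t + τ)) where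
  mem := h.mem.comp_measurePreserving (measurePreserving_add_right volume τ)
  ftc s t := by rw [h.ftc]; simp

lemma add (h : Arc u v) {φ : ℝ → ℝ × ℝ} (hφ : ContDiff ℝ 1 φ) (hc : HasCompactSupport φ) (s : ℝ) :
    Arc (fun t => u t + s • φ t) (fun t => v t + s • deriv φ t) where
  mem := by
    have h1 : MemLp (deriv φ) 2 volume :=
      (hφ.continuous_deriv le_rfl).memLp_of_hasCompactSupport hc.deriv
    exact h.mem.add (h1.const_smul s)
  ftc a b := by
    have hi : IntervalIntegrable (deriv φ) volume a b :=
      (hφ.continuous_deriv le_rfl).intervalIntegrable a b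
    have hi2 : IntervalIntegrable (fun t => s • deriv φ t) volume a b := hi.smul s
    rw [intervalIntegral.integral_add (h.intv a b) hi2, ← h.ftc,
      intervalIntegral.integral_smul, intervalIntegral.integral_deriv_eq_sub
        (fun x _ => (hφ.differentiable one_ne_zero).differentiableAt) hi]
    module

end Arc

lemma normsq_le (z : ℝ × ℝ) : ‖z‖ ^ 2 ≤ z.1 ^ 2 + z.2 ^ 2 := by
  rw [Prod.norm_def, Real.norm_eq_abs, Real.norm_eq_abs]
  rcases max_cases |z.1| |z.2| with h | h <;> rw [h.1, sq_abs] <;> nlinarith [sq_nonneg z.1, sq_nonneg z.2]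

lemma dens_nonneg {W : ℝ × ℝ → ℝ} (hW : ∀ p, 0 ≤ W p) (u v : ℝ → ℝ × ℝ) (t : ℝ) :
    0 ≤ dens W u v t := by
  unfold dens; have := hW (u t); positivity

namespace Adm
variable {W : ℝ × ℝ → ℝ} {pm pp : ℝ × ℝ} {u v : ℝ → ℝ × ℝ}

lemma intDensAll (h : Adm W pm pp u v) : Integrable (dens W u v) :=
  ((h.sq1.add h.sq2).const_mul (1/2)).add h.iW

lemma shift (h : Adm W pm pp u v) (τ : ℝ) :
    Adm W pm pp (fun t => u (t + τ)) (fun t => v (t + τ)) where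
  toArc := h.toArc.shift τ
  iW := h.iW.comp_add_right τ
  lm := h.lm.comp (tendsto_atBot_add_const_right _ _ tendsto_id)
  lp := h.lp.comp (tendsto_atTop_add_const_right _ _ tendsto_id)

lemma En_shift (τ : ℝ) : En W (fun t => u (t + τ)) (fun t => v (t + τ)) = En W u v :=
  integral_add_right_eq_self (dens W u v) τ

lemma en_ge (h : Adm W pm pp u v) (hW : ∀ p, 0 ≤ W p) {s t : ℝ} (hst : s ≤ t) :
    ∫ y in s..t, dens W u v y ≤ En W u v := by
  rw [intervalIntegral.integral_of_le hst]
  exact setIntegral_le_integral h.intDensAll (Eventually.of_forall (dens_nonneg hW u v))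

lemma en_tendsto (h : Adm W pm pp u v) :
    Tendsto (fun S : ℝ => ∫ y in (-S)..S, dens W u v y) atTop (𝓝 (En W u v)) :=
  intervalIntegral_tendsto_integral h.intDensAll tendsto_neg_atTop_atBot tendsto_id

lemma en_nonneg (hW : ∀ p, 0 ≤ W p) : 0 ≤ En W u v :=
  integral_nonneg (dens_nonneg hW u v)

end Adm

lemma HasArea.shift {u v : ℝ → ℝ × ℝ} {A : ℝ} (h : HasArea u v A) (τ : ℝ) :
    HasArea (fun t => u (t + τ)) (fun t => v (t + τ)) A := by
  unfold HasArea at *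
  have h2 : Tendsto (fun st : ℝ × ℝ => (st.1 + τ, st.2 + τ)) (atBot ×ˢ atTop) (atBot ×ˢ atTop) :=
    (tendsto_atBot_add_const_right _ _ tendsto_id).prodMap
      (tendsto_atTop_add_const_right _ _ tendsto_id)
  refine (h.comp h2).congr (fun st => ?_)
  exact (intervalIntegral.integral_comp_add_right (fun t => (u t).1 * (v t).2) τ).symm

end TW

namespace TW

lemma esq_le (z : ℝ × ℝ) : z.1 ^ 2 + z.2 ^ 2 ≤ 2 * ‖z‖ ^ 2 := by
  have h1 : |z.1| ≤ ‖z‖ := norm_fst_le z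
  have h2 : |z.2| ≤ ‖z‖ := norm_snd_le z
  have h3 : z.1 ^ 2 ≤ ‖z‖ ^ 2 := by rw [← sq_abs z.1]; gcongr
  have h4 : z.2 ^ 2 ≤ ‖z‖ ^ 2 := by rw [← sq_abs z.2]; gcongr
  linarith

/-- a nondegenerate zero minimum -/
lemma well_aux (W : ℝ × ℝ → ℝ) (hs : ContDiff ℝ (⊤ : ℕ∞) W) (h0 : ∀ p, 0 ≤ W p) (p : ℝ × ℝ)
    (hp : W p = 0) (hh : ∀ v : ℝ × ℝ, v ≠ 0 → 0 < iteratedFDeriv ℝ 2 W p ![v, v]) :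
    ∃ R > 0, ∃ κ > 0, ∀ x, ‖x - p‖ ≤ R →
      κ * ((x - p).1 ^ 2 + (x - p).2 ^ 2) ≤ W x ∧
      κ * ((x - p).1 ^ 2 + (x - p).2 ^ 2) ≤ fderiv ℝ W x (x - p) := by
  have hd : Differentiable ℝ W := hs.differentiable (by simp)
  have hcd : ContDiff ℝ 1 (fderiv ℝ W) := hs.fderiv_right (by norm_cast)
  have hd1 : Differentiable ℝ (fderiv ℝ W) := hcd.differentiable (by simp)
  have hz : fderiv ℝ W p = 0 := by
    have : IsLocalMin W p := Eventually.of_forall (fun x => by rw [hp]; exact h0 x)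
    exact this.fderiv_eq_zero
  set D := fderiv ℝ (fderiv ℝ W) p with hD
  have hpos : ∀ v : ℝ × ℝ, v ≠ 0 → 0 < D v v := by
    intro v hv
    have := hh v hv
    rw [iteratedFDeriv_two_apply] at this
    simpa using this
  obtain ⟨lam, hlam, hl⟩ : ∃ lam > 0, ∀ z : ℝ × ℝ, lam * ‖z‖ ^ 2 ≤ D z z := by
    have hc : IsCompact (Metric.sphere (0 : ℝ × ℝ) 1) := isCompact_sphere 0 1
    have hne : (Metric.sphere (0 : ℝ × ℝ) 1).Nonempty := ⟨(1, 0), by simp [Prod.norm_def]⟩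
    obtain ⟨z0, hz0, hmin⟩ := hc.exists_isMinOn hne
      (f := fun z => D z z) (by fun_prop)
    have hz0' : ‖z0‖ = 1 := by simpa using hz0
    refine ⟨D z0 z0, hpos z0 (by rintro rfl; simp at hz0'), fun z => ?_⟩
    by_cases hz : z = 0
    · simp [hz]
    have hn : ‖z‖ ≠ 0 := by simpa using hz
    have h1 : D z0 z0 ≤ D (‖z‖⁻¹ • z) (‖z‖⁻¹ • z) :=
      hmin (by simp [norm_smul, hn])
    simp only [map_smul, smul_apply, smul_eq_mul] at h1
    have h2 : D z z = ‖z‖ ^ 2 * (‖z‖⁻¹ * (‖z‖⁻¹ * D z z)) := by field_simp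
    rw [h2, mul_comm]
    gcongr
  have hlo := (hd1 p).hasFDerivAt.isLittleO
  have := hlo.def (c := lam / 2) (by positivity)
  rw [Metric.eventually_nhds_iff] at this
  obtain ⟨ε, hε, hball⟩ := this
  have key : ∀ z : ℝ × ℝ, ‖z‖ < ε → lam / 2 * ‖z‖ ^ 2 ≤ fderiv ℝ W (p + z) z := by
    intro z hzε
    have h1 := hball (y := p + z) (by simpa [dist_eq_norm] using hzε)
    rw [hz] at h1
    simp only [sub_zero, add_sub_cancel_left] at h1
    have h2 : |(fderiv ℝ W (p + z) - D z) z| ≤ lam / 2 * ‖z‖ * ‖z‖ :=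
      ((fderiv ℝ W (p + z) - D z).le_opNorm z).trans (by gcongr)
    have h3 := (abs_le.1 h2).1
    have h4 := hl z
    simp only [ContinuousLinearMap.sub_apply] at h3
    nlinarith
  refine ⟨ε / 2, by positivity, lam / 8, by positivity, fun x hx => ?_⟩
  set z := x - p with hzdef
  have hxz : x = p + z := by simp [hzdef]
  have hzε : ‖z‖ < ε := by linarith
  have hE := esq_le z
  have hk := key z hzε
  constructor
  · have hmono : MonotoneOn (fun t : ℝ => W (p + t • z) - lam / 4 * ‖z‖ ^ 2 * t ^ 2) (Icc 0 1) := by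
      have hder : ∀ t : ℝ, HasDerivAt (fun t : ℝ => W (p + t • z) - lam / 4 * ‖z‖ ^ 2 * t ^ 2)
          (fderiv ℝ W (p + t • z) z - lam / 4 * ‖z‖ ^ 2 * (2 * t)) t := by
        intro t
        have e1 : HasDerivAt (fun t : ℝ => p + t • z) z t := by
          simpa using ((hasDerivAt_id t).smul_const z).const_add p
        have e2 := (hd (p + t • z)).hasFDerivAt.comp_hasDerivAt t e1
        have e3 : HasDerivAt (fun t : ℝ => t ^ 2) (2 * t) t := by simpa using hasDerivAt_pow 2 t
        exact e2.sub (e3.const_mul _)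
      refine monotoneOn_of_deriv_nonneg (convex_Icc 0 1)
        (fun t _ => (hder t).continuousAt.continuousWithinAt)
        (fun t _ => (hder t).differentiableAt.differentiableWithinAt) ?_
      intro t ht
      rw [interior_Icc] at ht
      rw [(hder t).deriv]
      have h5 := key (t • z) (by
        rw [norm_smul, Real.norm_of_nonneg ht.1.le]; nlinarith [norm_nonneg z, ht.1, ht.2])
      rw [norm_smul, Real.norm_of_nonneg ht.1.le, map_smul, smul_eq_mul] at h5
      have h6 : t * (fderiv ℝ W (p + t • z) z - lam / 4 * ‖z‖ ^ 2 * (2 * t)) ≥ 0 := by nlinarith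
      exact nonneg_of_mul_nonneg_right h6 ht.1
    have := hmono (left_mem_Icc.2 zero_le_one) (right_mem_Icc.2 zero_le_one) zero_le_one
    simp only [zero_smul, add_zero, hp, one_smul] at this
    rw [hxz]
    nlinarith
  · rw [hxz]; nlinarith

lemma wells {W : ℝ × ℝ → ℝ} {pm pp : ℝ × ℝ} (hW : TwoWell W pm pp) :
    ∃ R > 0, ∃ κ > 0, ∀ p, p = pm ∨ p = pp → ∀ x, ‖x - p‖ ≤ R →
      κ * ((x - p).1 ^ 2 + (x - p).2 ^ 2) ≤ W x ∧
      κ * ((x - p).1 ^ 2 + (x - p).2 ^ 2) ≤ fderiv ℝ W x (x - p) := by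
  obtain ⟨R1, hR1, k1, hk1, H1⟩ := well_aux W hW.smooth hW.nonneg pm
    ((hW.zeroSet pm).2 (Or.inl rfl)) hW.hess_m
  obtain ⟨R2, hR2, k2, hk2, H2⟩ := well_aux W hW.smooth hW.nonneg pp
    ((hW.zeroSet pp).2 (Or.inr rfl)) hW.hess_p
  refine ⟨min R1 R2, lt_min hR1 hR2, min k1 k2, lt_min hk1 hk2, ?_⟩
  rintro p hp x hx
  have hs : 0 ≤ (x - p).1 ^ 2 + (x - p).2 ^ 2 := by positivity
  rcases hp with rfl | rfl
  · have := H1 x (hx.trans (min_le_left _ _))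
    have h3 := mul_le_mul_of_nonneg_right (min_le_left k1 k2) hs
    exact ⟨h3.trans this.1, h3.trans this.2⟩
  · have := H2 x (hx.trans (min_le_right _ _))
    have h3 := mul_le_mul_of_nonneg_right (min_le_right k1 k2) hs
    exact ⟨h3.trans this.1, h3.trans this.2⟩

lemma away {W : ℝ × ℝ → ℝ} {pm pp : ℝ × ℝ} (hW : TwoWell W pm pp) {r : ℝ} (hr : 0 < r) :
    ∃ c > 0, ∀ x, r ≤ ‖x - pm‖ → r ≤ ‖x - pp‖ → c ≤ W x := by
  obtain ⟨c, hc, R, hR⟩ := hW.coercive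
  have hcont : Continuous W := hW.smooth.continuous
  set S := Metric.closedBall (0 : ℝ × ℝ) R ∩ {x | r ≤ ‖x - pm‖ ∧ r ≤ ‖x - pp‖} with hS
  have hcomp : IsCompact S := by
    refine (isCompact_closedBall 0 R).inter_right ?_
    have e1 : IsClosed {x : ℝ × ℝ | r ≤ ‖x - pm‖} := isClosed_le (by fun_prop) (by fun_prop)
    have e2 : IsClosed {x : ℝ × ℝ | r ≤ ‖x - pp‖} := isClosed_le (by fun_prop) (by fun_prop)
    exact e1.inter e2
  by_cases hne : S.Nonempty
  · obtain ⟨x0, hx0, hmin⟩ := hcomp.exists_isMinOn hne hcont.continuousOn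
    have hpos : 0 < W x0 := by
      rcases (hW.nonneg x0).lt_or_eq with h | h
      · exact h
      · rcases (hW.zeroSet x0).1 h.symm with rfl | rfl
        · have := hx0.2.1; simp at this; linarith
        · have := hx0.2.2; simp at this; linarith
    refine ⟨min c (W x0), lt_min hc hpos, fun x h1 h2 => ?_⟩
    by_cases hx : R ≤ ‖x‖
    · exact (min_le_left _ _).trans (hR x hx)
    · exact (min_le_right _ _).trans (hmin ⟨by simpa using (not_le.1 hx).le, h1, h2⟩)
  · refine ⟨c, hc, fun x h1 h2 => ?_⟩
    by_cases hx : R ≤ ‖x‖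
    · exact hR x hx
    · exact absurd ⟨x, by simpa using (not_le.1 hx).le, h1, h2⟩ hne

lemma quad {W : ℝ × ℝ → ℝ} (hs : ContDiff ℝ (⊤ : ℕ∞) W) (K : ℝ) :
    ∃ C ≥ 0, ∀ x z : ℝ × ℝ, ‖x‖ ≤ K → ‖z‖ ≤ 1 →
      W (x + z) ≤ W x + fderiv ℝ W x z + C * ‖z‖ ^ 2 := by
  have hd : Differentiable ℝ W := hs.differentiable (by simp)
  have hcd : ContDiff ℝ 1 (fderiv ℝ W) := hs.fderiv_right (by norm_cast)
  have hcl : LocallyLipschitz (fderiv ℝ W) := hcd.locallyLipschitz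
  obtain ⟨L, hL⟩ := hcl.locallyLipschitzOn.exists_lipschitzOnWith_of_compact
    (isCompact_closedBall (0 : ℝ × ℝ) (K + 1))
  refine ⟨L, L.2, fun x z hx hz => ?_⟩
  have hseg : ∀ y ∈ segment ℝ x (x + z), ‖y - x‖ ≤ ‖z‖ := by
    rintro y hy
    have := norm_sub_le_of_mem_segment hy
    simpa using this
  have hb : ∀ y ∈ segment ℝ x (x + z), ‖fderiv ℝ W y - fderiv ℝ W x‖ ≤ L * ‖z‖ := by
    intro y hy
    have h1 := hseg y hy
    have h2 := hL.dist_le_mul y (by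
      rw [mem_closedBall_zero_iff]
      have := norm_le_norm_add_norm_sub x y
      linarith [norm_sub_rev x y]) x (by rw [mem_closedBall_zero_iff]; linarith)
    rw [dist_eq_norm, dist_eq_norm] at h2
    exact h2.trans (by gcongr)
  have := (convex_segment x (x + z)).norm_image_sub_le_of_norm_hasFDerivWithin_le'
    (fun y _ => (hd y).hasFDerivAt.hasFDerivWithinAt) hb (left_mem_segment ℝ x (x + z))
    (right_mem_segment ℝ x (x + z))
  rw [add_sub_cancel_left] at this
  have := (abs_le.1 this).2
  nlinarith

end TW

namespace TW

lemma crossing {f : ℝ → ℝ} (hf : Continuous f) {s t a b : ℝ} (hst : s ≤ t)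
    (ha : f s ≤ a) (hb : b ≤ f t) :
    ∃ s' t', s ≤ s' ∧ s' ≤ t' ∧ t' ≤ t ∧ f s' ≤ a ∧ b ≤ f t' ∧
      ∀ τ ∈ Ioo s' t', a ≤ f τ ∧ f τ ≤ b := by
  have c1 : IsCompact (Icc s t ∩ {τ | f τ ≤ a}) :=
    isCompact_Icc.inter_right (isClosed_le hf continuous_const)
  obtain ⟨s', hs', hs'max⟩ := c1.exists_isGreatest ⟨s, left_mem_Icc.2 hst, ha⟩
  have c2 : IsCompact (Icc s' t ∩ {τ | b ≤ f τ}) :=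
    isCompact_Icc.inter_right (isClosed_le continuous_const hf)
  obtain ⟨t', ht', ht'min⟩ := c2.exists_isLeast ⟨t, right_mem_Icc.2 hs'.1.2, hb⟩
  refine ⟨s', t', hs'.1.1, ht'.1.1, ht'.1.2, hs'.2, ht'.2, fun τ hτ => ⟨?_, ?_⟩⟩
  · by_contra h
    push Not at h
    have := hs'max ⟨⟨hs'.1.1.trans hτ.1.le, hτ.2.le.trans ht'.1.2⟩, h.le⟩
    linarith [hτ.1]
  · by_contra h
    push Not at h
    have := ht'min ⟨⟨hτ.1.le, hτ.2.le.trans ht'.1.2⟩, h.le⟩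
    linarith [hτ.2]

lemma dens_ge_norm {W : ℝ × ℝ → ℝ} {u v : ℝ → ℝ × ℝ} {t c : ℝ} (h : c ^ 2 / 2 ≤ W (u t)) :
    c * ‖v t‖ ≤ dens W u v t := by
  unfold dens
  nlinarith [normsq_le (v t), sq_nonneg (‖v t‖ - c)]

lemma intDens_mono {W : ℝ × ℝ → ℝ} (hWc : Continuous W) (hW : ∀ p, 0 ≤ W p) {u v : ℝ → ℝ × ℝ}
    (h : Arc u v) {s s' t' t : ℝ} (h1 : s ≤ s') (h2 : s' ≤ t') (h3 : t' ≤ t) :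
    ∫ y in s'..t', dens W u v y ≤ ∫ y in s..t, dens W u v y :=
  intervalIntegral.integral_mono_interval h1 h2 h3
    (Eventually.of_forall (dens_nonneg hW u v)) (h.intDens hWc s t)

lemma intDens_nonneg {W : ℝ × ℝ → ℝ} (hW : ∀ p, 0 ≤ W p) (u v : ℝ → ℝ × ℝ) {s t : ℝ}
    (hst : s ≤ t) : 0 ≤ ∫ y in s..t, dens W u v y :=
  intervalIntegral.integral_nonneg hst (fun y _ => dens_nonneg hW u v y)

/-- crossing an annulus costs energy -/
lemma annulus {W : ℝ × ℝ → ℝ} (hWc : Continuous W) (hW : ∀ p, 0 ≤ W p) {u v : ℝ → ℝ × ℝ}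
    (h : Arc u v) {p : ℝ × ℝ} {a b c s t : ℝ} (hc : 0 ≤ c) (hst : s ≤ t)
    (hann : ∀ x : ℝ × ℝ, a ≤ ‖x - p‖ → ‖x - p‖ ≤ b → c ^ 2 / 2 ≤ W x)
    (hu : (‖u s - p‖ ≤ a ∧ b ≤ ‖u t - p‖) ∨ (‖u t - p‖ ≤ a ∧ b ≤ ‖u s - p‖)) :
    c * (b - a) ≤ ∫ y in s..t, dens W u v y := by
  have hf : Continuous (fun τ => ‖u τ - p‖) := (h.cont.sub continuous_const).norm
  obtain ⟨s', t', h1, h2, h3, h4, h5⟩ : ∃ s' t', s ≤ s' ∧ s' ≤ t' ∧ t' ≤ t ∧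
      b - a ≤ ‖u t' - u s'‖ ∧ ∀ τ ∈ Ioo s' t', a ≤ ‖u τ - p‖ ∧ ‖u τ - p‖ ≤ b := by
    rcases hu with ⟨ha, hb⟩ | ⟨ha, hb⟩
    · obtain ⟨s', t', h1, h2, h3, h4, h5, h6⟩ := crossing hf hst ha hb
      refine ⟨s', t', h1, h2, h3, ?_, h6⟩
      have := norm_sub_norm_le (u t' - p) (u s' - p)
      rw [sub_sub_sub_cancel_right] at this
      linarith
    · obtain ⟨s', t', h1, h2, h3, h4, h5, h6⟩ := crossing hf.neg hst
        (neg_le_neg hb) (neg_le_neg ha)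
      refine ⟨s', t', h1, h2, h3, ?_, fun τ hτ => ⟨neg_le_neg_iff.1 (h6 τ hτ).2,
        neg_le_neg_iff.1 (h6 τ hτ).1⟩⟩
      have := norm_sub_norm_le (u s' - p) (u t' - p)
      rw [sub_sub_sub_cancel_right, norm_sub_rev (u s') (u t')] at this
      have h4' : b ≤ ‖u s' - p‖ := neg_le_neg_iff.1 h4
      have h5' : ‖u t' - p‖ ≤ a := neg_le_neg_iff.1 h5
      linarith
  calc c * (b - a) ≤ c * ‖u t' - u s'‖ := by gcongr
    _ ≤ c * ∫ y in s'..t', ‖v y‖ := by gcongr; exact h.norm_sub_le h2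
    _ = ∫ y in s'..t', c * ‖v y‖ := by rw [intervalIntegral.integral_const_mul]
    _ ≤ ∫ y in s'..t', dens W u v y := by
        refine intervalIntegral.integral_mono_on_of_le_Ioo h2 ((h.intv s' t').norm.const_mul c)
          (h.intDens hWc s' t') (fun y hy => ?_)
        exact dens_ge_norm (hann _ (h5 y hy).1 (h5 y hy).2)
    _ ≤ _ := intDens_mono hWc hW h h1 h2 h3

/-! Lower bound by the degenerate length -/

/-- truncation -/
def tr (k : ℝ) (z : ℝ × ℝ) : ℝ × ℝ := (max (-k) (min k z.1), max (-k) (min k z.2))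

lemma tr_cont (k : ℝ) : Continuous (tr k) := by unfold tr; fun_prop

lemma clamp_abs {k : ℝ} (hk : 0 ≤ k) (x : ℝ) :
    |max (-k) (min k x)| ≤ k ∧ |max (-k) (min k x)| ≤ |x| := by
  constructor
  · rw [abs_le]; constructor
    · exact le_max_left _ _
    · exact max_le (by linarith) (min_le_left _ _)
  · rw [abs_le]; constructor
    · rcases le_total k x with h | h
      · rw [min_eq_left h]; exact le_max_of_le_right (by linarith [abs_nonneg x])
      · rw [min_eq_right h]; exact le_max_of_le_right (neg_abs_le x)
    · rcases le_total (-k) x with h | h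
      · exact max_le_iff.2 ⟨by linarith [abs_nonneg x], (min_le_right _ _).trans (le_abs_self x)⟩
      · exact max_le_iff.2 ⟨by linarith [abs_nonneg x], (min_le_right _ _).trans (le_abs_self x)⟩

lemma tr_norm {k : ℝ} (hk : 0 ≤ k) (z : ℝ × ℝ) : ‖tr k z‖ ≤ k ∧ ‖tr k z‖ ≤ ‖z‖ ∧
    enorm2 (tr k z) ≤ enorm2 z := by
  obtain ⟨a1, a2⟩ := clamp_abs hk z.1
  obtain ⟨b1, b2⟩ := clamp_abs hk z.2
  refine ⟨?_, ?_, ?_⟩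
  · exact max_le a1 b1
  · exact max_le_max a2 b2
  · unfold enorm2 tr
    apply Real.sqrt_le_sqrt
    have := sq_le_sq.2 a2
    have := sq_le_sq.2 b2
    linarith

lemma tr_eq {k : ℝ} {z : ℝ × ℝ} (h : ‖z‖ ≤ k) : tr k z = z := by
  have h1 := abs_le.1 ((norm_fst_le z).trans h)
  have h2 := abs_le.1 ((norm_snd_le z).trans h)
  unfold tr
  rw [min_eq_right h1.2, min_eq_right h2.2, max_eq_right h1.1, max_eq_right h2.1]

lemma enorm2_le (z : ℝ × ℝ) : enorm2 z ≤ 2 * ‖z‖ := by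
  unfold enorm2
  rw [Real.sqrt_le_left (by positivity)]
  nlinarith [esq_le z, sq_nonneg ‖z‖]

lemma enorm2_nonneg (z : ℝ × ℝ) : 0 ≤ enorm2 z := Real.sqrt_nonneg _

lemma enorm2_cont : Continuous enorm2 := by unfold enorm2; fun_prop

lemma norm_le_enorm2 (z : ℝ × ℝ) : ‖z‖ ≤ enorm2 z := by
  unfold enorm2
  exact Real.le_sqrt_of_sq_le (normsq_le z)

lemma enorm2_sq (z : ℝ × ℝ) : enorm2 z ^ 2 = z.1 ^ 2 + z.2 ^ 2 :=
  Real.sq_sqrt (by positivity)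

/-- curves with bounded velocity -/
lemma curve_of_vel {w : ℝ → ℝ × ℝ} (hm : AEStronglyMeasurable w volume) {M : ℝ}
    (hM : ∀ t, ‖w t‖ ≤ M) (p : ℝ × ℝ) (a : ℝ) :
    LocallyLipschitz (fun t => p + ∫ y in a..t, w y) ∧
    (∀ᵐ t, HasDerivAt (fun t => p + ∫ y in a..t, w y) (w t) t) ∧
    LocallyIntegrable w volume := by
  have hli : LocallyIntegrable w volume := by
    refine (locallyIntegrable_const (M : ℝ)).mono hm (Eventually.of_forall fun t => ?_)
    exact (hM t).trans (le_abs_self M)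
  refine ⟨?_, ?_, hli⟩
  · have hM0 : 0 ≤ M := (norm_nonneg _).trans (hM 0)
    have : LipschitzWith ⟨M, hM0⟩ (fun t => p + ∫ y in a..t, w y) := by
      refine LipschitzWith.of_dist_le_mul fun x y => ?_
      rw [dist_add_left, dist_eq_norm,
        intervalIntegral.integral_interval_sub_left (li_ii hli _ _) (li_ii hli _ _)]
      have := intervalIntegral.norm_integral_le_of_norm_le_const (a := y) (b := x)
        (fun t _ => hM t)
      rw [Real.dist_eq]
      exact this
    exact this.locallyLipschitz
  · filter_upwards [LocallyIntegrable.ae_hasDerivAt_integral hli] with t ht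
    exact (ht a).const_add p

lemma degLen_of_vel {w : ℝ → ℝ × ℝ} {γ : ℝ → ℝ × ℝ} (h : ∀ᵐ t, HasDerivAt γ (w t) t)
    (F : ℝ × ℝ → ℝ) (a b : ℝ) :
    degLen F a b γ = ∫ t in a..b, F (γ t) * enorm2 (w t) := by
  unfold degLen
  refine intervalIntegral.integral_congr_ae ?_
  filter_upwards [h] with t ht _
  rw [ht.deriv]

lemma bdd_ball {F : ℝ × ℝ → ℝ} (hF : Continuous F) (K : ℝ) :
    ∃ M ≥ 0, ∀ x, ‖x‖ ≤ K → |F x| ≤ M := by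
  obtain ⟨M, hM⟩ := (isCompact_closedBall (0 : ℝ × ℝ) K).exists_bound_of_continuousOn
    hF.continuousOn
  refine ⟨max M 0, le_max_right _ _, fun x hx => ?_⟩
  exact (hM x (by simpa using hx)).trans (le_max_left _ _)

end TW

namespace TW

/-- closing up an arc with bounded velocity by segments -/
lemma close_up {F : ℝ × ℝ → ℝ} (hFc : Continuous F) {pm pp : ℝ × ℝ} {e : ℝ}
    (hmin : ∀ a b γ, IsCurve a b γ pm pp → e ≤ degLen F a b γ)
    {M1 : ℝ} (hM1 : ∀ x, ‖x - pm‖ ≤ 2 ∨ ‖x - pp‖ ≤ 2 → |F x| ≤ M1)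
    {w : ℝ → ℝ × ℝ} (hm : AEStronglyMeasurable w volume) {M : ℝ} (hM : ∀ t, ‖w t‖ ≤ M)
    {q : ℝ × ℝ} {s t ρ : ℝ} (hst : s ≤ t) (hρ : ρ ≤ 1) (hq : ‖q - pm‖ ≤ ρ)
    (hq' : ‖(q + ∫ y in s..t, w y) - pp‖ ≤ 2 * ρ) :
    e ≤ (∫ τ in s..t, F (q + ∫ y in s..τ, w y) * enorm2 (w τ)) + 6 * M1 * ρ := by
  have hρ0 : 0 ≤ ρ := (norm_nonneg _).trans hq
  have hM10 : 0 ≤ M1 := (abs_nonneg _).trans (hM1 pm (by simp))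
  have hli : LocallyIntegrable w volume := (curve_of_vel hm hM 0 0).2.2
  set q' := q + ∫ y in s..t, w y with hq'def
  set z : ℝ → ℝ × ℝ := fun τ => if τ ≤ s then q - pm else if τ ≤ t then w τ else pp - q' with hz
  have hzm : AEStronglyMeasurable z volume := by
    refine AEStronglyMeasurable.piecewise (s := {τ | τ ≤ s}) measurableSet_Iic
      aestronglyMeasurable_const ?_
    exact AEStronglyMeasurable.piecewise (s := {τ | τ ≤ t}) measurableSet_Iic
      hm.restrict aestronglyMeasurable_const |>.restrict
  have hzM : ∀ τ, ‖z τ‖ ≤ max M 2 := by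
    intro τ
    simp only [hz]
    split_ifs
    · exact le_max_of_le_right (by linarith)
    · exact le_max_of_le_left (hM τ)
    · exact le_max_of_le_right (by rw [norm_sub_rev]; linarith)
  obtain ⟨hlip, hder, hzli⟩ := curve_of_vel hzm hzM pm (s - 1)
  set γ : ℝ → ℝ × ℝ := fun τ => pm + ∫ y in (s - 1)..τ, z y with hγ
  have g1 : ∀ τ, s - 1 ≤ τ → τ ≤ s → γ τ = pm + (τ - (s - 1)) • (q - pm) := by
    intro τ h1 h2
    simp only [hγ]
    congr 1
    rw [intervalIntegral.integral_congr (g := fun _ => q - pm)]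
    · simp only [intervalIntegral.integral_const]
    · intro y hy
      rw [uIcc_of_le h1] at hy
      simp [hz, hy.2.trans h2]
  have g2 : ∀ τ, s ≤ τ → τ ≤ t → γ τ = q + ∫ y in s..τ, w y := by
    intro τ h1 h2
    have h3 := g1 s (by linarith) le_rfl
    have h4 : γ τ = γ s + ∫ y in s..τ, z y := by
      simp only [hγ]
      rw [add_assoc, intervalIntegral.integral_add_adjacent_intervals (li_ii hzli _ _)
        (li_ii hzli _ _)]
    rw [h4, h3]
    congr 1
    · simp
    · rw [intervalIntegral.integral_of_le h1, intervalIntegral.integral_of_le h1]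
      refine setIntegral_congr_fun measurableSet_Ioc fun y hy => ?_
      simp [hz, not_le.2 hy.1, hy.2.trans h2]
  have g3 : ∀ τ, t ≤ τ → γ τ = q' + (τ - t) • (pp - q') := by
    intro τ h1
    have h3 := g2 t hst le_rfl
    have h4 : γ τ = γ t + ∫ y in t..τ, z y := by
      simp only [hγ]
      rw [add_assoc, intervalIntegral.integral_add_adjacent_intervals (li_ii hzli _ _)
        (li_ii hzli _ _)]
    rw [h4, h3]
    congr 1
    have h5 : ∫ y in t..τ, z y = ∫ y in t..τ, pp - q' := by
      rw [intervalIntegral.integral_of_le h1, intervalIntegral.integral_of_le h1]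
      refine setIntegral_congr_fun measurableSet_Ioc fun y hy => ?_
      simp [hz, not_le.2 hy.1, not_le.2 (hst.trans_lt hy.1)]
    rw [h5, intervalIntegral.integral_const]
  have hcurve : IsCurve (s - 1) (t + 1) γ pm pp := by
    refine ⟨by linarith, hlip, ?_, ?_⟩
    · simp [hγ]
    · rw [g3 (t + 1) (by linarith)]; simp
  have hle := hmin _ _ γ hcurve
  rw [degLen_of_vel hder] at hle
  have hγc : Continuous γ := hlip.continuous
  have hItg : ∀ a b, IntervalIntegrable (fun τ => F (γ τ) * enorm2 (z τ)) volume a b := by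
    intro a b
    refine IntervalIntegrable.continuousOn_mul ?_ (hFc.comp hγc).continuousOn
    refine ((li_ii hzli a b).norm.const_mul 2).mono_fun
      (enorm2_cont.comp_aestronglyMeasurable hzm).restrict (Eventually.of_forall fun τ => ?_)
    beta_reduce
    rw [Real.norm_of_nonneg (enorm2_nonneg _), Real.norm_of_nonneg (by positivity)]
    exact enorm2_le _
  rw [← intervalIntegral.integral_add_adjacent_intervals (hItg (s - 1) s) (hItg s (t + 1)),
    ← intervalIntegral.integral_add_adjacent_intervals (hItg s t) (hItg t (t + 1))] at hle
  have b1 : ∫ τ in (s - 1)..s, F (γ τ) * enorm2 (z τ) ≤ M1 * (2 * ρ) := by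
    have : ∫ τ in (s - 1)..s, F (γ τ) * enorm2 (z τ) ≤ ∫ τ in (s - 1)..s, M1 * (2 * ρ) := by
      refine intervalIntegral.integral_mono_on (by linarith) (hItg _ _) (by simp) fun τ hτ => ?_
      have h1 : ‖γ τ - pm‖ ≤ 2 := by
        rw [g1 τ hτ.1 hτ.2, add_sub_cancel_left, norm_smul, Real.norm_of_nonneg (by linarith [hτ.1])]
        have : τ - (s - 1) ≤ 1 := by linarith [hτ.2]
        nlinarith [norm_nonneg (q - pm)]
      have h2 := (le_abs_self _).trans (hM1 _ (Or.inl h1))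
      have h3 : enorm2 (z τ) ≤ 2 * ρ := by
        simp only [hz, hτ.2, if_true]
        exact (enorm2_le _).trans (by linarith)
      exact mul_le_mul h2 h3 (enorm2_nonneg _) hM10
    simpa using this
  have b3 : ∫ τ in t..(t + 1), F (γ τ) * enorm2 (z τ) ≤ M1 * (4 * ρ) := by
    have : ∫ τ in t..(t + 1), F (γ τ) * enorm2 (z τ) ≤ ∫ τ in t..(t + 1), M1 * (4 * ρ) := by
      refine intervalIntegral.integral_mono_on_of_le_Ioo (by linarith) (hItg _ _) (by simp)
        fun τ hτ => ?_
      have h1 : ‖γ τ - pp‖ ≤ 2 := by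
        rw [g3 τ hτ.1.le]
        have : q' + (τ - t) • (pp - q') - pp = (1 - (τ - t)) • (q' - pp) := by module
        rw [this, norm_smul, Real.norm_of_nonneg (by linarith [hτ.2])]
        nlinarith [norm_nonneg (q' - pp), hτ.1]
      have h2 := (le_abs_self _).trans (hM1 _ (Or.inr h1))
      have h3 : enorm2 (z τ) ≤ 4 * ρ := by
        have : z τ = pp - q' := by simp [hz, not_le.2 hτ.1, not_le.2 (hst.trans_lt hτ.1)]
        rw [this]
        refine (enorm2_le _).trans ?_
        rw [norm_sub_rev]; linarith
      exact mul_le_mul h2 h3 (enorm2_nonneg _) hM10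
    simpa using this
  have b2 : ∫ τ in s..t, F (γ τ) * enorm2 (z τ)
      = ∫ τ in s..t, F (q + ∫ y in s..τ, w y) * enorm2 (w τ) := by
    rw [intervalIntegral.integral_of_le hst, intervalIntegral.integral_of_le hst]
    refine setIntegral_congr_fun measurableSet_Ioc fun y hy => ?_
    beta_reduce
    rw [g2 y hy.1.le hy.2]
    simp [hz, not_le.2 hy.1, hy.2]
  rw [b2] at hle
  linarith

lemma sqrt_dens {W : ℝ × ℝ → ℝ} (hW : ∀ p, 0 ≤ W p) (u v : ℝ → ℝ × ℝ) (t : ℝ) :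
    Real.sqrt 2 * (Real.sqrt (W (u t)) * enorm2 (v t)) ≤ dens W u v t := by
  unfold dens
  have h1 := Real.sq_sqrt (hW (u t))
  have h2 := enorm2_sq (v t)
  have h3 : Real.sqrt 2 ^ 2 = 2 := Real.sq_sqrt (by norm_num)
  rw [← h2]
  nlinarith [sq_nonneg (enorm2 (v t) - Real.sqrt 2 * Real.sqrt (W (u t)))]

lemma lower {W : ℝ × ℝ → ℝ} (hWc : Continuous W) (hW : ∀ p, 0 ≤ W p) {pm pp : ℝ × ℝ} {e : ℝ}
    (hmin : ∀ a b γ, IsCurve a b γ pm pp → e ≤ degLen (fun p => Real.sqrt (W p)) a b γ) :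
    ∃ C ≥ 0, ∀ ρ, 0 < ρ → ρ ≤ 1 → ∀ u v, Arc u v → ∀ s t, s ≤ t → ‖u s - pm‖ ≤ ρ →
      ‖u t - pp‖ ≤ ρ → Real.sqrt 2 * e ≤ (∫ y in s..t, dens W u v y) + C * ρ := by
  set F : ℝ × ℝ → ℝ := fun p => Real.sqrt (W p) with hF
  have hFc : Continuous F := hWc.sqrt
  obtain ⟨M1, hM1, hM1'⟩ := bdd_ball hFc (max ‖pm‖ ‖pp‖ + 2)
  have hM2 : ∀ x, ‖x - pm‖ ≤ 2 ∨ ‖x - pp‖ ≤ 2 → |F x| ≤ M1 := by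
    intro x hx
    apply hM1'
    rcases hx with h | h
    · have := norm_le_norm_add_norm_sub pm x
      rw [norm_sub_rev] at this
      linarith [le_max_left ‖pm‖ ‖pp‖]
    · have := norm_le_norm_add_norm_sub pp x
      rw [norm_sub_rev] at this
      linarith [le_max_right ‖pm‖ ‖pp‖]
  refine ⟨Real.sqrt 2 * (6 * M1), by positivity, fun ρ hρ hρ1 u v h s t hst hs ht => ?_⟩
  set w : ℕ → ℝ → ℝ × ℝ := fun k τ => tr k (v τ) with hw
  have hwm : ∀ k, AEStronglyMeasurable (w k) volume := fun k =>
    (tr_cont k).comp_aestronglyMeasurable h.mem.1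
  have hwM : ∀ k τ, ‖w k τ‖ ≤ k := fun k τ => (tr_norm k.cast_nonneg _).1
  have hlim : ∀ τ, Tendsto (fun k : ℕ => w k τ) atTop (𝓝 (v τ)) := by
    intro τ
    refine tendsto_const_nhds.congr' ?_
    obtain ⟨N, hN⟩ := exists_nat_ge ‖v τ‖
    filter_upwards [eventually_ge_atTop N] with k hk
    exact (tr_eq (hN.trans (by exact_mod_cast hk))).symm
  have huk : ∀ τ, Tendsto (fun k : ℕ => u s + ∫ y in s..τ, w k y) atTop (𝓝 (u τ)) := by
    intro τ
    have h1 : Tendsto (fun k : ℕ => ∫ y in s..τ, w k y) atTop (𝓝 (∫ y in s..τ, v y)) := by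
      refine intervalIntegral.tendsto_integral_filter_of_dominated_convergence (fun y => ‖v y‖)
        (Eventually.of_forall fun k => (hwm k).restrict) ?_ (h.intv s τ).norm ?_
      · exact Eventually.of_forall fun k => Eventually.of_forall fun y _ =>
          (tr_norm k.cast_nonneg _).2.1
      · exact Eventually.of_forall fun y _ => hlim y
    have h2 := h1.const_add (u s)
    rw [← h.ftc] at h2
    simpa using h2
  have hukn : ∀ k : ℕ, ∀ τ ∈ Icc s t, ‖u s + ∫ y in s..τ, w k y‖ ≤ ‖u s‖ + ∫ y in s..t, ‖v y‖ := by
    intro k τ hτ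
    refine (norm_add_le _ _).trans ?_
    gcongr
    refine (intervalIntegral.norm_integral_le_integral_norm hτ.1).trans ?_
    have hwi : IntervalIntegrable (w k) volume s τ :=
      li_ii (curve_of_vel (hwm k) (hwM k) 0 0).2.2 _ _
    refine (intervalIntegral.integral_mono_on hτ.1 hwi.norm (h.intv s τ).norm
      (fun y _ => (tr_norm k.cast_nonneg _).2.1)).trans ?_
    exact intervalIntegral.integral_mono_interval le_rfl hτ.1 hτ.2
      (Eventually.of_forall fun y => norm_nonneg _) (h.intv s t).norm
  have hwi : ∀ k, LocallyIntegrable (w k) volume := fun k =>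
    (curve_of_vel (hwm k) (hwM k) 0 0).2.2
  obtain ⟨M3, hM3, hM3'⟩ := bdd_ball hFc (‖u s‖ + ∫ y in s..t, ‖v y‖)
  have henv : IntervalIntegrable (fun τ => enorm2 (v τ)) volume s t := by
    refine ((h.intv s t).norm.const_mul 2).mono_fun
      (enorm2_cont.comp_aestronglyMeasurable h.mem.1).restrict (Eventually.of_forall fun τ => ?_)
    beta_reduce
    rw [Real.norm_of_nonneg (enorm2_nonneg _), Real.norm_of_nonneg (by positivity)]
    exact enorm2_le _
  have hukc : ∀ k, Continuous (fun τ => u s + ∫ y in s..τ, w k y) := fun k =>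
    continuous_const.add (intervalIntegral.continuous_primitive (fun a b => li_ii (hwi k) a b) s)
  have hconv : Tendsto (fun k : ℕ => ∫ τ in s..t, F (u s + ∫ y in s..τ, w k y) * enorm2 (w k τ))
      atTop (𝓝 (∫ τ in s..t, F (u τ) * enorm2 (v τ))) := by
    refine intervalIntegral.tendsto_integral_filter_of_dominated_convergence
      (fun τ => M3 * enorm2 (v τ)) (Eventually.of_forall fun k => ?_) ?_ (henv.const_mul M3) ?_
    · exact ((hFc.comp (hukc k)).aestronglyMeasurable.mul
        (enorm2_cont.comp_aestronglyMeasurable (hwm k))).restrict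
    · refine Eventually.of_forall fun k => Eventually.of_forall fun y hy => ?_
      rw [uIoc_of_le hst] at hy
      rw [norm_mul, Real.norm_of_nonneg (enorm2_nonneg _)]
      exact mul_le_mul (hM3' _ (hukn k y ⟨hy.1.le, hy.2⟩)) (tr_norm k.cast_nonneg _).2.2
        (enorm2_nonneg _) hM3
    · exact Eventually.of_forall fun y _ => ((hFc.tendsto _).comp (huk y)).mul
        ((enorm2_cont.tendsto _).comp (hlim y))
  have hev : ∀ᶠ k : ℕ in atTop,
      e ≤ (∫ τ in s..t, F (u s + ∫ y in s..τ, w k y) * enorm2 (w k τ)) + 6 * M1 * ρ := by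
    have h1 : Tendsto (fun k : ℕ => ‖(u s + ∫ y in s..t, w k y) - pp‖) atTop (𝓝 ‖u t - pp‖) :=
      ((huk t).sub_const pp).norm
    filter_upwards [h1.eventually (gt_mem_nhds (show ‖u t - pp‖ < 2 * ρ by linarith))] with k hk
    exact close_up hFc hmin hM2 (hwm k) (hwM k) hst hρ1 hs hk.le
  have hle : e ≤ (∫ τ in s..t, F (u τ) * enorm2 (v τ)) + 6 * M1 * ρ :=
    ge_of_tendsto (hconv.add_const _) hev
  have hle2 : Real.sqrt 2 * ∫ τ in s..t, F (u τ) * enorm2 (v τ) ≤ ∫ y in s..t, dens W u v y := by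
    rw [← intervalIntegral.integral_const_mul]
    refine intervalIntegral.integral_mono_on hst ?_ (h.intDens hWc s t)
      (fun y _ => sqrt_dens hW u v y)
    exact (henv.continuousOn_mul (hFc.comp h.cont).continuousOn).const_mul _
  have := mul_le_mul_of_nonneg_left hle (Real.sqrt_nonneg 2)
  nlinarith

end TW

namespace TW

/-- lower bound package -/
def LB (W : ℝ × ℝ → ℝ) (pm pp : ℝ × ℝ) (e0 C : ℝ) : Prop :=
  0 ≤ C ∧ ∀ ρ, 0 < ρ → ρ ≤ 1 → ∀ u v, Arc u v → ∀ s t, s ≤ t → ‖u s - pm‖ ≤ ρ →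
      ‖u t - pp‖ ≤ ρ → e0 ≤ (∫ y in s..t, dens W u v y) + C * ρ

/-- local well package -/
def WL (W : ℝ × ℝ → ℝ) (pm pp : ℝ × ℝ) (R κ : ℝ) : Prop :=
  0 < R ∧ 0 < κ ∧ ∀ p, p = pm ∨ p = pp → ∀ x, ‖x - p‖ ≤ R →
      κ * ((x - p).1 ^ 2 + (x - p).2 ^ 2) ≤ W x ∧
      κ * ((x - p).1 ^ 2 + (x - p).2 ^ 2) ≤ fderiv ℝ W x (x - p)

variable {W : ℝ × ℝ → ℝ} {pm pp : ℝ × ℝ} {u v : ℝ → ℝ × ℝ} {e0 C R κ : ℝ}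

lemma Adm.near_m (h : Adm W pm pp u v) {r : ℝ} (hr : 0 < r) (τ : ℝ) :
    ∃ s ≤ τ, ‖u s - pm‖ ≤ r := by
  have := (h.lm.eventually (Metric.closedBall_mem_nhds pm hr)).and (eventually_le_atBot τ)
  obtain ⟨s, h1, h2⟩ := this.exists
  exact ⟨s, h2, by simpa [dist_eq_norm] using h1⟩

lemma Adm.near_p (h : Adm W pm pp u v) {r : ℝ} (hr : 0 < r) (τ : ℝ) :
    ∃ s ≥ τ, ‖u s - pp‖ ≤ r := by
  have := (h.lp.eventually (Metric.closedBall_mem_nhds pp hr)).and (eventually_ge_atTop τ)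
  obtain ⟨s, h1, h2⟩ := this.exists
  exact ⟨s, h2, by simpa [dist_eq_norm] using h1⟩

lemma Adm.en_lower (h : Adm W pm pp u v) (hW : ∀ p, 0 ≤ W p) (hL : LB W pm pp e0 C) :
    e0 ≤ En W u v := by
  refine le_of_forall_pos_le_add fun ε hε => ?_
  obtain ⟨hC, hL⟩ := hL
  set ρ := min 1 (ε / (C + 1))
  have hρ : 0 < ρ := lt_min one_pos (by positivity)
  obtain ⟨s, hs, hs'⟩ := h.near_m hρ 0
  obtain ⟨t, ht, ht'⟩ := h.near_p hρ 0
  have h1 := hL ρ hρ (min_le_left _ _) u v h.toArc s t (hs.trans ht) hs' ht'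
  have h2 := h.en_ge hW (hs.trans ht)
  have h3 : C * ρ ≤ ε := by
    have : ρ ≤ ε / (C + 1) := min_le_right _ _
    rw [le_div_iff₀ (by positivity)] at this
    nlinarith
  linarith

lemma confine (hT : TwoWell W pm pp) (hL : LB W pm pp e0 C) (hR : WL W pm pp R κ) :
    ∃ η > 0, ∃ T ≥ 0, ∀ u v, Adm W pm pp u v → En W u v ≤ e0 + η →
      ∃ τ, (∀ t ≤ -T, ‖u (t + τ) - pm‖ ≤ R) ∧ (∀ t ≥ T, ‖u (t + τ) - pp‖ ≤ R) := by
  have hW := hT.nonneg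
  have hWc := hT.smooth.continuous
  obtain ⟨hC, hL⟩ := hL
  obtain ⟨hR0, hκ, hR⟩ := hR
  set c := Real.sqrt (κ / 2) * R with hc
  have hc0 : 0 < c := by positivity
  have hcsq : c ^ 2 / 2 = κ * (R / 2) ^ 2 := by
    rw [hc, mul_pow, Real.sq_sqrt (by positivity)]; ring
  have hann : ∀ p, p = pm ∨ p = pp → ∀ x : ℝ × ℝ, R / 2 ≤ ‖x - p‖ → ‖x - p‖ ≤ R →
      c ^ 2 / 2 ≤ W x := by
    intro p hp x h1 h2
    refine le_trans ?_ (hR p hp x h2).1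
    rw [hcsq]
    refine mul_le_mul_of_nonneg_left ?_ hκ.le
    exact (pow_le_pow_left₀ (by positivity) h1 2).trans (normsq_le _)
  set K := c * (R - R / 2) with hK
  have hK0 : 0 < K := by rw [hK]; apply mul_pos hc0; linarith
  have hd : 0 < ‖pm - pp‖ := norm_pos_iff.2 (sub_ne_zero.2 hT.wells_ne)
  set r := min (min (R / 2) 1) (min (K / (4 * (C + 1))) (‖pm - pp‖ / 3)) with hr
  have hr0 : 0 < r := by
    refine lt_min (lt_min (by positivity) one_pos) (lt_min (by positivity) (by positivity))
  have hr1 : r ≤ R / 2 := (min_le_left _ _).trans (min_le_left _ _)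
  have hr2 : r ≤ 1 := (min_le_left _ _).trans (min_le_right _ _)
  have hr3 : C * r ≤ K / 4 := by
    have : r ≤ K / (4 * (C + 1)) := (min_le_right _ _).trans (min_le_left _ _)
    rw [le_div_iff₀ (by positivity)] at this
    nlinarith
  have hr4 : r ≤ ‖pm - pp‖ / 3 := (min_le_right _ _).trans (min_le_right _ _)
  obtain ⟨cr, hcr, haw⟩ := away hT hr0
  set T := (|e0| + 2) / cr with hTd
  have hTc : T * cr = |e0| + 2 := by rw [hTd]; field_simp
  have hT0 : 0 ≤ T := by positivity
  refine ⟨min (K / 4) 1, lt_min (by positivity) one_pos, T, hT0, fun u v h hEn => ?_⟩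
  have hE1 : En W u v ≤ e0 + K / 4 := hEn.trans (by gcongr; exact min_le_left _ _)
  have hE2 : En W u v ≤ e0 + 1 := hEn.trans (by gcongr; exact min_le_right _ _)
  set S := {t : ℝ | ‖u t - pp‖ ≤ r} with hS
  have hSc : IsClosed S := isClosed_le (h.cont.sub continuous_const).norm continuous_const
  obtain ⟨t0, -, ht0⟩ := h.near_p hr0 0
  have hSb : BddBelow S := by
    have := h.lm.eventually (Metric.closedBall_mem_nhds pm hr0)
    obtain ⟨b, hb⟩ := eventually_atBot.1 this
    refine ⟨b, fun t ht => ?_⟩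
    by_contra hlt
    push Not at hlt
    have h1 : ‖u t - pm‖ ≤ r := by simpa [dist_eq_norm] using hb t hlt.le
    have h2 : ‖u t - pp‖ ≤ r := ht
    have h3 : ‖pm - pp‖ ≤ ‖u t - pp‖ + ‖u t - pm‖ := by
      have := norm_sub_le (u t - pp) (u t - pm)
      simpa using this
    linarith
  set τ := sInf S with hτ
  have hτS : ‖u τ - pp‖ ≤ r := hSc.csInf_mem ⟨t0, ht0⟩ hSb
  have hτlt : ∀ t < τ, r ≤ ‖u t - pp‖ := by
    intro t ht
    by_contra hh
    push Not at hh
    exact absurd (csInf_le hSb (show t ∈ S from hh.le)) (not_le.2 ht)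
  have i := fun a b => h.toArc.intDens hWc a b
  obtain ⟨t1, ht1a, ht1b, ht1⟩ : ∃ t1, τ - T ≤ t1 ∧ t1 ≤ τ ∧ ‖u t1 - pm‖ ≤ r := by
    by_contra hcon
    push Not at hcon
    have h1 : T * cr ≤ ∫ y in (τ - T)..τ, dens W u v y := by
      have h2 : ∫ y in (τ - T)..τ, cr = T * cr := by simp
      rw [← h2]
      refine intervalIntegral.integral_mono_on_of_le_Ioo (by linarith) (by simp) (i _ _) ?_
      intro x hx
      have h3 := haw (u x) (hcon x hx.1.le hx.2.le).le (hτlt x hx.2)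
      unfold dens
      have : 0 ≤ (v x).1 ^ 2 + (v x).2 ^ 2 := by positivity
      linarith
    have h2 := h.en_ge hW (show τ - T ≤ τ by linarith)
    have := le_abs_self e0
    linarith
  refine ⟨τ, fun t ht => ?_, fun t ht => ?_⟩
  · by_contra hh
    push Not at hh
    have hle : t + τ ≤ t1 := by linarith
    have h1 := annulus hWc hW h.toArc hc0.le hle (hann pm (Or.inl rfl))
      (Or.inr ⟨ht1.trans hr1, hh.le⟩)
    have h2 := hL r hr0 hr2 u v h.toArc t1 τ ht1b ht1 hτS
    have h3 := h.en_ge hW (hle.trans ht1b)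
    rw [← intervalIntegral.integral_add_adjacent_intervals (i _ t1) (i t1 _)] at h3
    linarith
  · by_contra hh
    push Not at hh
    have hle : τ ≤ t + τ := by linarith
    have h1 := annulus hWc hW h.toArc hc0.le hle (hann pp (Or.inr rfl))
      (Or.inl ⟨hτS.trans hr1, hh.le⟩)
    obtain ⟨s, hs, hs'⟩ := h.near_m hr0 τ
    have h2 := hL r hr0 hr2 u v h.toArc s τ hs hs' hτS
    have h3 := h.en_ge hW (hs.trans hle)
    rw [← intervalIntegral.integral_add_adjacent_intervals (i _ τ) (i τ _)] at h3
    linarith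

end TW

namespace TW

lemma inner_toLp {f h : ℝ → ℝ} (hf : MemLp f 2 volume) (hh : MemLp h 2 volume) :
    inner ℝ (hf.toLp f) (hh.toLp h) = ∫ t, f t * h t := by
  rw [L2.inner_def]
  refine integral_congr_ae ?_
  filter_upwards [hf.coeFn_toLp, hh.coeFn_toLp] with t h1 h2
  rw [h1, h2]; simp [mul_comm]

lemma weak_compact {f : ℕ → ℝ → ℝ} (hf : ∀ n, MemLp (f n) 2 volume) {M : ℝ}
    (hM : ∀ n, ∫ t, f n t ^ 2 ≤ M) :
    ∃ φ : ℕ → ℕ, StrictMono φ ∧ ∃ f' : ℝ → ℝ, MemLp f' 2 volume ∧ ∀ h : ℝ → ℝ, MemLp h 2 volume →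
      Tendsto (fun n => ∫ t, f (φ n) t * h t) atTop (𝓝 (∫ t, f' t * h t)) := by
  haveI : Fact ((2 : ℝ≥0∞) ≠ ∞) := ⟨by norm_num⟩
  let H := Lp ℝ 2 (volume : Measure ℝ)
  let x : ℕ → H := fun n => (hf n).toLp (f n)
  have hx : ∀ n, ‖x n‖ ≤ Real.sqrt M := by
    intro n
    apply Real.le_sqrt_of_sq_le
    rw [← real_inner_self_eq_norm_sq, inner_toLp]
    simpa [sq] using hM n
  have hsc := WeakDual.isSeqCompact_closedBall ℝ (E := H) 0 (Real.sqrt M)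
  let y : ℕ → WeakDual ℝ H := fun n => WeakDual.toStrongDual.symm (InnerProductSpace.toDual ℝ H (x n))
  obtain ⟨a, -, φ, hφ, hlim⟩ := hsc (x := y) (fun n => by
    simp only [mem_preimage, y, LinearEquiv.apply_symm_apply, mem_closedBall_zero_iff,
      LinearIsometryEquiv.norm_map]
    exact hx n)
  let z : H := (InnerProductSpace.toDual ℝ H).symm (WeakDual.toStrongDual a)
  refine ⟨φ, hφ, z, Lp.memLp z, fun h hh => ?_⟩
  rw [tendsto_iff_forall_eval_tendsto_topDualPairing] at hlim
  have h1 := hlim (hh.toLp h)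
  have e1 : ∀ n, ∫ t, f (φ n) t * h t = (topDualPairing ℝ H) ((y ∘ φ) n) (hh.toLp h) := by
    intro n; rw [← inner_toLp (hf _) hh]; rfl
  have e2 : ∫ t, z t * h t = (topDualPairing ℝ H) a (hh.toLp h) := by
    have : (topDualPairing ℝ H) a (hh.toLp h) = inner ℝ z (hh.toLp h) :=
      (InnerProductSpace.toDual_symm_apply (𝕜 := ℝ) (E := H) (x := hh.toLp h) (y := WeakDual.toStrongDual a)).symm
    rw [this, ← inner_toLp (Lp.memLp z) hh, Lp.toLp_coeFn]
  rw [e2]; simpa only [e1] using h1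

end TW

namespace TW

/-- local uniform/weak convergence of arcs -/
structure Conv (un vn : ℕ → ℝ → ℝ × ℝ) (u v : ℝ → ℝ × ℝ) : Prop where
  arcs : ∀ n, Arc (un n) (vn n)
  arc : Arc u v
  bd1 : ∃ M, ∀ n, ∫ t, (vn n t).1 ^ 2 ≤ M
  bd2 : ∃ M, ∀ n, ∫ t, (vn n t).2 ^ 2 ≤ M
  w1 : ∀ h : ℝ → ℝ, MemLp h 2 volume →
    Tendsto (fun n => ∫ t, (vn n t).1 * h t) atTop (𝓝 (∫ t, (v t).1 * h t))
  w2 : ∀ h : ℝ → ℝ, MemLp h 2 volume →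
    Tendsto (fun n => ∫ t, (vn n t).2 * h t) atTop (𝓝 (∫ t, (v t).2 * h t))
  pt : ∀ t, Tendsto (fun n => un n t) atTop (𝓝 (u t))
  lb : ∀ S, ∃ K, ∀ n t, |t| ≤ S → ‖un n t‖ ≤ K

lemma memLp_ind {h : ℝ → ℝ} (hc : Continuous h) (s t : ℝ) :
    MemLp ((Ioc s t).indicator h) 2 volume := by
  rw [memLp_indicator_iff_restrict measurableSet_Ioc]
  obtain ⟨K, hK⟩ := (isCompact_Icc (a := s) (b := t)).exists_bound_of_continuousOn hc.continuousOn
  refine MemLp.of_bound hc.aestronglyMeasurable K ?_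
  filter_upwards [ae_restrict_mem measurableSet_Ioc] with x hx
  exact hK x (Ioc_subset_Icc_self hx)

lemma int_ind {f h : ℝ → ℝ} {s t : ℝ} (hst : s ≤ t) :
    ∫ x, f x * (Ioc s t).indicator h x = ∫ x in s..t, f x * h x := by
  rw [intervalIntegral.integral_of_le hst, ← integral_indicator measurableSet_Ioc]
  congr 1; funext x
  by_cases hx : x ∈ Ioc s t <;> simp [hx]

lemma weak_interval {f : ℕ → ℝ → ℝ} {f' : ℝ → ℝ}
    (hw : ∀ h : ℝ → ℝ, MemLp h 2 volume →
      Tendsto (fun n => ∫ t, f n t * h t) atTop (𝓝 (∫ t, f' t * h t)))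
    {h : ℝ → ℝ} {s t : ℝ} (hst : s ≤ t) (hh : MemLp ((Ioc s t).indicator h) 2 volume) :
    Tendsto (fun n => ∫ x in s..t, f n x * h x) atTop (𝓝 (∫ x in s..t, f' x * h x)) := by
  simpa only [int_ind hst] using hw _ hh

lemma norm_le_one_add (z : ℝ × ℝ) : ‖z‖ ≤ 1 + z.1 ^ 2 + z.2 ^ 2 := by
  nlinarith [normsq_le z, sq_nonneg (‖z‖ - 1), norm_nonneg z]

lemma Arc.bound {u v : ℝ → ℝ × ℝ} (h : Arc u v) {M1 M2 : ℝ} (h1 : ∫ t, (v t).1 ^ 2 ≤ M1)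
    (h2 : ∫ t, (v t).2 ^ 2 ≤ M2) (s t : ℝ) : ‖u t - u s‖ ≤ |t - s| + M1 + M2 := by
  wlog hst : s ≤ t generalizing s t
  · rw [norm_sub_rev, abs_sub_comm]; exact this t s (le_of_not_ge hst)
  refine (h.norm_sub_le hst).trans ?_
  have i1 : IntervalIntegrable (fun t => (v t).1 ^ 2) volume s t := h.sq1.intervalIntegrable
  have i2 : IntervalIntegrable (fun t => (v t).2 ^ 2) volume s t := h.sq2.intervalIntegrable
  have i0 : IntervalIntegrable (fun _ : ℝ => (1 : ℝ)) volume s t := intervalIntegrable_const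
  have e : ∫ y in s..t, ‖v y‖ ≤ ∫ y in s..t, (1 + (v y).1 ^ 2 + (v y).2 ^ 2) :=
    intervalIntegral.integral_mono_on hst (h.intv s t).norm ((i0.add i1).add i2)
      (fun y _ => norm_le_one_add _)
  rw [intervalIntegral.integral_add (i0.add i1) i2, intervalIntegral.integral_add i0 i1] at e
  have e1 : ∫ y in s..t, (v y).1 ^ 2 ≤ M1 := by
    rw [intervalIntegral.integral_of_le hst]
    exact (setIntegral_le_integral h.sq1 (Eventually.of_forall fun _ => sq_nonneg _)).trans h1
  have e2 : ∫ y in s..t, (v y).2 ^ 2 ≤ M2 := by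
    rw [intervalIntegral.integral_of_le hst]
    exact (setIntegral_le_integral h.sq2 (Eventually.of_forall fun _ => sq_nonneg _)).trans h2
  rw [abs_of_nonneg (by linarith)]
  simp only [intervalIntegral.integral_const, smul_eq_mul, mul_one] at e
  linarith

lemma compact {un vn : ℕ → ℝ → ℝ × ℝ} (h : ∀ n, Arc (un n) (vn n)) {M K t0 : ℝ}
    (h1 : ∀ n, ∫ t, (vn n t).1 ^ 2 ≤ M) (h2 : ∀ n, ∫ t, (vn n t).2 ^ 2 ≤ M)
    (h0 : ∀ n, ‖un n t0‖ ≤ K) :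
    ∃ φ : ℕ → ℕ, StrictMono φ ∧ ∃ u v, Conv (fun n => un (φ n)) (fun n => vn (φ n)) u v := by
  obtain ⟨a, ha, f1, hf1, H1⟩ := weak_compact (fun n => (h n).mem1) h1
  obtain ⟨b, hb, f2, hf2, H2⟩ := weak_compact (fun n => (h (a n)).mem2) (fun n => h2 (a n))
  obtain ⟨q, -, c, hc, Hq⟩ := (isCompact_closedBall (0 : ℝ × ℝ) K).tendsto_subseq
    (x := fun n => un (a (b n)) t0) (fun n => by simpa using h0 _)
  have H1' := fun g hg => (H1 g hg).comp (hb.comp hc).tendsto_atTop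
  have H2' := fun g hg => (H2 g hg).comp hc.tendsto_atTop
  set v : ℝ → ℝ × ℝ := fun t => (f1 t, f2 t) with hv
  have hvm : MemLp v 2 volume := by
    have e1 := (ContinuousLinearMap.inl ℝ ℝ ℝ).comp_memLp' hf1
    have e2 := (ContinuousLinearMap.inr ℝ ℝ ℝ).comp_memLp' hf2
    refine (e1.add e2).ae_eq (Eventually.of_forall fun t => ?_)
    simp [hv]
  have hvl : LocallyIntegrable v volume := hvm.locallyIntegrable (by norm_num)
  have hvi := li_ii hvl
  have hv1 : ∀ s t, ∫ y in s..t, v y = (∫ y in s..t, f1 y, ∫ y in s..t, f2 y) := by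
    intro s t
    refine Prod.ext ?_ ?_
    · exact ((ContinuousLinearMap.fst ℝ ℝ ℝ).intervalIntegral_comp_comm (hvi s t)).symm
    · exact ((ContinuousLinearMap.snd ℝ ℝ ℝ).intervalIntegral_comp_comm (hvi s t)).symm
  refine ⟨fun n => a (b (c n)), (ha.comp (hb.comp hc)), fun t => q + ∫ y in t0..t, v y, v, ?_⟩
  have harc : Arc (fun t => q + ∫ y in t0..t, v y) v := by
    refine ⟨hvm, fun s t => ?_⟩
    rw [add_sub_add_left_eq_sub, intervalIntegral.integral_interval_sub_left (hvi _ _) (hvi _ _)]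
  have hItg : ∀ {g : ℕ → ℝ → ℝ} {g' : ℝ → ℝ}, (∀ h : ℝ → ℝ, MemLp h 2 volume →
      Tendsto (fun n => ∫ t, g n t * h t) atTop (𝓝 (∫ t, g' t * h t))) → ∀ s t,
      Tendsto (fun n => ∫ x in s..t, g n x) atTop (𝓝 (∫ x in s..t, g' x)) := by
    intro g g' hw s t
    rcases le_total s t with hst | hst
    · simpa using weak_interval hw hst (memLp_ind (continuous_const (y := (1 : ℝ))) s t)
    · have := weak_interval hw hst (memLp_ind (continuous_const (y := (1 : ℝ))) t s)
      rw [intervalIntegral.integral_symm]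
      simp_rw [intervalIntegral.integral_symm t s]
      simpa using this.neg
  refine ⟨fun n => h _, harc, ⟨M, fun n => h1 _⟩, ⟨M, fun n => h2 _⟩, H1', H2', fun t => ?_, ?_⟩
  · have e : ∀ n, un (a (b (c n))) t = un (a (b (c n))) t0 +
        (∫ y in t0..t, (vn (a (b (c n))) y).1, ∫ y in t0..t, (vn (a (b (c n))) y).2) := by
      intro n
      rw [← (h _).ftc1, ← (h _).ftc2]
      refine Prod.ext ?_ ?_ <;> simp
    simp_rw [e, hv1]
    exact Hq.add ((hItg H1' t0 t).prodMk_nhds (hItg H2' t0 t))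
  · intro S
    refine ⟨K + (S + |t0|) + M + M, fun n t ht => ?_⟩
    have h3 := (h (a (b (c n)))).bound (h1 _) (h2 _) t0 t
    have h4 := norm_sub_norm_le (un (a (b (c n))) t) (un (a (b (c n))) t0)
    have h5 := h0 (a (b (c n)))
    have h6 := abs_sub t t0
    simp only
    linarith

namespace Conv
variable {un vn : ℕ → ℝ → ℝ × ℝ} {u v : ℝ → ℝ × ℝ}

lemma lb' (h : Conv un vn u v) (S : ℝ) :
    ∃ K, (∀ n t, |t| ≤ S → ‖un n t‖ ≤ K) ∧ (∀ t, |t| ≤ S → ‖u t‖ ≤ K) := by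
  obtain ⟨K, hK⟩ := h.lb S
  exact ⟨K, hK, fun t ht => le_of_tendsto (h.pt t).norm (Eventually.of_forall fun n => hK n t ht)⟩

/-- dominated convergence on intervals -/
lemma dom (h : Conv un vn u v) {Φ : (ℝ × ℝ) × ℝ → ℝ} (hΦ : Continuous Φ) (s t : ℝ) :
    Tendsto (fun n => ∫ x in s..t, Φ (un n x, x)) atTop (𝓝 (∫ x in s..t, Φ (u x, x))) := by
  obtain ⟨K, hK, -⟩ := h.lb' (max |s| |t|)
  obtain ⟨B, hB⟩ := ((isCompact_closedBall (0 : ℝ × ℝ) K).prod (isCompact_uIcc (a := s) (b := t))).exists_bound_of_continuousOn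
    hΦ.continuousOn
  refine intervalIntegral.tendsto_integral_filter_of_dominated_convergence (fun _ => B) ?_ ?_ ?_ ?_
  · exact Eventually.of_forall fun n =>
      (hΦ.comp ((h.arcs n).cont.prodMk continuous_id)).aestronglyMeasurable
  · refine Eventually.of_forall fun n => Eventually.of_forall fun x hx => hB (un n x, x) ⟨?_, ?_⟩
    · simp only [mem_closedBall_zero_iff]
      apply hK
      have := uIoc_subset_uIcc hx
      rw [mem_uIcc] at this
      rw [abs_le]
      have := neg_abs_le s; have := neg_abs_le t; have := le_abs_self s; have := le_abs_self t
      have := le_max_left |s| |t|; have := le_max_right |s| |t|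
      constructor <;> rcases ‹s ≤ x ∧ x ≤ t ∨ t ≤ x ∧ x ≤ s› with ⟨_, _⟩ | ⟨_, _⟩ <;> linarith
    · exact uIoc_subset_uIcc hx
  · exact intervalIntegrable_const
  · refine Eventually.of_forall fun x _ => ?_
    exact (hΦ.tendsto (u x, x)).comp ((h.pt x).prodMk_nhds tendsto_const_nhds)

lemma sub_sq (h : Conv un vn u v) (s t : ℝ) :
    Tendsto (fun n => ∫ x in s..t, ((un n x).1 - (u x).1) ^ 2) atTop (𝓝 0) := by
  have := h.dom (Φ := fun z => (z.1.1 - (u z.2).1) ^ 2)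
    (by have := h.arc.cont; fun_prop) s t
  simpa using this

end Conv

lemma cs {a b : ℝ → ℝ} (ha : MemLp a 2 volume) (hb : MemLp b 2 volume) :
    (∫ t, a t * b t) ^ 2 ≤ (∫ t, a t ^ 2) * ∫ t, b t ^ 2 := by
  have := real_inner_mul_inner_self_le (ha.toLp a) (hb.toLp b)
  rw [inner_toLp, inner_toLp, inner_toLp] at this
  simpa [sq] using this

namespace Conv
variable {un vn : ℕ → ℝ → ℝ × ℝ} {u v : ℝ → ℝ × ℝ}

lemma area (h : Conv un vn u v) {s t : ℝ} (hst : s ≤ t) :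
    Tendsto (fun n => ∫ x in s..t, (un n x).1 * (vn n x).2) atTop
      (𝓝 (∫ x in s..t, (u x).1 * (v x).2)) := by
  have e1 := weak_interval h.w2 hst (memLp_ind h.arc.cont1 s t)
  obtain ⟨M, hM⟩ := h.bd2
  have e2 : Tendsto (fun n => ∫ x in s..t, (vn n x).2 * ((un n x).1 - (u x).1)) atTop (𝓝 0) := by
    have hc : ∀ n, Continuous fun x => (un n x).1 - (u x).1 := fun n =>
      (h.arcs n).cont1.sub h.arc.cont1
    have e3 : ∀ n, (∫ x in s..t, (vn n x).2 * ((un n x).1 - (u x).1)) ^ 2 ≤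
        M * ∫ x in s..t, ((un n x).1 - (u x).1) ^ 2 := by
      intro n
      have := cs (h.arcs n).mem2 (memLp_ind (hc n) s t)
      rw [int_ind hst] at this
      have e4 : ∫ x, (Ioc s t).indicator (fun x => (un n x).1 - (u x).1) x ^ 2 =
          ∫ x in s..t, ((un n x).1 - (u x).1) ^ 2 := by
        have := int_ind (f := (Ioc s t).indicator (fun x => (un n x).1 - (u x).1))
          (h := fun x => (un n x).1 - (u x).1) hst
        simp_rw [sq]
        rw [this, intervalIntegral.integral_of_le hst, intervalIntegral.integral_of_le hst]
        refine setIntegral_congr_fun measurableSet_Ioc fun x hx => ?_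
        simp [hx]
      rw [e4] at this
      refine this.trans (mul_le_mul_of_nonneg_right (hM n) ?_)
      exact intervalIntegral.integral_nonneg hst (fun _ _ => sq_nonneg _)
    have e5 : Tendsto (fun n => (∫ x in s..t, (vn n x).2 * ((un n x).1 - (u x).1)) ^ 2) atTop (𝓝 0) := by
      refine squeeze_zero (fun n => sq_nonneg _) e3 ?_
      simpa using (h.sub_sq s t).const_mul M
    have e6 := e5.sqrt
    simp only [Real.sqrt_sq_eq_abs, Real.sqrt_zero] at e6
    exact (tendsto_zero_iff_abs_tendsto_zero _).2 e6
  have e7 := e1.add e2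
  rw [add_zero] at e7
  have e8 : ∫ x in s..t, (u x).1 * (v x).2 = ∫ x in s..t, (v x).2 * (u x).1 := by
    simp_rw [mul_comm]
  rw [e8]
  refine e7.congr fun n => ?_
  rw [← intervalIntegral.integral_add]
  · refine intervalIntegral.integral_congr fun x _ => ?_
    ring
  · simpa only [mul_comm] using (h.arcs n).intMul2 h.arc.cont1 s t
  · simpa only [mul_comm] using (h.arcs n).intMul2 (f := fun x => (un n x).1 - (u x).1)
      ((h.arcs n).cont1.sub h.arc.cont1) s t

lemma lsc (h : Conv un vn u v) {W : ℝ × ℝ → ℝ} (hWc : Continuous W) {s t : ℝ} (hst : s ≤ t) :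
    ∃ L : ℕ → ℝ, Tendsto L atTop (𝓝 (∫ x in s..t, dens W u v x)) ∧
      ∀ n, L n ≤ ∫ x in s..t, dens W (un n) (vn n) x := by
  have m1 : MemLp ((Ioc s t).indicator fun x => (v x).1) 2 volume :=
    h.arc.mem1.indicator measurableSet_Ioc
  have m2 : MemLp ((Ioc s t).indicator fun x => (v x).2) 2 volume :=
    h.arc.mem2.indicator measurableSet_Ioc
  have e1 := weak_interval h.w1 hst m1
  have e2 := weak_interval h.w2 hst m2
  have e3 := h.dom (Φ := fun z => W z.1) (by fun_prop) s t
  have i1 : ∀ n, IntervalIntegrable (fun x => (vn n x).1 * (v x).1) volume s t := fun n =>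
    ((h.arcs n).mem1.integrable_mul h.arc.mem1).intervalIntegrable
  have i2 : ∀ n, IntervalIntegrable (fun x => (vn n x).2 * (v x).2) volume s t := fun n =>
    ((h.arcs n).mem2.integrable_mul h.arc.mem2).intervalIntegrable
  have i3 : IntervalIntegrable (fun x => (v x).1 ^ 2) volume s t := h.arc.sq1.intervalIntegrable
  have i4 : IntervalIntegrable (fun x => (v x).2 ^ 2) volume s t := h.arc.sq2.intervalIntegrable
  have i5 : ∀ n, IntervalIntegrable (fun x => W (un n x)) volume s t := fun n =>
    (hWc.comp (h.arcs n).cont).intervalIntegrable s t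
  have i6 : IntervalIntegrable (fun x => W (u x)) volume s t :=
    (hWc.comp h.arc.cont).intervalIntegrable s t
  have e4 := (((e1.add e2).add e3).sub_const
    ((∫ x in s..t, (v x).1 ^ 2) / 2)).sub_const ((∫ x in s..t, (v x).2 ^ 2) / 2)
  refine ⟨fun n => (∫ x in s..t, (vn n x).1 * (v x).1) + (∫ x in s..t, (vn n x).2 * (v x).2) +
    (∫ x in s..t, W (un n x)) - (∫ x in s..t, (v x).1 ^ 2) / 2 - (∫ x in s..t, (v x).2 ^ 2) / 2,
    ?_, fun n => ?_⟩
  · convert e4 using 2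
    unfold dens
    rw [intervalIntegral.integral_add ((i3.add i4).const_mul _) i6,
      intervalIntegral.integral_const_mul, intervalIntegral.integral_add i3 i4]
    have a1 : ∫ x in s..t, (v x).1 * (v x).1 = ∫ x in s..t, (v x).1 ^ 2 := by simp_rw [sq]
    have a2 : ∫ x in s..t, (v x).2 * (v x).2 = ∫ x in s..t, (v x).2 ^ 2 := by simp_rw [sq]
    rw [a1, a2]; ring
  · have : ∫ x in s..t, ((vn n x).1 * (v x).1 + (vn n x).2 * (v x).2 + W (un n x)
        - (v x).1 ^ 2 / 2 - (v x).2 ^ 2 / 2) ≤ ∫ x in s..t, dens W (un n) (vn n) x := by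
      refine intervalIntegral.integral_mono_on hst
        (((((i1 n).add (i2 n)).add (i5 n)).sub (i3.div_const 2)).sub (i4.div_const 2))
        ((h.arcs n).intDens hWc s t) fun x _ => ?_
      unfold dens
      nlinarith [sq_nonneg ((vn n x).1 - (v x).1), sq_nonneg ((vn n x).2 - (v x).2)]
    rw [intervalIntegral.integral_sub ((((i1 n).add (i2 n)).add (i5 n)).sub (i3.div_const 2)) (i4.div_const 2),
      intervalIntegral.integral_sub (((i1 n).add (i2 n)).add (i5 n)) (i3.div_const 2),
      intervalIntegral.integral_add ((i1 n).add (i2 n)) (i5 n),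
      intervalIntegral.integral_add (i1 n) (i2 n), intervalIntegral.integral_div,
      intervalIntegral.integral_div] at this
    exact this

end Conv
end TW

namespace TW
variable {W : ℝ × ℝ → ℝ} {pm pp : ℝ × ℝ} {u v : ℝ → ℝ × ℝ} {e0 C R κ : ℝ}

lemma Arc.refl (h : Arc u v) : Arc (fun t => u (-t)) (fun t => -v (-t)) where
  mem := (h.mem.comp_measurePreserving (Measure.measurePreserving_neg volume)).neg
  ftc s t := by
    rw [intervalIntegral.integral_neg, intervalIntegral.integral_comp_neg, ← h.ftc]; abel

lemma barbalat (h : Arc u v) {p : ℝ × ℝ} {T : ℝ}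
    (hi : IntegrableOn (fun t => (u t - p).1 ^ 2 + (u t - p).2 ^ 2) (Ioi T)) :
    Tendsto u atTop (𝓝 p) := by
  set V : ℝ × ℝ → ℝ := fun x => (x - p).1 ^ 2 + (x - p).2 ^ 2 with hV
  have hVc : Continuous V := by fun_prop
  have hV0 : ∀ x, 0 ≤ V x := fun x => by positivity
  have hD : IntegrableOn (dens V u v) (Ioi T) :=
    (((h.sq1.add h.sq2).const_mul (1/2)).integrableOn).add hi
  have hlim := intervalIntegral_tendsto_integral_Ioi T hD tendsto_id
  rw [tendsto_iff_norm_sub_tendsto_zero, Metric.tendsto_atTop]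
  intro ε hε
  obtain ⟨B, hB⟩ := Metric.tendsto_atTop.1 hlim (ε ^ 2 / 8) (by positivity)
  have hcau : ∀ a b, B ≤ a → B ≤ b → ∫ y in a..b, dens V u v y < ε ^ 2 / 4 := by
    intro a b ha hb
    have h1 := hB a ha
    have h2 := hB b hb
    rw [Real.dist_eq, abs_lt] at h1 h2
    simp only [id] at h1 h2
    rw [← intervalIntegral.integral_interval_sub_left (h.intDens hVc T b) (h.intDens hVc T a)]
    linarith
  refine ⟨B, fun t ht => ?_⟩
  simp only [dist_zero_right, norm_norm]
  by_contra hcon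
  push Not at hcon
  obtain ⟨s, hs1, hs2⟩ : ∃ s ≥ t, ‖u s - p‖ ≤ ε / 2 := by
    by_contra hh
    push Not at hh
    have h1 := hcau t (t + 1) ht (by linarith)
    have h2 : ∫ y in t..(t+1), (ε ^ 2 / 4) = ε ^ 2 / 4 := by simp
    rw [← h2] at h1
    refine absurd h1 (not_lt.2 ?_)
    refine intervalIntegral.integral_mono_on (by linarith) (by simp) (h.intDens hVc _ _) ?_
    intro x hx
    have h3 := hh x hx.1
    have h4 := normsq_le (u x - p)
    have h5 : dens V u v x = (1 / 2) * ((v x).1 ^ 2 + (v x).2 ^ 2) + ((u x - p).1 ^ 2 + (u x - p).2 ^ 2) := rfl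
    rw [h5]
    nlinarith [sq_nonneg (v x).1, sq_nonneg (v x).2]
  have h1 := annulus hVc hV0 h (p := p) (a := ε / 2) (b := ε) (c := ε / 2) (by positivity) hs1
    (fun x hx _ => by
      have := normsq_le (x - p)
      have h5 : V x = ((x - p).1 ^ 2 + (x - p).2 ^ 2) := rfl
      rw [h5]
      nlinarith) (Or.inr ⟨hs2, hcon⟩)
  have h2 := hcau t s ht (ht.trans hs1)
  nlinarith

lemma barbalat_bot (h : Arc u v) {p : ℝ × ℝ} {T : ℝ}
    (hi : IntegrableOn (fun t => (u t - p).1 ^ 2 + (u t - p).2 ^ 2) (Iio T)) :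
    Tendsto u atBot (𝓝 p) := by
  have := barbalat h.refl (p := p) (T := -T) (by
    have := (Measure.measurePreserving_neg (volume : Measure ℝ)).integrableOn_comp_preimage
      (MeasurableEquiv.neg ℝ).measurableEmbedding
      (f := fun t => (u t - p).1 ^ 2 + (u t - p).2 ^ 2) (s := Iio T)
    have h2 := this.2 hi
    have e : (Neg.neg ⁻¹' Iio T : Set ℝ) = Ioi (-T) := by
      ext x; simp only [mem_preimage, mem_Iio, mem_Ioi]; constructor <;> intro h <;> linarith
    rw [e] at h2
    exact h2)
  refine (this.comp tendsto_neg_atBot_atTop).congr fun t => ?_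
  simp

lemma piece (hWc : Continuous W) (hR : WL W pm pp R κ) {c : ℝ} (hc : c ^ 2 = 2 * κ) (hc0 : 0 < c)
    (h : Arc u v) {p : ℝ × ℝ} (hp : p = pm ∨ p = pp) {s t : ℝ} (hst : s ≤ t)
    (hu : ∀ x, s ≤ x → x ≤ t → ‖u x - p‖ ≤ R) :
    c * |(∫ x in s..t, (u x).1 * (v x).2) - p.1 * ((u t).2 - (u s).2)| ≤
      ∫ x in s..t, dens W u v x := by
  have e : (∫ x in s..t, (u x).1 * (v x).2) - p.1 * ((u t).2 - (u s).2) =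
      ∫ x in s..t, ((u x).1 - p.1) * (v x).2 := by
    rw [h.ftc2, ← intervalIntegral.integral_const_mul,
      ← intervalIntegral.integral_sub (h.intArea s t) ((h.intv2 s t).const_mul _)]
    simp_rw [sub_mul]
  have hi : IntervalIntegrable (fun x => ((u x).1 - p.1) * (v x).2) volume s t :=
    h.intMul2 (f := fun x => (u x).1 - p.1) (h.cont1.sub continuous_const) s t
  rw [e]
  calc c * |∫ x in s..t, ((u x).1 - p.1) * (v x).2|
      ≤ c * ∫ x in s..t, |((u x).1 - p.1) * (v x).2| :=
        mul_le_mul_of_nonneg_left (intervalIntegral.abs_integral_le_integral_abs hst) hc0.le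
    _ = ∫ x in s..t, c * |((u x).1 - p.1) * (v x).2| := by
        rw [intervalIntegral.integral_const_mul]
    _ ≤ _ := by
        refine intervalIntegral.integral_mono_on hst (hi.abs.const_mul _) (h.intDens hWc s t) ?_
        intro x hx
        have h1 := (hR.2.2 p hp (u x) (hu x hx.1 hx.2)).1
        simp only [Prod.fst_sub, Prod.snd_sub] at h1
        unfold dens
        have hκ := hR.2.1
        rw [abs_mul]
        have a1 := sq_abs ((u x).1 - p.1)
        have a2 := sq_abs ((v x).2)
        nlinarith [sq_nonneg (c * |(u x).1 - p.1| - |(v x).2|), sq_nonneg (v x).1,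
          mul_nonneg hκ.le (sq_nonneg ((u x).2 - p.2))]

/-- confinement -/
def Conf (pm pp : ℝ × ℝ) (R T : ℝ) (u : ℝ → ℝ × ℝ) : Prop :=
  (∀ t ≤ -T, ‖u t - pm‖ ≤ R) ∧ (∀ t ≥ T, ‖u t - pp‖ ≤ R)

/-- truncated area with endpoint corrections -/
def PA (pm pp : ℝ × ℝ) (u v : ℝ → ℝ × ℝ) (S : ℝ) : ℝ :=
  (∫ x in (-S)..S, (u x).1 * (v x).2) + pp.1 * (pp.2 - (u S).2) + pm.1 * ((u (-S)).2 - pm.2)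

lemma tail (hT : TwoWell W pm pp) (hR : WL W pm pp R κ) {c : ℝ} (hc : c ^ 2 = 2 * κ) (hc0 : 0 < c)
    (h : Adm W pm pp u v) {T S A : ℝ} (hcf : Conf pm pp R T u) (hS : T ≤ S) (hS0 : 0 ≤ S)
    (hA : HasArea u v A) :
    c * |A - PA pm pp u v S| ≤ En W u v - ∫ x in (-S)..S, dens W u v x := by
  have hWc := hT.smooth.continuous
  have hW := hT.nonneg
  have l1 : Tendsto (fun st : ℝ × ℝ => u st.1) (atBot ×ˢ atTop) (𝓝 pm) := h.lm.comp tendsto_fst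
  have l2 : Tendsto (fun st : ℝ × ℝ => u st.2) (atBot ×ˢ atTop) (𝓝 pp) := h.lp.comp tendsto_snd
  have l1' := (continuous_snd.tendsto pm).comp l1
  have l2' := (continuous_snd.tendsto pp).comp l2
  have hlim : Tendsto (fun st : ℝ × ℝ => c * |(∫ x in st.1..st.2, (u x).1 * (v x).2) -
      ((∫ x in (-S)..S, (u x).1 * (v x).2) + pp.1 * ((u st.2).2 - (u S).2) +
        pm.1 * ((u (-S)).2 - (u st.1).2))|) (atBot ×ˢ atTop)
      (𝓝 (c * |A - PA pm pp u v S|)) := by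
    refine (Tendsto.abs ?_).const_mul c
    refine Tendsto.sub hA ?_
    exact (tendsto_const_nhds.add ((l2'.sub_const _).const_mul _)).add
      ((tendsto_const_nhds.sub l1').const_mul _)
  refine le_of_tendsto hlim ?_
  have hev : ∀ᶠ st : ℝ × ℝ in atBot ×ˢ atTop, st.1 ≤ -S ∧ S ≤ st.2 :=
    (eventually_le_atBot (-S)).prod_mk (eventually_ge_atTop S)
  filter_upwards [hev] with st hst
  obtain ⟨h1, h2⟩ := hst
  have hm := piece hWc hR hc hc0 h.toArc (Or.inl rfl) h1 (fun x _ hx => hcf.1 x (by linarith))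
  have hp := piece hWc hR hc hc0 h.toArc (Or.inr rfl) h2 (fun x hx _ => hcf.2 x (by linarith))
  have he := h.en_ge hW (show st.1 ≤ st.2 by linarith)
  have i := fun a b => h.toArc.intDens hWc a b
  have j := fun a b => h.toArc.intArea a b
  rw [← intervalIntegral.integral_add_adjacent_intervals (i _ (-S)) (i (-S) _),
    ← intervalIntegral.integral_add_adjacent_intervals (i (-S) S) (i S _)] at he
  rw [← intervalIntegral.integral_add_adjacent_intervals (j _ (-S)) (j (-S) _),
    ← intervalIntegral.integral_add_adjacent_intervals (j (-S) S) (j S _)]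
  set X := (∫ x in st.1..(-S), (u x).1 * (v x).2) - pm.1 * ((u (-S)).2 - (u st.1).2)
  set Y := (∫ x in S..st.2, (u x).1 * (v x).2) - pp.1 * ((u st.2).2 - (u S).2)
  have : ∀ a b d e f : ℝ, a + (b + d) - (b + e + f) = (a - f) + (d - e) := by intros; ring
  rw [this]
  have h3 : c * |X + Y| ≤ c * (|X| + |Y|) := mul_le_mul_of_nonneg_left (abs_add_le _ _) hc0.le
  linarith

lemma Adm.conf (h : Adm W pm pp u v) (hR : 0 < R) : ∃ T ≥ 0, Conf pm pp R T u := by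
  obtain ⟨a, ha⟩ := eventually_atBot.1 (h.lm.eventually (Metric.closedBall_mem_nhds pm hR))
  obtain ⟨b, hb⟩ := eventually_atTop.1 (h.lp.eventually (Metric.closedBall_mem_nhds pp hR))
  refine ⟨max 0 (max (-a) b), le_max_left _ _, fun t ht => ?_, fun t ht => ?_⟩
  · have : t ≤ a := by
      have := (le_max_left (-a) b).trans (le_max_right 0 _); linarith
    simpa [dist_eq_norm] using ha t this
  · have : b ≤ t := by
      have := (le_max_right (-a) b).trans (le_max_right 0 _); linarith
    simpa [dist_eq_norm] using hb t this

lemma half_area (hi : Integrable (dens W u v)) (hR : WL W pm pp R κ) (h : Arc u v) {p : ℝ × ℝ}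
    (hp : p = pm ∨ p = pp) {T : ℝ} (hu : ∀ t ≥ T, ‖u t - p‖ ≤ R)
    (hl : Tendsto u atTop (𝓝 p)) :
    ∃ L, Tendsto (fun t => ∫ x in (0:ℝ)..t, (u x).1 * (v x).2) atTop (𝓝 L) := by
  have hκ := hR.2.1
  set c := Real.sqrt (2 * κ)
  have hc : c ^ 2 = 2 * κ := Real.sq_sqrt (by positivity)
  have hc0 : 0 < c := by positivity
  have hI : IntegrableOn (fun x => ((u x).1 - p.1) * (v x).2) (Ioi T) := by
    refine (hi.const_mul c⁻¹).integrableOn.mono' ?_ ?_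
    · exact ((h.cont1.sub continuous_const).aestronglyMeasurable.mul
        h.mem2.aestronglyMeasurable).restrict
    · filter_upwards [ae_restrict_mem measurableSet_Ioi] with x hx
      have h1 := (hR.2.2 p hp (u x) (hu x (le_of_lt hx))).1
      simp only [Prod.fst_sub, Prod.snd_sub] at h1
      rw [Real.norm_eq_abs, inv_mul_eq_div, le_div_iff₀ hc0]
      unfold dens
      rw [abs_mul]
      have a1 := sq_abs ((u x).1 - p.1)
      have a2 := sq_abs ((v x).2)
      nlinarith [sq_nonneg (c * |(u x).1 - p.1| - |(v x).2|), sq_nonneg (v x).1,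
          mul_nonneg hκ.le (sq_nonneg ((u x).2 - p.2))]
  have l1 := intervalIntegral_tendsto_integral_Ioi T hI tendsto_id
  have l2 := (continuous_snd.tendsto p).comp hl
  have l3 := (l1.add ((l2.sub_const (u T).2).const_mul p.1)).const_add
    (∫ x in (0:ℝ)..T, (u x).1 * (v x).2)
  refine ⟨_, l3.congr fun t => ?_⟩
  have i1 : IntervalIntegrable (fun x => ((u x).1 - p.1) * (v x).2) volume T t :=
    h.intMul2 (f := fun x => (u x).1 - p.1) (h.cont1.sub continuous_const) T t
  simp only [id, Function.comp]
  rw [h.ftc2, ← intervalIntegral.integral_const_mul,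
    ← intervalIntegral.integral_add i1 ((h.intv2 T t).const_mul _),
    ← intervalIntegral.integral_add_adjacent_intervals (h.intArea 0 T) (h.intArea T t)]
  congr 1
  refine intervalIntegral.integral_congr fun x _ => ?_
  ring

lemma Adm.hasArea (hR : WL W pm pp R κ) (h : Adm W pm pp u v) : ∃ a, HasArea u v a := by
  obtain ⟨T, hT0, hT⟩ := h.conf hR.1
  obtain ⟨L, hL⟩ := half_area h.intDensAll hR h.toArc (Or.inr rfl) hT.2 h.lp
  have hi : Integrable (dens W (fun t => u (-t)) (fun t => -v (-t))) := by
    have := h.intDensAll.comp_neg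
    refine this.congr (Eventually.of_forall fun t => ?_)
    simp [dens]
  obtain ⟨L', hL'⟩ := half_area hi hR h.toArc.refl (p := pm) (Or.inl rfl) (T := T)
    (fun t ht => hT.1 (-t) (by linarith)) (h.lm.comp tendsto_neg_atTop_atBot)
  have hL2 := hL'.comp tendsto_neg_atBot_atTop
  refine ⟨L - L', ?_⟩
  unfold HasArea
  refine ((hL.comp tendsto_snd).sub (hL2.comp tendsto_fst)).congr fun st => ?_
  have e : ∫ x in (0:ℝ)..(-st.1), (u (-x)).1 * (-v (-x)).2 =
      ∫ x in st.1..0, -((u x).1 * (v x).2) := by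
    have := intervalIntegral.integral_comp_neg (a := 0) (b := -st.1) (fun x => -((u x).1 * (v x).2))
    simp only [neg_neg, neg_zero] at this
    rw [← this]
    simp
  have e2 := intervalIntegral.integral_add_adjacent_intervals (h.toArc.intArea st.1 0) (h.toArc.intArea 0 st.2)
  simp only [Function.comp]
  rw [e, intervalIntegral.integral_neg]
  linarith

lemma PA_tendsto (h : Adm W pm pp u v) {a : ℝ} (ha : HasArea u v a) :
    Tendsto (PA pm pp u v) atTop (𝓝 a) := by
  have h1 : Tendsto (fun S : ℝ => ((-S, S) : ℝ × ℝ)) atTop (atBot ×ˢ atTop) :=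
    tendsto_neg_atTop_atBot.prodMk tendsto_id
  have h2 := ha.comp h1
  have h3 := (continuous_snd.tendsto pp).comp h.lp
  have h4 := (continuous_snd.tendsto pm).comp (h.lm.comp tendsto_neg_atTop_atBot)
  have h5 := (h2.add ((h3.const_sub pp.2).const_mul pp.1)).add ((h4.sub_const pm.2).const_mul pm.1)
  simp only [sub_self, mul_zero, add_zero] at h5
  exact h5

lemma limit_adm (hT : TwoWell W pm pp) (hR : WL W pm pp R κ)
    {un vn : ℕ → ℝ → ℝ × ℝ} (h : Conv un vn u v) (hA : ∀ n, Adm W pm pp (un n) (vn n))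
    {T : ℝ} (hcf : ∀ n, Conf pm pp R T (un n)) {H : ℝ} {Hn : ℕ → ℝ}
    (hH : ∀ n, En W (un n) (vn n) ≤ Hn n) (hHn : Tendsto Hn atTop (𝓝 H)) :
    Adm W pm pp u v ∧ En W u v ≤ H := by
  have hWc := hT.smooth.continuous
  have hW := hT.nonneg
  have hcu : Conf pm pp R T u :=
    ⟨fun t ht => le_of_tendsto ((h.pt t).sub_const pm).norm (Eventually.of_forall fun n => (hcf n).1 t ht),
     fun t ht => le_of_tendsto ((h.pt t).sub_const pp).norm (Eventually.of_forall fun n => (hcf n).2 t ht)⟩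
  have hbd : ∀ S, 0 ≤ S → ∫ x in (-S)..S, dens W u v x ≤ H := by
    intro S hS
    obtain ⟨L, hL, hL2⟩ := h.lsc hWc (show -S ≤ S by linarith)
    exact le_of_tendsto_of_tendsto' hL hHn fun n =>
      (hL2 n).trans (((hA n).en_ge hW (by linarith)).trans (hH n))
  have hItg : Integrable (dens W u v) := by
    refine integrable_of_intervalIntegral_norm_bounded H (l := atTop) (a := fun S : ℝ => -S)
      (b := fun S => S) (fun S => ?_) tendsto_neg_atTop_atBot tendsto_id ?_
    · exact ((h.arc.intDens hWc (-S) S).1)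
    · filter_upwards [eventually_ge_atTop 0] with S hS
      refine le_trans (le_of_eq ?_) (hbd S hS)
      refine intervalIntegral.integral_congr fun x _ => ?_
      simp [abs_of_nonneg (dens_nonneg hW u v x)]
  have hiW : Integrable (fun t => W (u t)) := by
    refine hItg.mono' (hWc.comp h.arc.cont).aestronglyMeasurable (Eventually.of_forall fun t => ?_)
    rw [Real.norm_eq_abs, abs_of_nonneg (hW _)]
    unfold dens
    have : 0 ≤ (v t).1 ^ 2 + (v t).2 ^ 2 := by positivity
    linarith
  have hκ := hR.2.1
  have hcu2 := h.arc.cont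
  have hloc : ∀ p, p = pm ∨ p = pp → ∀ s : Set ℝ, MeasurableSet s → (∀ t ∈ s, ‖u t - p‖ ≤ R) →
      IntegrableOn (fun t => (u t - p).1 ^ 2 + (u t - p).2 ^ 2) s := by
    intro p hp s hs hu
    refine (hiW.const_mul κ⁻¹).integrableOn.mono' (by fun_prop) ?_
    filter_upwards [ae_restrict_mem hs] with x hx
    have h1 := (hR.2.2 p hp (u x) (hu x hx)).1
    rw [Real.norm_eq_abs, abs_of_nonneg (by positivity), inv_mul_eq_div, le_div_iff₀ hκ]
    linarith
  have hadm : Adm W pm pp u v := by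
    refine ⟨h.arc, hiW, ?_, ?_⟩
    · exact barbalat_bot h.arc (T := -T) (hloc pm (Or.inl rfl) _ measurableSet_Iio
        fun t ht => hcu.1 t (le_of_lt ht))
    · exact barbalat h.arc (T := T) (hloc pp (Or.inr rfl) _ measurableSet_Ioi
        fun t ht => hcu.2 t (le_of_lt ht))
  refine ⟨hadm, le_of_tendsto hadm.en_tendsto ?_⟩
  filter_upwards [eventually_ge_atTop 0] with S h2 using hbd S h2

lemma limit (hT : TwoWell W pm pp) (hR : WL W pm pp R κ) {c : ℝ} (hc : c ^ 2 = 2 * κ) (hc0 : 0 < c)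
    {un vn : ℕ → ℝ → ℝ × ℝ} (h : Conv un vn u v) (hA : ∀ n, Adm W pm pp (un n) (vn n))
    {T : ℝ} (hcf : ∀ n, Conf pm pp R T (un n)) {H : ℝ} {Hn An : ℕ → ℝ}
    (hH : ∀ n, En W (un n) (vn n) ≤ Hn n) (hHn : Tendsto Hn atTop (𝓝 H))
    {A : ℝ} (har : ∀ n, HasArea (un n) (vn n) (An n)) (hAn : Tendsto An atTop (𝓝 A)) :
    Adm W pm pp u v ∧ ∃ a, HasArea u v a ∧ c * |A - a| ≤ H - En W u v := by
  have hWc := hT.smooth.continuous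
  have hW := hT.nonneg
  have hadm := (limit_adm hT hR h hA hcf hH hHn).1
  obtain ⟨a, ha⟩ := hadm.hasArea hR
  refine ⟨hadm, a, ha, ?_⟩
  have hS : ∀ S, T ≤ S → 0 ≤ S → c * |A - PA pm pp u v S| ≤ H - ∫ x in (-S)..S, dens W u v x := by
    intro S h1 h2
    obtain ⟨L, hL, hL2⟩ := h.lsc hWc (show -S ≤ S by linarith)
    have e1 := h.area (show -S ≤ S by linarith)
    have e2 := (continuous_snd.tendsto _).comp (h.pt S)
    have e3 := (continuous_snd.tendsto _).comp (h.pt (-S))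
    have e4 : Tendsto (fun n => PA pm pp (un n) (vn n) S) atTop (𝓝 (PA pm pp u v S)) :=
      (e1.add ((e2.const_sub pp.2).const_mul pp.1)).add ((e3.sub_const pm.2).const_mul pm.1)
    refine le_of_tendsto_of_tendsto' ((hAn.sub e4).abs.const_mul c) (hHn.sub hL) fun n => ?_
    have := tail hT hR hc hc0 (hA n) (hcf n) h1 h2 (har n)
    have := hL2 n; have := hH n
    linarith
  refine le_of_tendsto_of_tendsto (((PA_tendsto hadm ha).const_sub A).abs.const_mul c)
    (hadm.en_tendsto.const_sub H) ?_
  filter_upwards [eventually_ge_atTop T, eventually_ge_atTop 0] with S h1 h2 using hS S h1 h2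

end TW

namespace TW
variable {W : ℝ × ℝ → ℝ} {pm pp : ℝ × ℝ} {u v : ℝ → ℝ × ℝ} {e0 C R κ : ℝ}

/-- test functions supported in `(-N,N)` -/
structure Test (φ : ℝ → ℝ × ℝ) (N : ℝ) : Prop where
  cd : ContDiff ℝ 1 φ
  cs : HasCompactSupport φ
  pos : 0 < N
  z : ∀ t, N ≤ |t| → φ t = 0
  z' : ∀ t, N ≤ |t| → deriv φ t = 0

lemma Test.mk' {φ : ℝ → ℝ × ℝ} (h : ContDiff ℝ 1 φ) (hc : HasCompactSupport φ) : ∃ N, Test φ N := by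
  obtain ⟨N, hN⟩ := hc.isBounded.subset_closedBall 0
  refine ⟨max N 0 + 1, h, hc, by positivity, fun t ht => ?_, fun t ht => ?_⟩
  · by_contra hh
    have := hN (subset_tsupport _ hh)
    simp only [Metric.mem_closedBall, dist_zero_right, Real.norm_eq_abs] at this
    have := le_max_left N 0
    linarith
  · by_contra hh
    have := hN (support_deriv_subset hh)
    simp only [Metric.mem_closedBall, dist_zero_right, Real.norm_eq_abs] at this
    have := le_max_left N 0
    linarith

/-- first variation of the energy -/
def dH (W : ℝ × ℝ → ℝ) (u v φ : ℝ → ℝ × ℝ) : ℝ :=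
  ∫ t, ((v t).1 * (deriv φ t).1 + (v t).2 * (deriv φ t).2 + fderiv ℝ W (u t) (φ t))

/-- first variation of the area -/
def dA (u v φ : ℝ → ℝ × ℝ) : ℝ := ∫ t, ((v t).2 * (φ t).1 + (u t).1 * (deriv φ t).2)

/-- second variation of the area -/
def qA (φ : ℝ → ℝ × ℝ) : ℝ := ∫ t, (φ t).1 * (deriv φ t).2

namespace Test
variable {φ : ℝ → ℝ × ℝ} {N : ℝ}

lemma c (h : Test φ N) : Continuous φ := h.cd.continuous
lemma c' (h : Test φ N) : Continuous (deriv φ) := h.cd.continuous_deriv le_rfl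
lemma m1 (h : Test φ N) : MemLp (fun t => (φ t).1) 2 volume :=
  (ContinuousLinearMap.fst ℝ ℝ ℝ).comp_memLp' (h.c.memLp_of_hasCompactSupport h.cs)
lemma m1' (h : Test φ N) : MemLp (fun t => (deriv φ t).1) 2 volume :=
  (ContinuousLinearMap.fst ℝ ℝ ℝ).comp_memLp' (h.c'.memLp_of_hasCompactSupport h.cs.deriv)
lemma m2' (h : Test φ N) : MemLp (fun t => (deriv φ t).2) 2 volume :=
  (ContinuousLinearMap.snd ℝ ℝ ℝ).comp_memLp' (h.c'.memLp_of_hasCompactSupport h.cs.deriv)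

/-- whole line integrals reduce to intervals -/
lemma red {f : ℝ → ℝ} (hf : ∀ t, N ≤ |t| → f t = 0) {s t : ℝ} (hs : s ≤ -N) (ht : N ≤ t) :
    ∫ x in s..t, f x = ∫ x, f x := by
  refine intervalIntegral.integral_eq_integral_of_support_subset fun x hx => ?_
  by_contra hh
  refine hx (hf x ?_)
  rw [mem_Ioc, not_and_or] at hh
  rw [le_abs]
  rcases hh with h | h
  · right; linarith
  · left; linarith

lemma intc {f : ℝ → ℝ} (hc : Continuous f) (hf : ∀ t, N ≤ |t| → f t = 0) : Integrable f := by
  refine hc.integrable_of_hasCompactSupport ?_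
  refine HasCompactSupport.intro (isCompact_Icc (a := -N) (b := N)) fun x hx => hf x ?_
  by_contra hh
  push Not at hh
  exact hx ⟨by linarith [(abs_lt.1 hh).1], (abs_lt.1 hh).2.le⟩

lemma iA1 (h : Test φ N) (hu : Arc u v) : Integrable (fun t => (v t).2 * (φ t).1) :=
  hu.mem2.integrable_mul h.m1

lemma iA2 (h : Test φ N) (hu : Arc u v) : Integrable (fun t => (u t).1 * (deriv φ t).2) := by
  refine intc (N := N) ?_ fun t ht => by simp [h.z' t ht]
  have := hu.cont; have := h.c'; fun_prop

lemma iq (h : Test φ N) : Integrable (fun t => (φ t).1 * (deriv φ t).2) := by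
  refine intc (N := N) ?_ fun t ht => by simp [h.z' t ht]
  have := h.c; have := h.c'; fun_prop

lemma cW (h : Test φ N) (hs : ContDiff ℝ (⊤ : ℕ∞) W) :
    Continuous (fun z : (ℝ × ℝ) × ℝ => fderiv ℝ W z.1 (φ z.2)) := by
  have h1 : Continuous (fderiv ℝ W) := hs.continuous_fderiv (by simp)
  have := h.c
  fun_prop

lemma iW (h : Test φ N) (hs : ContDiff ℝ (⊤ : ℕ∞) W) (hu : Arc u v) :
    Integrable (fun t => fderiv ℝ W (u t) (φ t)) := by
  refine intc (N := N) ?_ fun t ht => by simp [h.z t ht]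
  exact (h.cW hs).comp (hu.cont.prodMk continuous_id)

lemma iH (h : Test φ N) (hs : ContDiff ℝ (⊤ : ℕ∞) W) (hu : Arc u v) : Integrable (fun t =>
    (v t).1 * (deriv φ t).1 + (v t).2 * (deriv φ t).2 + fderiv ℝ W (u t) (φ t)) :=
  ((hu.mem1.integrable_mul h.m1').add (hu.mem2.integrable_mul h.m2')).add (h.iW hs hu)

lemma area (h : Test φ N) (hu : Arc u v) {a : ℝ} (ha : HasArea u v a) (s : ℝ) :
    HasArea (fun t => u t + s • φ t) (fun t => v t + s • deriv φ t)
      (a + (s * dA u v φ + s ^ 2 * qA φ)) := by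
  unfold HasArea at *
  refine (ha.add_const (s * dA u v φ + s ^ 2 * qA φ)).congr' ?_
  have hev : ∀ᶠ st : ℝ × ℝ in atBot ×ˢ atTop, st.1 ≤ -N ∧ N ≤ st.2 :=
    (eventually_le_atBot (-N)).prod_mk (eventually_ge_atTop N)
  filter_upwards [hev] with st hst
  have e1 : dA u v φ = ∫ t in st.1..st.2, ((v t).2 * (φ t).1 + (u t).1 * (deriv φ t).2) :=
    (red (fun t ht => by simp [h.z t ht, h.z' t ht]) hst.1 hst.2).symm
  have e2 : qA φ = ∫ t in st.1..st.2, (φ t).1 * (deriv φ t).2 :=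
    (red (fun t ht => by simp [h.z t ht]) hst.1 hst.2).symm
  have i1 : IntervalIntegrable (fun t => (v t).2 * (φ t).1 + (u t).1 * (deriv φ t).2) volume st.1 st.2 :=
    ((h.iA1 hu).add (h.iA2 hu)).intervalIntegrable
  have i2 : IntervalIntegrable (fun t => (φ t).1 * (deriv φ t).2) volume st.1 st.2 :=
    h.iq.intervalIntegrable
  rw [e1, e2, ← intervalIntegral.integral_const_mul, ← intervalIntegral.integral_const_mul,
    ← intervalIntegral.integral_add (i1.const_mul _) (i2.const_mul _),
    ← intervalIntegral.integral_add (hu.intArea _ _) ((i1.const_mul _).add (i2.const_mul _))]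
  refine intervalIntegral.integral_congr fun t _ => ?_
  simp only [Prod.fst_add, Prod.snd_add, Prod.smul_fst, Prod.smul_snd, smul_eq_mul]
  ring

lemma adm (h : Test φ N) (hWc : Continuous W) (hu : Adm W pm pp u v) (s : ℝ) :
    Adm W pm pp (fun t => u t + s • φ t) (fun t => v t + s • deriv φ t) where
  toArc := hu.toArc.add h.cd h.cs s
  iW := by
    have : Integrable (fun t => W (u t + s • φ t) - W (u t)) := by
      refine intc (N := N) ?_ fun t ht => by simp [h.z t ht]
      have := hu.cont; have := h.c; fun_prop
    refine (this.add hu.iW).congr (Eventually.of_forall fun t => ?_)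
    simp
  lm := by
    refine hu.lm.congr' ?_
    filter_upwards [eventually_le_atBot (-N)] with t ht
    rw [h.z t (by rw [le_abs]; right; linarith)]; simp
  lp := by
    refine hu.lp.congr' ?_
    filter_upwards [eventually_ge_atTop N] with t ht
    rw [h.z t (by rw [le_abs]; left; linarith)]; simp

lemma var_en (h : Test φ N) (hs : ContDiff ℝ (⊤ : ℕ∞) W) (K : ℝ) :
    ∃ C ≥ 0, ∃ s0 > 0, ∀ u v, Adm W pm pp u v → (∀ t, |t| ≤ N → ‖u t‖ ≤ K) → ∀ s, |s| ≤ s0 →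
      En W (fun t => u t + s • φ t) (fun t => v t + s • deriv φ t) ≤
        En W u v + s * dH W u v φ + C * s ^ 2 := by
  have hWc := hs.continuous
  obtain ⟨C0, hC0, hq⟩ := quad hs K
  obtain ⟨B, hB⟩ := h.c.bounded_above_of_compact_support h.cs
  have hB0 : 0 ≤ B := (norm_nonneg _).trans (hB 0)
  set r : ℝ → ℝ := fun t => (1 / 2) * ((deriv φ t).1 ^ 2 + (deriv φ t).2 ^ 2) + C0 * ‖φ t‖ ^ 2 with hr
  have hri : Integrable r := by
    refine intc (N := N) ?_ fun t ht => by simp [hr, h.z t ht, h.z' t ht]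
    have := h.c; have := h.c'; fun_prop
  have hr0 : ∀ t, 0 ≤ r t := fun t => by positivity
  refine ⟨∫ t, r t, integral_nonneg hr0, 1 / (B + 1), by positivity, fun u v hu hK s hs' => ?_⟩
  have hsB : |s| * B ≤ 1 := by
    rw [le_div_iff₀ (by positivity)] at hs'
    have := abs_nonneg s
    nlinarith
  have i := h.iH hs hu.toArc
  have : En W u v + s * dH W u v φ + (∫ t, r t) * s ^ 2 = ∫ t, (dens W u v t + s *
      ((v t).1 * (deriv φ t).1 + (v t).2 * (deriv φ t).2 + fderiv ℝ W (u t) (φ t)) + r t * s ^ 2) := by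
    have a1 := integral_add (hu.intDensAll.add (i.const_mul s)) (hri.mul_const (s ^ 2))
    have a2 := integral_add hu.intDensAll (i.const_mul s)
    simp only [Pi.add_apply] at a1
    rw [a1, a2, integral_const_mul, integral_mul_const]
    rfl
  rw [this]
  refine integral_mono (h.adm hWc hu s).intDensAll
    ((hu.intDensAll.add (i.const_mul s)).add (hri.mul_const _)) fun t => ?_
  have key : W (u t + s • φ t) ≤ W (u t) + s * fderiv ℝ W (u t) (φ t) + s ^ 2 * (C0 * ‖φ t‖ ^ 2) := by
    by_cases ht : |t| ≤ N
    · have h1 := hq (u t) (s • φ t) (hK t ht) (by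
        rw [norm_smul, Real.norm_eq_abs]
        exact (mul_le_mul_of_nonneg_left (hB t) (abs_nonneg s)).trans hsB)
      rw [map_smul, norm_smul, mul_pow, Real.norm_eq_abs, sq_abs, smul_eq_mul] at h1
      linarith
    · rw [h.z t (le_of_not_ge ht)]; simp
  simp only [dens, hr, Prod.fst_add, Prod.snd_add, Prod.smul_fst, Prod.smul_snd, smul_eq_mul]
  nlinarith

lemma conv_dH (h : Test φ N) (hs : ContDiff ℝ (⊤ : ℕ∞) W) {un vn : ℕ → ℝ → ℝ × ℝ}
    (hc : Conv un vn u v) : Tendsto (fun n => dH W (un n) (vn n) φ) atTop (𝓝 (dH W u v φ)) := by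
  have e : ∀ u v, Arc u v → dH W u v φ = (∫ t, (v t).1 * (deriv φ t).1) +
      (∫ t, (v t).2 * (deriv φ t).2) + ∫ t in (-N)..N, fderiv ℝ W (u t) (φ t) := by
    intro u v hu
    rw [red (N := N) (fun t ht => by simp [h.z t ht]) le_rfl le_rfl]
    unfold dH
    refine (integral_add ((hu.mem1.integrable_mul h.m1').add (hu.mem2.integrable_mul h.m2'))
      (h.iW hs hu)).trans ?_
    congr 1
    exact integral_add (hu.mem1.integrable_mul h.m1') (hu.mem2.integrable_mul h.m2')
  rw [e u v hc.arc]
  simp_rw [fun n => e _ _ (hc.arcs n)]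
  exact ((hc.w1 _ h.m1').add (hc.w2 _ h.m2')).add (hc.dom (h.cW hs) (-N) N)

lemma conv_dA (h : Test φ N) {un vn : ℕ → ℝ → ℝ × ℝ}
    (hc : Conv un vn u v) : Tendsto (fun n => dA (un n) (vn n) φ) atTop (𝓝 (dA u v φ)) := by
  have e : ∀ u v, Arc u v → dA u v φ = (∫ t, (v t).2 * (φ t).1) +
      ∫ t in (-N)..N, (u t).1 * (deriv φ t).2 := by
    intro u v hu
    rw [red (N := N) (fun t ht => by simp [h.z' t ht]) le_rfl le_rfl]
    exact integral_add (h.iA1 hu) (h.iA2 hu)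
  rw [e u v hc.arc]
  simp_rw [fun n => e _ _ (hc.arcs n)]
  refine (hc.w2 _ h.m1).add (hc.dom (Φ := fun z => z.1.1 * (deriv φ z.2).2) ?_ (-N) N)
  have := h.c'; fun_prop

end Test
end TW

namespace TW
variable {W : ℝ × ℝ → ℝ} {pm pp : ℝ × ℝ} {u v : ℝ → ℝ × ℝ} {e0 C R κ : ℝ}

lemma zero_outside {ψ : ℝ → ℝ} (hc : HasCompactSupport ψ) :
    ∃ N > 0, ∀ t, N ≤ |t| → ψ t = 0 := by
  obtain ⟨N, hN⟩ := hc.isBounded.subset_closedBall 0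
  refine ⟨max N 0 + 1, by positivity, fun t ht => ?_⟩
  by_contra hh
  have := hN (subset_tsupport _ hh)
  simp only [Metric.mem_closedBall, dist_zero_right, Real.norm_eq_abs] at this
  have := le_max_left N 0
  linarith

/-- primitives of mean zero functions are test functions -/
lemma prim_test {ψ : ℝ → ℝ} (hc : Continuous ψ) (hs : HasCompactSupport ψ) (h0 : ∫ t, ψ t = 0) :
    ∃ Ψ : ℝ → ℝ, ContDiff ℝ 1 Ψ ∧ HasCompactSupport Ψ ∧ deriv Ψ = ψ := by
  obtain ⟨N, hN, hz⟩ := zero_outside hs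
  have hd : ∀ t, HasDerivAt (fun t => ∫ x in (-N)..t, ψ x) (ψ t) t := fun t =>
    intervalIntegral.integral_hasDerivAt_right (hc.intervalIntegrable _ _)
      (hc.stronglyMeasurableAtFilter _ _) hc.continuousAt
  have hd' : deriv (fun t => ∫ x in (-N)..t, ψ x) = ψ := funext fun t => (hd t).deriv
  refine ⟨fun t => ∫ x in (-N)..t, ψ x, ?_, ?_, hd'⟩
  · rw [contDiff_one_iff_deriv, hd']
    exact ⟨fun t => (hd t).differentiableAt, hc⟩
  · refine HasCompactSupport.intro (isCompact_Icc (a := -N) (b := N)) fun t ht => ?_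
    rcases le_or_gt t (-N) with h | h
    · rw [intervalIntegral.integral_symm, intervalIntegral.integral_of_le h,
        setIntegral_eq_zero_of_forall_eq_zero, neg_zero]
      intro x hx
      exact hz x (by rw [le_abs]; right; linarith [hx.2])
    · have : N < t := by
        by_contra hh; exact ht ⟨h.le, not_lt.1 hh⟩
      rw [Test.red (N := N) hz le_rfl this.le, h0]

lemma dbr {f G : ℝ → ℝ} (hf : LocallyIntegrable f volume) (hG : Continuous G)
    (h : ∀ ψ : ℝ → ℝ, ContDiff ℝ 1 ψ → HasCompactSupport ψ → ∫ t, (f t * deriv ψ t + G t * ψ t) = 0) :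
    ∃ c, ∀ᵐ t, f t = c + ∫ x in (0:ℝ)..t, G x := by
  set P : ℝ → ℝ := fun t => ∫ x in (0:ℝ)..t, G x with hP
  have hPd : ∀ t, HasDerivAt P (G t) t := fun t =>
    intervalIntegral.integral_hasDerivAt_right (hG.intervalIntegrable _ _)
      (hG.stronglyMeasurableAtFilter _ _) hG.continuousAt
  have hPc : Continuous P := continuous_iff_continuousAt.2 fun t => (hPd t).continuousAt
  set k : ℝ → ℝ := fun t => f t - P t with hk
  have hkl : LocallyIntegrable k volume := hf.sub hPc.locallyIntegrable
  have hkψ : ∀ ψ : ℝ → ℝ, Continuous ψ → HasCompactSupport ψ → Integrable (fun t => k t * ψ t) := by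
    intro ψ h1 h2
    simpa [mul_comm] using hkl.integrable_smul_left_of_hasCompactSupport h1 h2
  have h1 : ∀ ψ : ℝ → ℝ, ContDiff ℝ 1 ψ → HasCompactSupport ψ → ∫ t, k t * deriv ψ t = 0 := by
    intro ψ h1 h2
    obtain ⟨N, hN, hz⟩ := zero_outside h2
    have hd := h1.continuous_deriv le_rfl
    have i1 : Integrable (fun t => f t * deriv ψ t) := by
      simpa [mul_comm] using hf.integrable_smul_left_of_hasCompactSupport hd h2.deriv
    have i2 : Integrable (fun t => G t * ψ t) :=
      (hG.mul h1.continuous).integrable_of_hasCompactSupport h2.mul_left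
    have i3 : Integrable (fun t => P t * deriv ψ t) :=
      (hPc.mul hd).integrable_of_hasCompactSupport h2.deriv.mul_left
    have e1 := h ψ h1 h2
    rw [integral_add i1 i2] at e1
    have e2 : ∫ t, (P t * deriv ψ t + G t * ψ t) = 0 := by
      have := integral_eq_zero_of_hasDerivAt_of_integrable (f := fun t => P t * ψ t)
        (f' := fun t => G t * ψ t + P t * deriv ψ t)
        (fun t => (hPd t).mul ((h1.differentiable one_ne_zero) t).hasDerivAt) (i2.add i3)
        ((hPc.mul h1.continuous).integrable_of_hasCompactSupport h2.mul_left)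
      rw [← this]; simp_rw [add_comm]
    rw [integral_add i3 i2] at e2
    have e3 : ∫ t, k t * deriv ψ t = (∫ t, f t * deriv ψ t) - ∫ t, P t * deriv ψ t := by
      rw [← integral_sub i1 i3]; simp_rw [hk, sub_mul]
    rw [e3]; linarith
  obtain ⟨χ, hχ⟩ : ∃ χ : ContDiffBump (0 : ℝ), True := ⟨⟨1, 2, one_pos, by norm_num⟩, trivial⟩
  set χ' : ℝ → ℝ := χ.normed volume with hχ'
  have hχc : Continuous χ' := χ.continuous_normed
  have hχs : HasCompactSupport χ' := χ.hasCompactSupport_normed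
  have hχ1 : ∫ t, χ' t = 1 := χ.integral_normed
  set c := ∫ t, k t * χ' t with hc
  refine ⟨c, ?_⟩
  have h2 : ∀ᵐ t, k t - c = 0 := by
    refine ae_eq_zero_of_integral_contDiff_smul_eq_zero (f := fun t => k t - c)
      (hkl.sub (locallyIntegrable_const c)) fun ψ hψ hψs => ?_
    have hψc := hψ.continuous
    set m := ∫ t, ψ t with hm
    have iψ : Integrable ψ := hψc.integrable_of_hasCompactSupport hψs
    have iχ : Integrable χ' := hχc.integrable_of_hasCompactSupport hχs
    obtain ⟨Ψ, a1, a2, a3⟩ := prim_test (ψ := fun t => ψ t - m * χ' t)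
      (hψc.sub (continuous_const.mul hχc)) (hψs.sub hχs.mul_left)
      (by rw [integral_sub iψ (iχ.const_mul m), integral_const_mul, hχ1]; simp [hm])
    have e1 := h1 Ψ a1 a2
    rw [a3] at e1
    have e2 : ∫ t, k t * (ψ t - m * χ' t) = (∫ t, k t * ψ t) - m * c := by
      rw [hc, ← integral_const_mul, ← integral_sub (hkψ ψ hψc hψs) ((hkψ χ' hχc hχs).const_mul m)]
      congr 1; funext t; ring
    have e3 : ∫ t, ψ t • (k t - c) = (∫ t, k t * ψ t) - c * m := by
      rw [hm, ← integral_const_mul, ← integral_sub (hkψ ψ hψc hψs) (iψ.const_mul c)]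
      congr 1; funext t; simp only [smul_eq_mul]; ring
    rw [e3]; rw [e2] at e1; linarith
  filter_upwards [h2] with t ht
  simp only [hk] at ht
  linarith

lemma test1 {ψ : ℝ → ℝ} (h : ContDiff ℝ 1 ψ) (hc : HasCompactSupport ψ) :
    ContDiff ℝ 1 (fun t => ((ψ t, 0) : ℝ × ℝ)) ∧ HasCompactSupport (fun t => ((ψ t, 0) : ℝ × ℝ)) ∧
    ∀ t, deriv (fun t => ((ψ t, 0) : ℝ × ℝ)) t = (deriv ψ t, 0) := by
  refine ⟨h.prodMk contDiff_const, ?_, fun t => ?_⟩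
  · exact hc.comp_left (g := fun x => ((x, 0) : ℝ × ℝ)) rfl
  · exact (((h.differentiable one_ne_zero) t).hasDerivAt.prodMk (hasDerivAt_const t (0:ℝ))).deriv

lemma test2 {ψ : ℝ → ℝ} (h : ContDiff ℝ 1 ψ) (hc : HasCompactSupport ψ) :
    ContDiff ℝ 1 (fun t => ((0, ψ t) : ℝ × ℝ)) ∧ HasCompactSupport (fun t => ((0, ψ t) : ℝ × ℝ)) ∧
    ∀ t, deriv (fun t => ((0, ψ t) : ℝ × ℝ)) t = (0, deriv ψ t) := by
  refine ⟨contDiff_const.prodMk h, ?_, fun t => ?_⟩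
  · exact hc.comp_left (g := fun x => ((0, x) : ℝ × ℝ)) rfl
  · exact ((hasDerivAt_const t (0:ℝ)).prodMk ((h.differentiable one_ne_zero) t).hasDerivAt).deriv

lemma nonvanish (hne : pm ≠ pp) (h : Adm W pm pp u v) : ∃ φ N, Test φ N ∧ dA u v φ = 1 := by
  by_contra hcon
  push Not at hcon
  have hz : ∀ φ, ContDiff ℝ 1 φ → HasCompactSupport φ → dA u v φ = 0 := by
    intro φ h1 h2
    by_contra hne
    have h3 : ContDiff ℝ 1 (fun t => (dA u v φ)⁻¹ • φ t) :=
      h1.const_smul _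
    have h4 : HasCompactSupport (fun t => (dA u v φ)⁻¹ • φ t) :=
      h2.comp_left (g := fun z => (dA u v φ)⁻¹ • z) (smul_zero _)
    obtain ⟨N, hN⟩ := Test.mk' h3 h4
    refine hcon _ N hN ?_
    have hd : ∀ t, deriv (fun t => (dA u v φ)⁻¹ • φ t) t = (dA u v φ)⁻¹ • deriv φ t := fun t => by
      exact (((h1.differentiable one_ne_zero) t).hasDerivAt.const_smul ((dA u v φ)⁻¹)).deriv
    have : dA u v (fun t => (dA u v φ)⁻¹ • φ t) = (dA u v φ)⁻¹ * dA u v φ := by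
      conv_rhs => rw [dA, ← integral_const_mul]
      unfold dA at hd ⊢
      simp_rw [hd]
      congr 1; funext t
      simp only [Prod.smul_fst, Prod.smul_snd, smul_eq_mul]; ring
    rw [this, inv_mul_cancel₀ hne]
  have a1 : ∀ᵐ t, (v t).2 = 0 := by
    refine ae_eq_zero_of_integral_contDiff_smul_eq_zero (h.mem2.locallyIntegrable (by norm_num))
      fun ψ hψ hψs => ?_
    have t1 := test1 (hψ.of_le (by norm_cast)) hψs
    have := hz _ t1.1 t1.2.1
    unfold dA at this
    simp_rw [t1.2.2] at this
    rw [← this]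
    congr 1; funext t; simp [mul_comm]
  obtain ⟨c, a2⟩ := dbr (f := fun t => (u t).1) (G := fun _ => 0) h.cont1.locallyIntegrable
    continuous_const (fun ψ hψ hψs => by
      have t1 := test2 hψ hψs
      have := hz _ t1.1 t1.2.1
      unfold dA at this
      simp_rw [t1.2.2] at this
      refine Eq.trans ?_ this
      congr 1; funext t; simp)
  have b1 : ∀ t, (u t).2 = (u 0).2 := by
    intro t
    have := h.ftc2 0 t
    rw [intervalIntegral.integral_zero_ae (by filter_upwards [a1] with t ht _ using ht)] at this
    linarith
  have b2 : (fun t => (u t).1) = fun _ => c := by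
    refine (h.cont1.ae_eq_iff_eq (μ := volume) continuous_const).1 ?_
    filter_upwards [a2] with t ht
    simpa using ht
  have b3 : u = fun _ => (c, (u 0).2) := by
    funext t
    exact Prod.ext (congrFun b2 t) (b1 t)
  have c1 := h.lm; have c2 := h.lp
  rw [b3] at c1 c2
  exact hne ((tendsto_nhds_unique c1 tendsto_const_nhds).trans
    (tendsto_nhds_unique c2 tendsto_const_nhds).symm)

end TW

namespace TW
variable {W : ℝ × ℝ → ℝ} {pm pp : ℝ × ℝ} {u v : ℝ → ℝ × ℝ} {e0 C R κ : ℝ}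

lemma solve {d q δ : ℝ} (hd : 1 / 2 ≤ d) (hq : 16 * |δ| * |q| ≤ 1) :
    ∃ s, |s| ≤ 4 * |δ| ∧ s * d + s ^ 2 * q = δ := by
  have h0 := abs_nonneg δ
  have hc : ContinuousOn (fun s : ℝ => s * d + s ^ 2 * q) (Icc (-(4 * |δ|)) (4 * |δ|)) := by fun_prop
  have h3 : 16 * |δ| ^ 2 * |q| ≤ |δ| := by nlinarith
  have h1 : (-(4 * |δ|)) * d + (-(4 * |δ|)) ^ 2 * q ≤ δ := by
    nlinarith [neg_abs_le δ, mul_le_mul_of_nonneg_left (le_abs_self q) (sq_nonneg (|δ|))]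
  have h2 : δ ≤ (4 * |δ|) * d + (4 * |δ|) ^ 2 * q := by
    nlinarith [le_abs_self δ, mul_le_mul_of_nonneg_left (neg_abs_le q) (sq_nonneg (|δ|))]
  obtain ⟨s, hs, hs2⟩ := intermediate_value_Icc (by linarith) hc ⟨h1, h2⟩
  exact ⟨s, abs_le.2 ⟨hs.1, hs.2⟩, hs2⟩

lemma first_order {s0 x k C : ℝ} (hs0 : 0 < s0)
    (h : ∀ s, |s| ≤ s0 → 0 ≤ s * x + k * |s| + C * s ^ 2) : |x| ≤ k := by
  have key : ∀ y, (∀ s, 0 < s → s ≤ s0 → 0 ≤ s * y + k * s + C * s ^ 2) → -y ≤ k := by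
    intro y hy
    have hl : Tendsto (fun s : ℝ => y + k + C * s) (𝓝[>] 0) (𝓝 (y + k + C * 0)) := by
      refine Tendsto.mono_left ?_ nhdsWithin_le_nhds
      exact (Continuous.tendsto (by fun_prop) 0)
    have := ge_of_tendsto hl (b := 0) (by
      filter_upwards [Ioc_mem_nhdsGT hs0] with s hs
      have := hy s hs.1 hs.2
      by_contra hneg
      push Not at hneg
      nlinarith [hs.1])
    linarith
  have h1 := key x (fun s h1 h2 => by
    have := h s (by rwa [abs_of_pos h1]); rwa [abs_of_pos h1] at this)
  have h2 := key (-x) (fun s h1 h2 => by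
    have := h (-s) (by rwa [abs_neg, abs_of_pos h1]); rw [abs_neg, abs_of_pos h1] at this
    linarith)
  exact abs_le.2 ⟨by linarith, by linarith⟩

/-- extraction of a limit after recentering -/
lemma extract (hT : TwoWell W pm pp) (hL : LB W pm pp e0 C) (hR : WL W pm pp R κ) :
    ∃ η > 0, ∃ T, ∀ un vn : ℕ → ℝ → ℝ × ℝ, (∀ n, Adm W pm pp (un n) (vn n)) →
      (∀ n, En W (un n) (vn n) ≤ e0 + η) →
      ∃ τ : ℕ → ℝ, ∃ φ : ℕ → ℕ, StrictMono φ ∧ ∃ u v,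
        Conv (fun n t => un (φ n) (t + τ n)) (fun n t => vn (φ n) (t + τ n)) u v ∧
        ∀ n, Conf pm pp R T (fun t => un (φ n) (t + τ n)) := by
  obtain ⟨η, hη, T, hT0, hcf⟩ := confine hT hL hR
  refine ⟨η, hη, T, fun un vn hA hE => ?_⟩
  choose τ hτ1 hτ2 using fun n => hcf (un n) (vn n) (hA n) (hE n)
  have hen : ∀ n, ∫ t, ((1/2) * ((vn n (t + τ n)).1 ^ 2 + (vn n (t + τ n)).2 ^ 2)) ≤ e0 + η := by
    intro n
    refine le_trans ?_ (hE n)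
    rw [← Adm.En_shift (τ n)]
    have hs := (hA n).shift (τ n)
    refine integral_mono ((hs.sq1.add hs.sq2).const_mul _) hs.intDensAll fun t => ?_
    simp only [dens, Pi.add_apply]
    have := hT.nonneg (un n (t + τ n))
    linarith
  have hb1 : ∀ n, ∫ t, (vn n (t + τ n)).1 ^ 2 ≤ 2 * (e0 + η) := by
    intro n
    have hs := (hA n).shift (τ n)
    have : ∫ t, (1/2) * (vn n (t + τ n)).1 ^ 2 ≤ e0 + η := by
      refine le_trans (integral_mono (hs.sq1.const_mul _) ((hs.sq1.add hs.sq2).const_mul _) fun t => ?_) (hen n)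
      simp only [Pi.add_apply]
      nlinarith [sq_nonneg (vn n (t + τ n)).2]
    rw [integral_const_mul] at this
    linarith
  have hb2 : ∀ n, ∫ t, (vn n (t + τ n)).2 ^ 2 ≤ 2 * (e0 + η) := by
    intro n
    have hs := (hA n).shift (τ n)
    have : ∫ t, (1/2) * (vn n (t + τ n)).2 ^ 2 ≤ e0 + η := by
      refine le_trans (integral_mono (hs.sq2.const_mul _) ((hs.sq1.add hs.sq2).const_mul _) fun t => ?_) (hen n)
      simp only [Pi.add_apply]
      nlinarith [sq_nonneg (vn n (t + τ n)).1]
    rw [integral_const_mul] at this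
    linarith
  obtain ⟨φ, hφ, u, v, hc⟩ := compact (un := fun n t => un n (t + τ n)) (vn := fun n t => vn n (t + τ n))
    (fun n => ((hA n).shift (τ n)).toArc) hb1 hb2 (t0 := T) (K := ‖pp‖ + R) (fun n => by
      have h1 := hτ2 n T le_rfl
      have h2 := norm_add_le (un n (T + τ n) - pp) pp
      simp only [sub_add_cancel] at h2
      linarith)
  exact ⟨fun n => τ (φ n), φ, hφ, u, v, hc, fun n => ⟨hτ1 _, hτ2 _⟩⟩

lemma star (hT : TwoWell W pm pp) (hL : LB W pm pp e0 C) (hR : WL W pm pp R κ) {c : ℝ} (hc0 : 0 < c) :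
    ∃ η > 0, ∃ δ0 > 0, ∀ u v a, Adm W pm pp u v → HasArea u v a → En W u v ≤ e0 + η →
      ∀ δ, |δ| ≤ δ0 → ∃ u' v', Adm W pm pp u' v' ∧ HasArea u' v' (a + δ) ∧
        En W u' v' ≤ En W u v + c * |δ| := by
  have hWc := hT.smooth.continuous
  have hW := hT.nonneg
  obtain ⟨η, hη, T, hex⟩ := extract hT hL hR
  by_contra hcon
  push Not at hcon
  have hpos : ∀ n : ℕ, (0:ℝ) < 1 / ((n:ℝ) + 1) := fun n => by positivity
  choose un vn an hA har hE δ hδ hbad using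
    fun n : ℕ => hcon (η * (1 / ((n:ℝ) + 1))) (mul_pos hη (hpos n)) (1 / ((n:ℝ)+1)) (hpos n)
  have hE' : ∀ n, En W (un n) (vn n) ≤ e0 + η := fun n => by
    refine (hE n).trans ?_
    have : 1 / ((n:ℝ) + 1) ≤ 1 := by
      rw [div_le_one (by positivity)]; linarith [Nat.cast_nonneg (α := ℝ) n]
    nlinarith
  obtain ⟨τ, φ, hφ, u, v, hcv, hcf⟩ := hex un vn hA hE'
  have hlim0 : Tendsto (fun n : ℕ => 1 / (((φ n : ℕ):ℝ) + 1)) atTop (𝓝 0) :=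
    (tendsto_one_div_add_atTop_nhds_zero_nat (𝕜 := ℝ)).comp hφ.tendsto_atTop
  have hHn : Tendsto (fun n : ℕ => e0 + η * (1 / (((φ n : ℕ):ℝ) + 1))) atTop (𝓝 e0) := by
    simpa using (hlim0.const_mul η).const_add e0
  have hA' : ∀ n, Adm W pm pp (fun t => un (φ n) (t + τ n)) (fun t => vn (φ n) (t + τ n)) :=
    fun n => (hA (φ n)).shift (τ n)
  obtain ⟨hadm, hle⟩ := limit_adm hT hR hcv hA' hcf (Hn := fun n : ℕ => e0 + η * (1 / (((φ n : ℕ):ℝ) + 1)))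
    (fun n => by rw [Adm.En_shift]; exact hE (φ n)) hHn
  obtain ⟨ψ, N, hψ, hdA⟩ := nonvanish hT.wells_ne hadm
  obtain ⟨K, hK, hK'⟩ := hcv.lb' N
  obtain ⟨C1, hC1, s0, hs0, hvar⟩ := hψ.var_en (pm := pm) (pp := pp) hT.smooth K
  have hdH : dH W u v ψ = 0 := by
    have : |dH W u v ψ| ≤ 0 := by
      refine first_order (C := C1) hs0 fun s hs => ?_
      have h1 := hvar u v hadm hK' s hs
      have h2 := (hψ.adm hWc hadm s).en_lower hW hL
      linarith
    exact abs_nonpos_iff.1 this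
  have l1 := hψ.conv_dH hT.smooth hcv
  have l2 := hψ.conv_dA hcv
  rw [hdH] at l1
  rw [hdA] at l2
  have l3 : Tendsto (fun n => |δ (φ n)|) atTop (𝓝 0) :=
    squeeze_zero (fun n => abs_nonneg _) (fun n => hδ (φ n)) hlim0
  have l1' := l1.abs
  rw [abs_zero] at l1'
  have e1 := l1'.eventually_le_const (show (0:ℝ) < c / 8 by positivity)
  have e2 := l2.eventually_const_le (show (1/2:ℝ) < 1 by norm_num)
  have l4 := l3.const_mul (16 * |qA ψ|)
  have l5 := l3.const_mul (32 * C1)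
  have l6 := l3.const_mul 4
  rw [mul_zero] at l4 l5 l6
  obtain ⟨n, e1, e2, e4, e5, e6⟩ := (e1.and (e2.and ((l4.eventually_le_const one_pos).and
    ((l5.eventually_le_const hc0).and (l6.eventually_le_const hs0))))).exists
  obtain ⟨s, hs, hs2⟩ := solve (δ := δ (φ n)) (q := qA ψ) e2 (by linarith)
  have h1 := hvar _ _ (hA' n) (hK n) s (hs.trans e6)
  have h2 := hψ.adm hWc (hA' n) s
  have h3 := hψ.area (hA' n).toArc ((har (φ n)).shift (τ n)) s
  rw [hs2] at h3
  have h4 := hbad (φ n) _ _ h2 h3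
  rw [Adm.En_shift] at h1
  have hd0 := abs_nonneg (δ (φ n))
  have h5 : s * dH W (fun t => un (φ n) (t + τ n)) (fun t => vn (φ n) (t + τ n)) ψ ≤ c / 2 * |δ (φ n)| := by
    refine (le_abs_self _).trans ?_
    rw [abs_mul]
    calc _ ≤ (4 * |δ (φ n)|) * (c / 8) := mul_le_mul hs e1 (abs_nonneg _) (by positivity)
      _ = _ := by ring
  have h6 : C1 * s ^ 2 ≤ c / 2 * |δ (φ n)| := by
    have : s ^ 2 ≤ (4 * |δ (φ n)|) ^ 2 := sq_le_sq' (by linarith [neg_abs_le s]) (by linarith [le_abs_self s])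
    nlinarith
  linarith

end TW

namespace TW
variable {W : ℝ × ℝ → ℝ} {pm pp : ℝ × ℝ} {u v : ℝ → ℝ × ℝ} {e0 C R κ : ℝ}

/-- upper bound: almost optimal curves with area near `A0` -/
def UB (W : ℝ × ℝ → ℝ) (pm pp : ℝ × ℝ) (e0 A0 : ℝ) : Prop :=
  ∀ ε > 0, ∃ u v a, Adm W pm pp u v ∧ HasArea u v a ∧ En W u v ≤ e0 + ε ∧ |a - A0| ≤ ε

lemma minimizer (hT : TwoWell W pm pp) (hL : LB W pm pp e0 C) (hR : WL W pm pp R κ) {c : ℝ}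
    (hc : c ^ 2 = 2 * κ) (hc0 : 0 < c) {A0 : ℝ} (hU : UB W pm pp e0 A0) :
    ∃ ε1 > 0, ∀ A, |A - A0| < ε1 → ∃ U V, Adm W pm pp U V ∧ HasArea U V A ∧
      (∀ u v, Adm W pm pp u v → HasArea u v A → En W U V ≤ En W u v) ∧
      En W U V ≤ e0 + c / 2 * |A - A0| ∧
      ∀ φ N, Test φ N → |dH W U V φ| ≤ c / 2 * |dA U V φ| := by
  have hWc := hT.smooth.continuous
  have hW := hT.nonneg
  obtain ⟨η1, hη1, T, hex⟩ := extract hT hL hR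
  obtain ⟨η2, hη2, δ0, hδ0, hst⟩ := star hT hL hR (c := c / 2) (by positivity)
  set η := min η1 η2 with hηd
  have hη : 0 < η := lt_min hη1 hη2
  have hηa : η ≤ η1 := min_le_left _ _
  have hηb : η ≤ η2 := min_le_right _ _
  refine ⟨min (δ0 / 2) (η / c), lt_min (by positivity) (by positivity), fun A hA => ?_⟩
  have hA1 : |A - A0| < δ0 / 2 := hA.trans_le (min_le_left _ _)
  have hA2 : c / 2 * |A - A0| ≤ η / 2 := by
    have : |A - A0| < η / c := hA.trans_le (min_le_right _ _)
    rw [lt_div_iff₀ hc0] at this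
    linarith
  have hAn := abs_nonneg (A - A0)
  set S : Set ℝ := {x | ∃ u v, Adm W pm pp u v ∧ HasArea u v A ∧ En W u v = x} with hS
  have hlow : ∀ x ∈ S, e0 ≤ x := by
    rintro x ⟨u, v, h1, -, rfl⟩
    exact h1.en_lower hW hL
  have hbdd : BddBelow S := ⟨e0, hlow⟩
  have hcomp : ∀ ε, 0 < ε → ε ≤ η → ε ≤ δ0 / 2 → ∃ x ∈ S, x ≤ e0 + ε + c / 2 * (|A - A0| + ε) := by
    intro ε hε hε1 hε2
    obtain ⟨u, v, a, h1, h2, h3, h4⟩ := hU ε hε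
    have h5 : |A - a| ≤ |A - A0| + ε := by
      calc |A - a| = |(A - A0) - (a - A0)| := by ring_nf
        _ ≤ _ := (abs_sub _ _).trans (by linarith)
    obtain ⟨u', v', k1, k2, k3⟩ := hst u v a h1 h2 (by linarith) (A - a) (by linarith)
    rw [add_sub_cancel] at k2
    refine ⟨_, ⟨u', v', k1, k2, rfl⟩, ?_⟩
    have : c / 2 * |A - a| ≤ c / 2 * (|A - A0| + ε) := by gcongr
    linarith
  have hne : S.Nonempty := by
    obtain ⟨x, hx, -⟩ := hcomp (min η (δ0 / 2)) (lt_min hη (by positivity)) (min_le_left _ _) (min_le_right _ _)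
    exact ⟨x, hx⟩
  set m := sInf S with hm
  have hm1 : m ≤ e0 + c / 2 * |A - A0| := by
    have hl : Tendsto (fun ε : ℝ => e0 + ε + c / 2 * (|A - A0| + ε)) (𝓝[>] 0)
        (𝓝 (e0 + 0 + c / 2 * (|A - A0| + 0))) :=
      (Continuous.tendsto (by fun_prop) 0).mono_left nhdsWithin_le_nhds
    have := ge_of_tendsto hl (b := m) (by
      filter_upwards [Ioc_mem_nhdsGT (lt_min hη (half_pos hδ0))] with ε hε
      obtain ⟨x, hx, hx2⟩ := hcomp ε hε.1 (hε.2.trans (min_le_left _ _)) (hε.2.trans (min_le_right _ _))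
      exact (csInf_le hbdd hx).trans hx2)
    simpa using this
  have hseq : ∀ n : ℕ, ∃ u v, Adm W pm pp u v ∧ HasArea u v A ∧ En W u v ≤ m + η / 2 * (1 / ((n:ℝ) + 1)) := by
    intro n
    obtain ⟨x, ⟨u, v, h1, h2, rfl⟩, h3⟩ := exists_lt_of_csInf_lt hne
      (show sInf S < m + η / 2 * (1 / ((n:ℝ) + 1)) from lt_add_of_pos_right _ (by positivity))
    exact ⟨u, v, h1, h2, h3.le⟩
  choose un vn h1 h2 h3 using hseq
  have h3' : ∀ n, En W (un n) (vn n) ≤ e0 + η1 := fun n => by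
    refine (h3 n).trans ?_
    have : 1 / ((n:ℝ) + 1) ≤ 1 := by
      rw [div_le_one (by positivity)]; linarith [Nat.cast_nonneg (α := ℝ) n]
    nlinarith
  obtain ⟨τ, φ, hφ, u, v, hcv, hcf⟩ := hex un vn h1 h3'
  have hlim0 : Tendsto (fun n : ℕ => 1 / (((φ n : ℕ):ℝ) + 1)) atTop (𝓝 0) :=
    (tendsto_one_div_add_atTop_nhds_zero_nat (𝕜 := ℝ)).comp hφ.tendsto_atTop
  have hHn : Tendsto (fun n : ℕ => m + η / 2 * (1 / (((φ n : ℕ):ℝ) + 1))) atTop (𝓝 m) := by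
    simpa using (hlim0.const_mul (η / 2)).const_add m
  obtain ⟨hadm, a, ha, hca⟩ := limit hT hR hc hc0 hcv (fun n => (h1 (φ n)).shift (τ n)) hcf
    (Hn := fun n : ℕ => m + η / 2 * (1 / (((φ n : ℕ):ℝ) + 1)))
    (fun n => by rw [Adm.En_shift]; exact h3 (φ n)) hHn (An := fun _ => A) (A := A)
    (fun n => (h2 (φ n)).shift (τ n)) tendsto_const_nhds
  have hge := hadm.en_lower hW hL
  have haA := abs_nonneg (A - a)
  have hda : |A - a| ≤ δ0 := by
    have : c * |A - a| ≤ c * (1 / 2 * |A - A0|) := by linarith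
    have := le_of_mul_le_mul_left this hc0
    linarith
  have hEu : En W u v ≤ m := by nlinarith
  have haeq : a = A := by
    obtain ⟨u', v', k1, k2, k3⟩ := hst u v a hadm ha (by linarith) (A - a) hda
    rw [add_sub_cancel] at k2
    have := csInf_le hbdd (show En W u' v' ∈ S from ⟨u', v', k1, k2, rfl⟩)
    have h0 : c * |A - a| ≤ 0 := by linarith
    have : |A - a| ≤ 0 := by
      by_contra hh
      push Not at hh
      nlinarith [mul_pos hc0 hh]
    have := abs_nonpos_iff.1 this
    linarith
  rw [haeq] at ha
  have hmin : ∀ u' v', Adm W pm pp u' v' → HasArea u' v' A → En W u v ≤ En W u' v' :=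
    fun u' v' k1 k2 => hEu.trans (csInf_le hbdd ⟨u', v', k1, k2, rfl⟩)
  refine ⟨u, v, hadm, ha, hmin, hEu.trans hm1, fun ψ N hψ => ?_⟩
  obtain ⟨K, hK⟩ := (isCompact_Icc (a := -N) (b := N)).exists_bound_of_continuousOn hadm.cont.continuousOn
  obtain ⟨C1, hC1, s0, hs0, hvar⟩ := hψ.var_en (pm := pm) (pp := pp) hT.smooth K
  have hl1 : ∀ᶠ s : ℝ in 𝓝 0, s * dH W u v ψ + C1 * s ^ 2 < η / 2 :=
    (Continuous.tendsto' (by fun_prop) 0 0 (by simp)).eventually_lt_const (half_pos hη)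
  have hl2 : ∀ᶠ s : ℝ in 𝓝 0, |-(s * dA u v ψ + s ^ 2 * qA ψ)| < δ0 :=
    (Continuous.tendsto' (by fun_prop) 0 0 (by simp)).eventually_lt_const hδ0
  obtain ⟨s1, hs1, hss⟩ := Metric.eventually_nhds_iff.1 (hl1.and hl2)
  refine first_order (s0 := min s0 (s1 / 2)) (C := C1 + c / 2 * |qA ψ|)
    (lt_min hs0 (half_pos hs1)) fun s hs => ?_
  obtain ⟨b1, b2⟩ := hss (y := s) (by
    rw [Real.dist_eq, sub_zero]; linarith [hs.trans (min_le_right _ _)])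
  have b3 := hvar u v hadm (fun t ht => hK t (abs_le.1 ht)) s (hs.trans (min_le_left _ _))
  obtain ⟨u', v', k1, k2, k3⟩ := hst _ _ _ (hψ.adm hWc hadm s) (hψ.area hadm.toArc ha s)
    (by linarith) _ b2.le
  rw [add_neg_cancel_right] at k2
  have k4 := hmin u' v' k1 k2
  have k5 : |-(s * dA u v ψ + s ^ 2 * qA ψ)| ≤ |s| * |dA u v ψ| + s ^ 2 * |qA ψ| := by
    rw [abs_neg]
    refine (abs_add_le _ _).trans ?_
    rw [abs_mul, abs_mul, abs_of_nonneg (sq_nonneg s)]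
  nlinarith

end TW

namespace TW
variable {W : ℝ × ℝ → ℝ} {pm pp : ℝ × ℝ} {u v : ℝ → ℝ × ℝ} {e0 C R κ : ℝ}

lemma Test.lin {φ ψ : ℝ → ℝ × ℝ} {N M : ℝ} (h : Test φ N) (k : Test ψ M) (s : ℝ)
    (hs : ContDiff ℝ (⊤ : ℕ∞) W) (hu : Arc u v) :
    (∃ K, Test (fun t => φ t + s • ψ t) K) ∧ dA u v (fun t => φ t + s • ψ t) = dA u v φ + s * dA u v ψ ∧
    dH W u v (fun t => φ t + s • ψ t) = dH W u v φ + s * dH W u v ψ := by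
  have hd : ∀ t, deriv (fun t => φ t + s • ψ t) t = deriv φ t + s • deriv ψ t := fun t =>
    (((h.cd.differentiable one_ne_zero) t).hasDerivAt.add
      (((k.cd.differentiable one_ne_zero) t).hasDerivAt.const_smul s)).deriv
  refine ⟨Test.mk' (h.cd.add (k.cd.const_smul s))
    (h.cs.add (k.cs.comp_left (g := fun z => s • z) (smul_zero _))), ?_, ?_⟩
  · have := integral_add ((h.iA1 hu).add (h.iA2 hu)) (((k.iA1 hu).add (k.iA2 hu)).const_mul s)
    rw [integral_const_mul] at this
    refine Eq.trans ?_ this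
    unfold dA
    congr 1; funext t
    simp only [hd, Pi.add_apply, Prod.fst_add, Prod.snd_add, Prod.smul_fst, Prod.smul_snd, smul_eq_mul]
    ring
  · have := integral_add (h.iH hs hu) ((k.iH hs hu).const_mul s)
    rw [integral_const_mul] at this
    refine Eq.trans ?_ this
    unfold dH
    congr 1; funext t
    simp only [hd, Prod.fst_add, Prod.snd_add, Prod.smul_fst, Prod.smul_snd, smul_eq_mul, map_add, map_smul]
    ring

lemma lagrange (hT : TwoWell W pm pp) (hu : Adm W pm pp u v) {k : ℝ}
    (hk : ∀ φ N, Test φ N → |dH W u v φ| ≤ k * |dA u v φ|) :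
    ∃ ν, |ν| ≤ k ∧ ∀ φ N, Test φ N → dH W u v φ = ν * dA u v φ := by
  obtain ⟨ψ, M, hψ, h1⟩ := nonvanish hT.wells_ne hu
  refine ⟨dH W u v ψ, by simpa [h1] using hk ψ M hψ, fun φ N hφ => ?_⟩
  obtain ⟨⟨K, hK⟩, a, b⟩ := hφ.lin hψ (-dA u v φ) hT.smooth hu.toArc
  have := hk _ _ hK
  rw [a, b, h1] at this
  simp only [mul_one, add_neg_cancel, abs_zero, mul_zero] at this
  have := abs_nonpos_iff.1 this
  linarith

lemma gradW_fderiv (p z : ℝ × ℝ) :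
    fderiv ℝ W p z = (gradW W p).1 * z.1 + (gradW W p).2 * z.2 := by
  have : z = z.1 • ((1, 0) : ℝ × ℝ) + z.2 • ((0, 1) : ℝ × ℝ) := by ext <;> simp
  conv_lhs => rw [this, map_add, map_smul, map_smul]
  simp [gradW, mul_comm]

lemma gradW_cd (hs : ContDiff ℝ (⊤ : ℕ∞) W) : ContDiff ℝ (⊤ : ℕ∞) (gradW W) := by
  have h1 : ContDiff ℝ (⊤ : ℕ∞) (fderiv ℝ W) := hs.fderiv_right (by simp)
  exact (h1.clm_apply contDiff_const).prodMk (h1.clm_apply contDiff_const)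

lemma prim_deriv {f : ℝ → ℝ} (hf : Continuous f) (c t : ℝ) :
    HasDerivAt (fun t => c + ∫ x in (0:ℝ)..t, f x) (f t) t :=
  (intervalIntegral.integral_hasDerivAt_right (hf.intervalIntegrable _ _)
      (hf.stronglyMeasurableAtFilter _ _) hf.continuousAt).const_add c

lemma hd_fst {u : ℝ → ℝ × ℝ} {w : ℝ × ℝ} {t : ℝ} (h : HasDerivAt u w t) :
    HasDerivAt (fun t => (u t).1) w.1 t := by
  have := (ContinuousLinearMap.fst ℝ ℝ ℝ).hasFDerivAt.comp_hasDerivAt t h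
  exact this

lemma hd_snd {u : ℝ → ℝ × ℝ} {w : ℝ × ℝ} {t : ℝ} (h : HasDerivAt u w t) :
    HasDerivAt (fun t => (u t).2) w.2 t := by
  have := (ContinuousLinearMap.snd ℝ ℝ ℝ).hasFDerivAt.comp_hasDerivAt t h
  exact this

lemma regular (hT : TwoWell W pm pp) (hu : Adm W pm pp u v) {ν : ℝ}
    (hk : ∀ φ N, Test φ N → dH W u v φ = ν * dA u v φ) :
    ∃ w, (∀ᵐ t, v t = w t) ∧ (∀ t, HasDerivAt u (w t) t) ∧
      ∀ t, HasDerivAt w (gradW W (u t) - ν • Jv (w t)) t := by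
  have hg := (gradW_cd hT.smooth).continuous.comp hu.cont
  have hg1 : Continuous (fun t => (gradW W (u t)).1) := continuous_fst.comp hg
  have hg2 : Continuous (fun t => (gradW W (u t)).2) := continuous_snd.comp hg
  have c1 := hu.cont1
  obtain ⟨c, e2⟩ := dbr (f := fun t => (v t).2 - ν * (u t).1) (G := fun t => (gradW W (u t)).2)
    ((hu.mem2.locallyIntegrable (by norm_num)).sub (c1.const_mul ν).locallyIntegrable)
    hg2 (fun ψ hψ hψs => by
      have t1 := test2 hψ hψs
      obtain ⟨N, hN⟩ := Test.mk' t1.1 t1.2.1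
      have h1 := hk _ N hN
      have i1 := (hN.iH hT.smooth hu.toArc)
      have i2 := ((hN.iA1 hu.toArc).add (hN.iA2 hu.toArc)).const_mul ν
      have h2 : (dH W u v fun t => (0, ψ t)) - ν * dA u v (fun t => (0, ψ t)) = 0 := by linarith
      unfold dA dH at h2
      rw [← integral_const_mul] at h2
      refine Eq.trans ?_ ((integral_sub i1 i2).trans h2)
      congr 1; funext t
      simp only [t1.2.2, gradW_fderiv, Pi.add_apply]; ring)
  set w2 : ℝ → ℝ := fun t => (c + ∫ x in (0:ℝ)..t, (gradW W (u x)).2) + ν * (u t).1 with hw2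
  have hp2 : Continuous (fun t => c + ∫ x in (0:ℝ)..t, (gradW W (u x)).2) :=
    continuous_iff_continuousAt.2 fun t => (prim_deriv hg2 c t).continuousAt
  have hw2c : Continuous w2 := hp2.add (c1.const_mul ν)
  have e2' : ∀ᵐ t, (v t).2 = w2 t := by
    filter_upwards [e2] with t ht
    simp only [hw2]; linarith
  have hG1 : Continuous (fun t => (gradW W (u t)).1 - ν * w2 t) := hg1.sub (hw2c.const_mul ν)
  obtain ⟨c', e1⟩ := dbr (f := fun t => (v t).1) (G := fun t => (gradW W (u t)).1 - ν * w2 t)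
    (hu.mem1.locallyIntegrable (by norm_num)) hG1 (fun ψ hψ hψs => by
      have t1 := test1 hψ hψs
      obtain ⟨N, hN⟩ := Test.mk' t1.1 t1.2.1
      have h1 := hk _ N hN
      have i1 := (hN.iH hT.smooth hu.toArc)
      have i2 := ((hN.iA1 hu.toArc).add (hN.iA2 hu.toArc)).const_mul ν
      have h2 : (dH W u v fun t => (ψ t, 0)) - ν * dA u v (fun t => (ψ t, 0)) = 0 := by linarith
      unfold dA dH at h2
      rw [← integral_const_mul] at h2
      refine Eq.trans ?_ ((integral_sub i1 i2).trans h2)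
      refine integral_congr_ae ?_
      filter_upwards [e2'] with t ht
      simp only [t1.2.2, gradW_fderiv, Pi.add_apply, ht]; ring)
  set w1 : ℝ → ℝ := fun t => c' + ∫ x in (0:ℝ)..t, ((gradW W (u x)).1 - ν * w2 x) with hw1
  have hw1c : Continuous w1 :=
    continuous_iff_continuousAt.2 fun t => (prim_deriv hG1 c' t).continuousAt
  have hae : ∀ᵐ t, v t = (w1 t, w2 t) := by
    filter_upwards [e1, e2'] with t h1 h2 using Prod.ext h1 h2
  have hwc : Continuous (fun t => (w1 t, w2 t)) := hw1c.prodMk hw2c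
  have hud : ∀ t, HasDerivAt u (w1 t, w2 t) t := by
    intro t
    have : u = fun t => u 0 + ∫ x in (0:ℝ)..t, (w1 x, w2 x) := by
      funext t
      have h1 := hu.ftc 0 t
      rw [intervalIntegral.integral_congr_ae (g := fun x => (w1 x, w2 x))
        (by filter_upwards [hae] with t ht _ using ht)] at h1
      rw [← h1]; abel
    rw [this]
    exact (intervalIntegral.integral_hasDerivAt_right (hwc.intervalIntegrable _ _)
      (hwc.stronglyMeasurableAtFilter _ _) hwc.continuousAt).const_add _
  refine ⟨fun t => (w1 t, w2 t), hae, hud, fun t => ?_⟩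
  have d1 := prim_deriv hG1 c' t
  have d2 : HasDerivAt w2 ((gradW W (u t)).2 + ν * w1 t) t :=
    (prim_deriv hg2 c t).add ((hd_fst (hud t)).const_mul ν)
  convert d1.prodMk d2 using 1
  ext <;> simp [Jv]

lemma smooth_sol (hs : ContDiff ℝ (⊤ : ℕ∞) W) {ν : ℝ} {w : ℝ → ℝ × ℝ}
    (h1 : ∀ t, HasDerivAt u (w t) t) (h2 : ∀ t, HasDerivAt w (gradW W (u t) - ν • Jv (w t)) t) :
    ContDiff ℝ (⊤ : ℕ∞) u := by
  have e1 : deriv u = w := funext fun t => (h1 t).deriv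
  have e2 : deriv w = fun t => gradW W (u t) - ν • Jv (w t) := funext fun t => (h2 t).deriv
  have key : ∀ n : ℕ, ContDiff ℝ n u ∧ ContDiff ℝ n w := by
    intro n
    induction n with
    | zero =>
      refine ⟨contDiff_zero.2 ?_, contDiff_zero.2 ?_⟩
      · exact continuous_iff_continuousAt.2 fun t => (h1 t).continuousAt
      · exact continuous_iff_continuousAt.2 fun t => (h2 t).continuousAt
    | succ n ih =>
      have g1 : ContDiff ℝ n (gradW W) := (gradW_cd hs).of_le (by exact_mod_cast le_top)
      push_cast
      rw [contDiff_succ_iff_deriv, contDiff_succ_iff_deriv, e1, e2]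
      refine ⟨⟨fun t => (h1 t).differentiableAt, by simp, ih.2⟩, fun t => (h2 t).differentiableAt, by simp, ?_⟩
      refine (g1.comp ih.1).sub ((ContDiff.prodMk ?_ ?_).const_smul ν)
      · exact contDiff_snd.comp ih.2
      · exact (contDiff_fst.comp ih.2).neg
  exact contDiff_infty.2 fun n => (key n).1

end TW

namespace TW
variable {W : ℝ × ℝ → ℝ} {pm pp : ℝ × ℝ} {u v : ℝ → ℝ × ℝ} {e0 C R κ : ℝ}

lemma equip (hT : TwoWell W pm pp) (hu : Adm W pm pp u v) {ν : ℝ} {w : ℝ → ℝ × ℝ}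
    (hae : ∀ᵐ t, v t = w t)
    (h1 : ∀ t, HasDerivAt u (w t) t) (h2 : ∀ t, HasDerivAt w (gradW W (u t) - ν • Jv (w t)) t) (t : ℝ) :
    (w t).1 ^ 2 + (w t).2 ^ 2 = 2 * W (u t) := by
  have hd : ∀ t, HasDerivAt (fun t => (w t).1 ^ 2 + (w t).2 ^ 2 - 2 * W (u t)) 0 t := by
    intro t
    have a1 := (hd_fst (h2 t)).pow 2
    have a2 := (hd_snd (h2 t)).pow 2
    have a3 := (((hT.smooth.differentiable (by simp)) (u t)).hasFDerivAt.comp_hasDerivAt t (h1 t)).const_mul 2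
    refine HasDerivAt.congr_deriv ((a1.add a2).sub a3) ?_
    rw [gradW_fderiv]
    simp [Jv]; ring
  have hc : ∀ s, (w s).1 ^ 2 + (w s).2 ^ 2 - 2 * W (u s) = (w t).1 ^ 2 + (w t).2 ^ 2 - 2 * W (u t) :=
    fun s => is_const_of_deriv_eq_zero (fun s => (hd s).differentiableAt) (fun s => (hd s).deriv) s t
  have hi : Integrable (fun s => (w s).1 ^ 2 + (w s).2 ^ 2 - 2 * W (u s)) := by
    refine (Integrable.congr (hu.sq1.add hu.sq2) ?_).sub (hu.iW.const_mul 2)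
    filter_upwards [hae] with s hs
    simp [hs]
  simp_rw [hc] at hi
  rw [integrable_const_iff] at hi
  rcases hi with hi | hi
  · linarith
  · have := hi.measure_univ_lt_top
    simp at this

lemma decay (hT : TwoWell W pm pp) (hR : WL W pm pp R κ) {p : ℝ × ℝ} (hp : p = pm ∨ p = pp) {ν : ℝ}
    {w : ℝ → ℝ × ℝ} (hν : ν ^ 2 ≤ 2 * κ)
    (h1 : ∀ t, HasDerivAt u (w t) t) (h2 : ∀ t, HasDerivAt w (gradW W (u t) - ν • Jv (w t)) t)
    (he : ∀ t, (w t).1 ^ 2 + (w t).2 ^ 2 = 2 * W (u t)) (hl : Tendsto u atTop (𝓝 p)) :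
    ∃ T, IntegrableOn w (Ioi T) ∧ MemLp (fun t => u t - p) 2 (volume.restrict (Ioi T)) := by
  obtain ⟨hR0, hκ, hR⟩ := hR
  have hWp : W p = 0 := (hT.zeroSet p).2 hp
  have hWc := hT.smooth.continuous
  have hgp : fderiv ℝ W p = 0 := by
    refine IsLocalMin.fderiv_eq_zero (Eventually.of_forall fun x => ?_)
    rw [hWp]; exact hT.nonneg x
  obtain ⟨C, hC, hq⟩ := quad hT.smooth ‖p‖
  have hr : 0 < min R 1 := lt_min hR0 one_pos
  obtain ⟨T, hTb⟩ := eventually_atTop.1 (hl.eventually (Metric.closedBall_mem_nhds p hr))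
  have hb : ∀ t ≥ T, ‖u t - p‖ ≤ min R 1 := fun t ht => by simpa [dist_eq_norm] using hTb t ht
  set f : ℝ → ℝ := fun t => ((u t).1 - p.1) ^ 2 + ((u t).2 - p.2) ^ 2 with hf
  set f1 : ℝ → ℝ := fun t => 2 * (((u t).1 - p.1) * (w t).1 + ((u t).2 - p.2) * (w t).2) with hf1
  set a : ℝ → ℝ × ℝ := fun t => gradW W (u t) - ν • Jv (w t) with ha
  set f2 : ℝ → ℝ := fun t => 2 * ((w t).1 * (w t).1 + ((u t).1 - p.1) * (a t).1 +
    ((w t).2 * (w t).2 + ((u t).2 - p.2) * (a t).2)) with hf2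
  have d0 : ∀ t, HasDerivAt f (f1 t) t := fun t => by
    have x1 := (hd_fst (h1 t)).sub_const p.1
    have x2 := (hd_snd (h1 t)).sub_const p.2
    refine HasDerivAt.congr_deriv ((x1.pow 2).add (x2.pow 2)) ?_
    simp [hf1]; ring
  have d1 : ∀ t, HasDerivAt f1 (f2 t) t := fun t => by
    have x1 := (hd_fst (h1 t)).sub_const p.1
    have x2 := (hd_snd (h1 t)).sub_const p.2
    exact ((x1.mul (hd_fst (h2 t))).add (x2.mul (hd_snd (h2 t)))).const_mul 2
  have hf2ge : ∀ t ≥ T, κ * f t ≤ f2 t := by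
    intro t ht
    have k1 := (hR p hp (u t) ((hb t ht).trans (min_le_left _ _))).2
    rw [gradW_fderiv] at k1
    simp only [Prod.fst_sub, Prod.snd_sub] at k1
    simp only [hf, hf2, ha, Jv, Prod.fst_sub, Prod.snd_sub, Prod.smul_fst, Prod.smul_snd, smul_eq_mul]
    nlinarith [sq_nonneg ((w t).1 + ν * ((u t).2 - p.2) / 2), sq_nonneg ((w t).2 - ν * ((u t).1 - p.1) / 2),
      mul_nonneg (sub_nonneg.2 hν) (sq_nonneg ((u t).1 - p.1)), mul_nonneg (sub_nonneg.2 hν) (sq_nonneg ((u t).2 - p.2)),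
      mul_nonneg hκ.le (sq_nonneg ((u t).1 - p.1)), mul_nonneg hκ.le (sq_nonneg ((u t).2 - p.2))]
  have hf0 : Tendsto f atTop (𝓝 0) := by
    have : Continuous (fun x : ℝ × ℝ => (x.1 - p.1) ^ 2 + (x.2 - p.2) ^ 2) := by fun_prop
    have := (this.tendsto p).comp hl
    have e : (p.1 - p.1) ^ 2 + (p.2 - p.2) ^ 2 = 0 := by ring
    rw [e] at this
    exact this
  have hW0 : Tendsto (fun t => W (u t)) atTop (𝓝 0) := by
    have := (hWc.tendsto p).comp hl
    rwa [hWp] at this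
  have hf10 : Tendsto f1 atTop (𝓝 0) := by
    have hs : Tendsto (fun t => f t + 2 * W (u t)) atTop (𝓝 0) := by
      simpa using hf0.add (hW0.const_mul 2)
    refine squeeze_zero_norm (fun t => ?_) hs
    rw [Real.norm_eq_abs, ← he t, abs_le]
    simp only [hf1, hf]
    constructor <;> nlinarith [sq_nonneg ((u t).1 - p.1 + (w t).1), sq_nonneg ((u t).2 - p.2 + (w t).2),
      sq_nonneg ((u t).1 - p.1 - (w t).1), sq_nonneg ((u t).2 - p.2 - (w t).2)]
  set μ := Real.sqrt κ with hμ
  have hμ0 : 0 < μ := Real.sqrt_pos.2 hκ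
  have hμ2 : μ ^ 2 = κ := Real.sq_sqrt hκ.le
  have dexp : ∀ (k t : ℝ), HasDerivAt (fun t => Real.exp (k * t)) (Real.exp (k * t) * k) t := fun k t => by
    have := ((hasDerivAt_id t).const_mul k).exp
    simpa using this
  have dG : ∀ t, HasDerivAt (fun t => Real.exp (-μ * t) * (f1 t + μ * f t))
      (Real.exp (-μ * t) * (f2 t - μ ^ 2 * f t)) t := fun t => by
    refine HasDerivAt.congr_deriv ((dexp (-μ) t).mul ((d1 t).add ((d0 t).const_mul μ))) ?_
    simp; ring
  have dK : ∀ t, HasDerivAt (fun t => Real.exp (μ * t) * f t)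
      (Real.exp (μ * t) * (f1 t + μ * f t)) t := fun t => by
    refine HasDerivAt.congr_deriv ((dexp μ t).mul (d0 t)) ?_
    ring
  have hG0 : Tendsto (fun t => Real.exp (-μ * t) * (f1 t + μ * f t)) atTop (𝓝 0) := by
    have e1 : Tendsto (fun t => Real.exp (-μ * t)) atTop (𝓝 0) :=
      Real.tendsto_exp_atBot.comp (tendsto_id.const_mul_atTop_of_neg (neg_neg_of_pos hμ0))
    simpa using e1.mul (hf10.add (hf0.const_mul μ))
  have hGm : MonotoneOn (fun t => Real.exp (-μ * t) * (f1 t + μ * f t)) (Ici T) := by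
    refine monotoneOn_of_deriv_nonneg (convex_Ici T) (fun t _ => (dG t).continuousAt.continuousWithinAt)
      (fun t _ => (dG t).differentiableAt.differentiableWithinAt) fun t ht => ?_
    rw [(dG t).deriv, hμ2]
    rw [interior_Ici] at ht
    exact mul_nonneg (Real.exp_pos _).le (sub_nonneg.2 (hf2ge t (le_of_lt ht)))
  have hneg : ∀ t ≥ T, f1 t + μ * f t ≤ 0 := by
    intro t ht
    have := ge_of_tendsto hG0 (b := Real.exp (-μ * t) * (f1 t + μ * f t)) (by
      filter_upwards [eventually_ge_atTop t] with s hs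
      exact hGm ht (le_trans ht hs) hs)
    by_contra hh
    push Not at hh
    have := mul_pos (Real.exp_pos (-μ * t)) hh
    linarith
  have hKm : AntitoneOn (fun t => Real.exp (μ * t) * f t) (Ici T) := by
    refine antitoneOn_of_deriv_nonpos (convex_Ici T) (fun t _ => (dK t).continuousAt.continuousWithinAt)
      (fun t _ => (dK t).differentiableAt.differentiableWithinAt) fun t ht => ?_
    rw [(dK t).deriv]
    rw [interior_Ici] at ht
    exact mul_nonpos_of_nonneg_of_nonpos (Real.exp_pos _).le (hneg t (le_of_lt ht))
  set D := Real.exp (μ * T) * f T with hD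
  have hD0 : 0 ≤ D := by positivity
  have hfb : ∀ t ≥ T, f t ≤ D * Real.exp (-μ * t) := by
    intro t ht
    have := hKm (self_mem_Ici) ht ht
    have e : Real.exp (μ * t) * Real.exp (-μ * t) = 1 := by rw [← Real.exp_add]; simp
    calc f t = (Real.exp (μ * t) * f t) * Real.exp (-μ * t) := by
          linear_combination (-f t) * e
      _ ≤ _ := by gcongr
  have hwb : ∀ t ≥ T, ‖w t‖ ≤ Real.sqrt (2 * C * D) * Real.exp (-(μ / 2) * t) := by
    intro t ht
    have k1 := hq p (u t - p) le_rfl ((hb t ht).trans (min_le_right _ _))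
    rw [add_sub_cancel, hWp, hgp] at k1
    have k2 := normsq_le (u t - p)
    have k3 := normsq_le (w t)
    rw [he t] at k3
    have k4 := hfb t ht
    have k5 : ‖w t‖ ^ 2 ≤ (2 * C * D) * Real.exp (-μ * t) := by
      have : C * ‖u t - p‖ ^ 2 ≤ C * (D * Real.exp (-μ * t)) := by
        gcongr; exact k2.trans k4
      simp only [zero_apply] at k1
      linarith
    refine le_of_sq_le_sq (k5.trans (le_of_eq ?_)) (by positivity)
    rw [mul_pow, Real.sq_sqrt (by positivity), ← Real.exp_nat_mul]
    congr 2; push_cast; ring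
  have hwc : Continuous w := continuous_iff_continuousAt.2 fun t => (h2 t).continuousAt
  have huc : Continuous u := continuous_iff_continuousAt.2 fun t => (h1 t).continuousAt
  refine ⟨T, ?_, ?_⟩
  · refine Integrable.mono' ((exp_neg_integrableOn_Ioi T (half_pos hμ0)).const_mul (Real.sqrt (2 * C * D)))
      hwc.aestronglyMeasurable ?_
    filter_upwards [ae_restrict_mem measurableSet_Ioi] with t ht
    exact hwb t (le_of_lt ht)
  · rw [memLp_two_iff_integrable_sq_norm (by fun_prop)]
    refine Integrable.mono' ((exp_neg_integrableOn_Ioi T hμ0).const_mul D) (by fun_prop) ?_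
    filter_upwards [ae_restrict_mem measurableSet_Ioi] with t ht
    rw [Real.norm_of_nonneg (by positivity)]
    exact (normsq_le (u t - p)).trans (hfb t (le_of_lt ht))

end TW

namespace TW
variable {W : ℝ × ℝ → ℝ} {pm pp : ℝ × ℝ} {u v : ℝ → ℝ × ℝ} {e0 C R κ : ℝ}

lemma tails (hT : TwoWell W pm pp) (hR : WL W pm pp R κ) {p : ℝ × ℝ} (hp : p = pm ∨ p = pp) {ν : ℝ}
    {w : ℝ → ℝ × ℝ} (hν : ν ^ 2 ≤ 2 * κ)
    (h1 : ∀ t, HasDerivAt u (w t) t) (h2 : ∀ t, HasDerivAt w (gradW W (u t) - ν • Jv (w t)) t)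
    (he : ∀ t, (w t).1 ^ 2 + (w t).2 ^ 2 = 2 * W (u t)) (hl : Tendsto u atTop (𝓝 p))
    {g : ℝ → ℝ × ℝ} (hg : ∀ᶠ y in atTop, g y = p) :
    ∃ T, IntegrableOn (fun t => (u t).1 * (w t).2) (Ioi T) ∧
      IntegrableOn (fun t => ‖u t - g t‖ ^ 2) (Ioi T) := by
  obtain ⟨T1, i1, i2⟩ := decay hT hR hp hν h1 h2 he hl
  obtain ⟨T2, hT2⟩ := eventually_atTop.1 ((hl.eventually (Metric.closedBall_mem_nhds p one_pos)).and hg)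
  have hwc : Continuous w := continuous_iff_continuousAt.2 fun t => (h2 t).continuousAt
  have huc : Continuous u := continuous_iff_continuousAt.2 fun t => (h1 t).continuousAt
  refine ⟨max T1 T2, ?_, ?_⟩
  · have j := (i1.mono_set (Ioi_subset_Ioi (le_max_left T1 T2)))
    refine Integrable.mono' (j.norm.const_mul (‖p‖ + 1)) (by fun_prop) ?_
    filter_upwards [ae_restrict_mem measurableSet_Ioi] with t ht
    have k := (hT2 t ((le_max_right T1 T2).trans (le_of_lt ht))).1
    rw [dist_eq_norm] at k
    have k2 : ‖u t‖ ≤ ‖p‖ + 1 := by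
      have := norm_add_le (u t - p) p
      rw [sub_add_cancel] at this
      linarith
    rw [norm_mul]
    exact mul_le_mul ((norm_fst_le _).trans k2) (norm_snd_le _) (norm_nonneg _) (by positivity)
  · have j := (memLp_two_iff_integrable_sq_norm (by fun_prop)).1 i2
    have j2 : IntegrableOn (fun t => ‖u t - p‖ ^ 2) (Ioi (max T1 T2)) :=
      IntegrableOn.mono_set j (Ioi_subset_Ioi (le_max_left T1 T2))
    refine j2.congr_fun (fun t ht => ?_) measurableSet_Ioi
    simp only
    rw [(hT2 t ((le_max_right T1 T2).trans (le_of_lt ht))).2]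

lemma glob (hT : TwoWell W pm pp) (hR : WL W pm pp R κ) (hu : Adm W pm pp u v) {ν : ℝ}
    {w : ℝ → ℝ × ℝ} (hν : ν ^ 2 ≤ 2 * κ)
    (h1 : ∀ t, HasDerivAt u (w t) t) (h2 : ∀ t, HasDerivAt w (gradW W (u t) - ν • Jv (w t)) t)
    (he : ∀ t, (w t).1 ^ 2 + (w t).2 ^ 2 = 2 * W (u t))
    {g : ℝ → ℝ × ℝ} (hgc : Continuous g) (hgp : ∀ᶠ y in atTop, g y = pp)
    (hgm : ∀ᶠ y in atBot, g y = pm) :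
    Integrable (fun t => (u t).1 * (w t).2) ∧ MemLp (fun t => u t - g t) 2 volume := by
  have hwc : Continuous w := continuous_iff_continuousAt.2 fun t => (h2 t).continuousAt
  have huc : Continuous u := continuous_iff_continuousAt.2 fun t => (h1 t).continuousAt
  obtain ⟨T1, a1, a2⟩ := tails hT hR (Or.inr rfl) hν h1 h2 he hu.lp hgp
  have n1 : ∀ t, HasDerivAt (fun t => u (-t)) (-w (-t)) t := fun t => by
    have := (h1 (-t)).scomp t (hasDerivAt_neg t)
    exact HasDerivAt.congr_deriv this (by simp)
  have n2 : ∀ t, HasDerivAt (fun t => -w (-t)) (gradW W (u (-t)) - (-ν) • Jv (-w (-t))) t := fun t => by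
    have := ((h2 (-t)).scomp t (hasDerivAt_neg t)).neg
    refine HasDerivAt.congr_deriv this ?_
    ext <;> simp [Jv]
  obtain ⟨T2, b1, b2⟩ := tails hT hR (u := fun t => u (-t)) (w := fun t => -w (-t)) (Or.inl rfl) (ν := -ν) (by simpa using hν) n1 n2
    (fun t => by simpa using he (-t)) (hu.lm.comp tendsto_neg_atTop_atBot)
    (g := fun t => g (-t)) (tendsto_neg_atTop_atBot.eventually hgm)
  have c1 : IntegrableOn (fun t => (u t).1 * (w t).2) (Iio (-T2)) := by
    have := IntegrableOn.comp_neg_Iio (c := -T2) (f := fun t => (u (-t)).1 * (-w (-t)).2) (by simpa using b1)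
    simpa using this.neg
  have c2 : IntegrableOn (fun t => ‖u t - g t‖ ^ 2) (Iio (-T2)) := by
    have := IntegrableOn.comp_neg_Iio (c := -T2) (f := fun t => ‖u (-t) - g (-t)‖ ^ 2) (by simpa using b2)
    simpa using this
  constructor
  · rw [integrable_iff_integrableAtFilter_atBot_atTop]
    exact ⟨⟨⟨_, Iio_mem_atBot _, c1⟩, ⟨_, Ioi_mem_atTop _, a1⟩⟩, Continuous.locallyIntegrable (by fun_prop)⟩
  · rw [memLp_two_iff_integrable_sq_norm (by fun_prop), integrable_iff_integrableAtFilter_atBot_atTop]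
    exact ⟨⟨⟨_, Iio_mem_atBot _, c2⟩, ⟨_, Ioi_mem_atTop _, a2⟩⟩, Continuous.locallyIntegrable (by fun_prop)⟩

lemma Arc.hfun (h : Arc u v) : Hfun W u = ∫⁻ t, ENNReal.ofReal (dens W u v t) := by
  unfold Hfun
  refine lintegral_congr_ae ?_
  filter_upwards [h.ae_deriv] with t ht
  rw [ht.deriv, enorm2_sq, dens]

lemma Adm.hfun (hW : ∀ p, 0 ≤ W p) (h : Adm W pm pp u v) : Hfun W u = ENNReal.ofReal (En W u v) := by
  rw [h.toArc.hfun, En, ofReal_integral_eq_lintegral_ofReal h.intDensAll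
    (Eventually.of_forall (dens_nonneg hW u v))]

lemma Arc.area_ae (h : Arc u v) :
    ∀ᵐ t, (u t).1 * deriv (fun z => (u z).2) t = (u t).1 * (v t).2 := by
  filter_upwards [h.ae_deriv] with t ht
  rw [(hd_snd ht).deriv]

lemma Arc.areaLine_eq (h : Arc u v) : areaLine u = ∫ t, (u t).1 * (v t).2 :=
  integral_congr_ae h.area_ae

lemma area_of_int (hi : Integrable (fun t => (u t).1 * (v t).2)) :
    HasArea u v (∫ t, (u t).1 * (v t).2) :=
  intervalIntegral_tendsto_integral hi tendsto_fst tendsto_snd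

lemma adm_of_shift (hT : TwoWell W pm pp) {g : ℝ → ℝ × ℝ} (hgp : ∀ᶠ y in atTop, g y = pp)
    (hgm : ∀ᶠ y in atBot, g y = pm) (hv : MemLp v 2 volume)
    (hug : MemLp (fun y => u y - g y) 2 volume) (hf : ∀ s t : ℝ, u t - u s = ∫ y in s..t, v y)
    (hH : Hfun W u ≠ ⊤) : Adm W pm pp u v := by
  have ha : Arc u v := ⟨hv, hf⟩
  have hWc := hT.smooth.continuous
  have huc := ha.cont
  have key : ∀ (p : ℝ × ℝ) (s : Set ℝ), MeasurableSet s → (∀ t ∈ s, g t = p) →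
      IntegrableOn (fun t => (u t - p).1 ^ 2 + (u t - p).2 ^ 2) s := by
    intro p s hs hsp
    have j := (memLp_two_iff_integrable_sq_norm hug.1).1 hug
    refine Integrable.mono' ((j.integrableOn (s := s)).const_mul 2) (by fun_prop) ?_
    filter_upwards [ae_restrict_mem hs] with t ht
    rw [Real.norm_of_nonneg (by positivity), hsp t ht]
    exact esq_le _
  obtain ⟨T1, hT1⟩ := eventually_atTop.1 hgp
  obtain ⟨T2, hT2⟩ := eventually_atBot.1 hgm
  refine ⟨ha, ?_, ?_, ?_⟩
  · refine ⟨(hWc.comp huc).aestronglyMeasurable, ?_⟩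
    rw [hasFiniteIntegral_iff_ofReal (Eventually.of_forall fun t => hT.nonneg (u t))]
    refine lt_of_le_of_lt (lintegral_mono fun t => ?_) (lt_top_iff_ne_top.2 hH)
    exact ENNReal.ofReal_le_ofReal (by
      have : 0 ≤ 1 / 2 * enorm2 (deriv u t) ^ 2 := by positivity
      linarith)
  · exact barbalat_bot ha (T := T2) (key pm _ measurableSet_Iio fun t ht => hT2 t (le_of_lt ht))
  · exact barbalat ha (T := T1) (key pp _ measurableSet_Ioi fun t ht => hT1 t (le_of_lt ht))

/-- the main theorem, given the upper bound -/
lemma main_of_UB (hT : TwoWell W pm pp) (hL : LB W pm pp e0 C) {A0 : ℝ} (hU : UB W pm pp e0 A0)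
    (g : ℝ → ℝ × ℝ) (hg : ContDiff ℝ (⊤ : ℕ∞) g)
    (hgp : ∀ᶠ y in atTop, g y = pp) (hgm : ∀ᶠ y in atBot, g y = pm) :
    ∃ ε1 > (0:ℝ), ∀ A : ℝ, |A - A0| < ε1 →
      ∃ (U : ℝ → ℝ × ℝ) (ν : ℝ),
        InGA g A U ∧
        (∀ u, InGA g A u → Hfun W U ≤ Hfun W u) ∧
        ContDiff ℝ (⊤ : ℕ∞) U ∧
        (∀ y : ℝ, deriv (deriv U) y = gradW W (U y) - ν • Jv (deriv U y)) ∧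
        Tendsto U atBot (𝓝 pm) ∧ Tendsto U atTop (𝓝 pp) ∧
        (∀ y : ℝ, enorm2 (deriv U y) ^ 2 = 2 * W (U y)) := by
  have hW := hT.nonneg
  obtain ⟨R, hR0, κ, hκ, hRR⟩ := wells hT
  have hR : WL W pm pp R κ := ⟨hR0, hκ, hRR⟩
  set c := Real.sqrt (2 * κ) with hcd
  have hc : c ^ 2 = 2 * κ := Real.sq_sqrt (by positivity)
  have hc0 : 0 < c := by positivity
  obtain ⟨ε, hε, hmin⟩ := minimizer hT hL hR hc hc0 hU
  refine ⟨if A0 = 0 then ε else min ε |A0|, ?_, fun A hA => ?_⟩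
  · split_ifs with h0
    · exact hε
    · exact lt_min hε (abs_pos.2 h0)
  have hA1 : |A - A0| < ε := by
    split_ifs at hA with h0
    · exact hA
    · exact hA.trans_le (min_le_left _ _)
  have hA2 : A = 0 → A0 = 0 := by
    intro h
    by_contra h0
    rw [if_neg h0, h, zero_sub, abs_neg] at hA
    exact absurd (hA.trans_le (min_le_right _ _)) (lt_irrefl _)
  obtain ⟨U, V, hadm, harea, hm, hEn, hk⟩ := hmin A hA1
  obtain ⟨ν, hν, hlag⟩ := lagrange hT hadm hk
  obtain ⟨w, hae, h1, h2⟩ := regular hT hadm hlag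
  have he := equip hT hadm hae h1 h2
  have hν2 : ν ^ 2 ≤ 2 * κ := by
    rw [← hc, sq_le_sq, abs_of_pos hc0]; linarith
  obtain ⟨hItg, hmem⟩ := glob hT hR hadm hν2 h1 h2 he hg.continuous hgp hgm
  have e1 : deriv U = w := funext fun t => (h1 t).deriv
  have e2 : ∀ t, deriv w t = gradW W (U t) - ν • Jv (w t) := fun t => (h2 t).deriv
  have hItgV : Integrable (fun t => (U t).1 * (V t).2) := by
    refine hItg.congr ?_
    filter_upwards [hae] with t ht
    rw [ht]
  refine ⟨U, ν, ⟨⟨V, hadm.mem, hmem, hadm.ftc⟩, ?_⟩, ?_, smooth_sol hT.smooth h1 h2, ?_, hadm.lm, hadm.lp, ?_⟩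
  · rw [hadm.toArc.areaLine_eq]
    exact (area_of_int hItgV).unique harea
  · rintro u ⟨⟨v, hv, hug, hf⟩, har⟩
    by_cases hH : Hfun W u = ⊤
    · rw [hH]; exact le_top
    have hu := adm_of_shift hT hgp hgm hv hug hf hH
    rw [hadm.hfun hW, hu.hfun hW]
    refine ENNReal.ofReal_le_ofReal ?_
    rw [hu.toArc.areaLine_eq] at har
    by_cases hi : Integrable (fun t => (u t).1 * (v t).2)
    · have := area_of_int hi
      rw [har] at this
      exact hm u v hu this
    · rw [integral_undef hi] at har
      have hA0 := hA2 har.symm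
      rw [← har, hA0] at hEn
      simp only [sub_self, abs_zero, mul_zero, add_zero] at hEn
      exact hEn.trans (hu.en_lower hW hL)
  · intro y
    rw [e1]; exact e2 y
  · intro y
    rw [e1, enorm2_sq]; exact he y

end TW

namespace TW
variable {W : ℝ × ℝ → ℝ} {pm pp : ℝ × ℝ} {u v : ℝ → ℝ × ℝ} {e0 C R κ : ℝ}

lemma cpt_int {f : ℝ → ℝ} (hf : Continuous f) {N : ℝ} (hz : ∀ t, N ≤ |t| → f t = 0) : Integrable f := by
  refine hf.integrable_of_hasCompactSupport (HasCompactSupport.intro (isCompact_Icc (a := -N) (b := N)) fun t ht => ?_)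
  refine hz t ?_
  by_contra h
  push Not at h
  exact ht ⟨(abs_lt.1 h).1.le, (abs_lt.1 h).2.le⟩

lemma timechange (hT : TwoWell W pm pp) {w γ : ℝ → ℝ × ℝ} (hwc : Continuous w)
    (hγ : ∀ t, HasDerivAt γ (w t) t) {N : ℝ} (hN : 0 < N) (hz : ∀ t, N ≤ |t| → w t = 0)
    (hm : ∀ t ≤ -N, γ t = pm) (hp : ∀ t ≥ N, γ t = pp) {ε : ℝ} (hε : 0 < ε) :
    ∃ u v, Adm W pm pp u v ∧ HasArea u v (∫ t, (γ t).1 * (w t).2) ∧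
      En W u v ≤ (∫ t, Real.sqrt (2 * W (γ t)) * enorm2 (w t)) + ε := by
  have hWc := hT.smooth.continuous
  have hW := hT.nonneg
  have hγc : Continuous γ := continuous_iff_continuousAt.2 fun t => (hγ t).continuousAt
  have hWz : ∀ t, N ≤ |t| → W (γ t) = 0 := by
    intro t ht
    rcases le_abs.1 ht with h | h
    · rw [hp t h]; exact (hT.zeroSet pp).2 (Or.inr rfl)
    · rw [hm t (by linarith)]; exact (hT.zeroSet pm).2 (Or.inl rfl)
  set S : ℝ → ℝ := fun t => Real.sqrt (2 * W (γ t)) with hS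
  set n : ℝ → ℝ := fun t => enorm2 (w t) with hn
  have hSc : Continuous S := by simp only [hS]; fun_prop
  have hnc : Continuous n := enorm2_cont.comp hwc
  have hS0 : ∀ t, 0 ≤ S t := fun t => Real.sqrt_nonneg _
  have hn0 : ∀ t, 0 ≤ n t := fun t => enorm2_nonneg _
  have hSz : ∀ t, N ≤ |t| → S t = 0 := fun t ht => by simp [hS, hWz t ht]
  have hnz : ∀ t, N ≤ |t| → n t = 0 := fun t ht => by simp [hn, hz t ht, enorm2]
  have hS2 : ∀ t, S t ^ 2 = 2 * W (γ t) := fun t => Real.sq_sqrt (by linarith [hW (γ t)])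
  have hn2 : ∀ t, n t ^ 2 = (w t).1 ^ 2 + (w t).2 ^ 2 := fun t => enorm2_sq _
  have iSn : Integrable (fun t => n t + S t) :=
    cpt_int (hnc.add hSc) (N := N) fun t ht => by simp [hSz t ht, hnz t ht]
  have iSn' : Integrable (fun t => S t * n t) :=
    cpt_int (hSc.mul hnc) (N := N) fun t ht => by simp [hSz t ht]
  set I := ∫ t, (n t + S t) with hI
  have hI0 : 0 ≤ I := integral_nonneg fun t => add_nonneg (hn0 t) (hS0 t)
  set a := ε / (I + 1) with ha
  have ha0 : 0 < a := by positivity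
  set ρ : ℝ → ℝ := fun t => (n t + a) / (S t + a) with hρ
  have hρ0 : ∀ t, 0 < ρ t := fun t =>
    div_pos (by linarith [hn0 t]) (by linarith [hS0 t])
  have hρc : Continuous ρ := (hnc.add continuous_const).div (hSc.add continuous_const)
    fun t => ne_of_gt (by linarith [hS0 t])
  have hρ1 : ∀ t, N ≤ |t| → ρ t = 1 := fun t ht => by
    simp only [hρ, hSz t ht, hnz t ht, zero_add]; exact div_self ha0.ne'
  set Y : ℝ → ℝ := fun t => 0 + ∫ x in (0:ℝ)..t, ρ x with hY
  have hYd : ∀ t, HasDerivAt Y (ρ t) t := fun t => prim_deriv hρc 0 t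
  have hYc : Continuous Y := continuous_iff_continuousAt.2 fun t => (hYd t).continuousAt
  have hYs : StrictMono Y := strictMono_of_deriv_pos fun t => by rw [(hYd t).deriv]; exact hρ0 t
  have hYi : ∀ s t, Y t = Y s + ∫ x in s..t, ρ x := fun s t => by
    simp only [hY, zero_add]
    rw [intervalIntegral.integral_add_adjacent_intervals (hρc.intervalIntegrable _ _) (hρc.intervalIntegrable _ _)]
  have hYp : ∀ t ≥ N, Y t = Y N + (t - N) := by
    intro t ht
    rw [hYi N t, intervalIntegral.integral_congr (g := fun _ => 1)]
    · simp
    · intro x hx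
      rw [uIcc_of_le ht] at hx
      exact hρ1 x (hx.1.trans (le_abs_self x))
  have hYm : ∀ t ≤ -N, Y t = Y (-N) + (t + N) := by
    intro t ht
    rw [hYi (-N) t, intervalIntegral.integral_congr (g := fun _ => 1)]
    · simp
    · intro x hx
      rw [uIcc_of_ge ht] at hx
      exact hρ1 x (by have := neg_le_abs x; linarith [hx.2])
  have hYt : Tendsto Y atTop atTop := by
    refine Tendsto.congr' (f₁ := fun t => Y N + (t - N)) ?_ ?_
    · filter_upwards [eventually_ge_atTop N] with t ht using (hYp t ht).symm
    · exact tendsto_atTop_add_const_left _ _ (tendsto_atTop_add_const_right _ _ tendsto_id)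
  have hYb : Tendsto Y atBot atBot := by
    refine Tendsto.congr' (f₁ := fun t => Y (-N) + (t + N)) ?_ ?_
    · filter_upwards [eventually_le_atBot (-N)] with t ht using (hYm t ht).symm
    · exact tendsto_atBot_add_const_left _ _ (tendsto_atBot_add_const_right _ _ tendsto_id)
  have hsurj : Function.Surjective Y := hYc.surjective hYt hYb
  set e := StrictMono.orderIsoOfSurjective Y hYs hsurj with he
  set τ : ℝ → ℝ := fun y => e.symm y with hτ
  have hτc : Continuous τ := e.symm.continuous
  have hYτ : ∀ y, Y (τ y) = y := fun y => e.apply_symm_apply y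
  have hτY : ∀ t, τ (Y t) = t := fun t => e.symm_apply_apply t
  have hτd : ∀ y, HasDerivAt τ (ρ (τ y))⁻¹ y := fun y =>
    HasDerivAt.of_local_left_inverse hτc.continuousAt (hYd (τ y)) (hρ0 _).ne'
      (Eventually.of_forall hYτ)
  have hcv : ∀ k : ℝ → ℝ, ∫ y, (ρ (τ y))⁻¹ * k (τ y) = ∫ t, k t := by
    intro k
    have h := integral_image_eq_integral_abs_deriv_smul (f := τ) MeasurableSet.univ
      (fun y _ => (hτd y).hasDerivWithinAt) e.symm.injective.injOn k
    have hr : τ '' univ = univ := by rw [image_univ]; exact e.symm.surjective.range_eq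
    rw [hr] at h
    simp only [Measure.restrict_univ, smul_eq_mul] at h
    rw [h]
    congr 1; funext y
    rw [abs_of_pos (inv_pos.2 (hρ0 _))]
  have hτN : ∀ y, y ≤ Y (-N) → τ y ≤ -N := fun y hy => by
    rw [← hτY (-N)]; exact e.symm.monotone hy
  have hτN' : ∀ y, Y N ≤ y → N ≤ τ y := fun y hy => by
    rw [← hτY N]; exact e.symm.monotone hy
  have hout : ∀ y, y ∉ Icc (Y (-N)) (Y N) → N ≤ |τ y| := by
    intro y hy
    rw [mem_Icc, not_and_or, not_le, not_le] at hy
    rcases hy with h | h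
    · have := hτN y h.le; have := neg_le_abs (τ y); linarith
    · exact (hτN' y h.le).trans (le_abs_self _)
  set u : ℝ → ℝ × ℝ := fun y => γ (τ y) with hu
  set v : ℝ → ℝ × ℝ := fun y => (ρ (τ y))⁻¹ • w (τ y) with hv
  have hud : ∀ y, HasDerivAt u (v y) y := fun y => (hγ (τ y)).scomp y (hτd y)
  have hvc : Continuous v := ((hρc.comp hτc).inv₀ fun y => (hρ0 _).ne').smul (hwc.comp hτc)
  have huc : Continuous u := hγc.comp hτc
  have hvs : HasCompactSupport v := HasCompactSupport.intro (isCompact_Icc (a := Y (-N)) (b := Y N))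
    fun y hy => by simp [hv, hz _ (hout y hy)]
  have harc : Arc u v := ⟨hvc.memLp_of_hasCompactSupport hvs, fun s t =>
    (intervalIntegral.integral_eq_sub_of_hasDerivAt (fun y _ => hud y) (hvc.intervalIntegrable _ _)).symm⟩
  have hadm : Adm W pm pp u v := by
    refine ⟨harc, ?_, ?_, ?_⟩
    · refine (hWc.comp huc).integrable_of_hasCompactSupport
        (HasCompactSupport.intro (isCompact_Icc (a := Y (-N)) (b := Y N)) fun y hy => ?_)
      exact hWz _ (hout y hy)
    · refine tendsto_const_nhds.congr' ?_
      filter_upwards [eventually_le_atBot (Y (-N))] with y hy using (hm _ (hτN y hy)).symm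
    · refine tendsto_const_nhds.congr' ?_
      filter_upwards [eventually_ge_atTop (Y N)] with y hy using (hp _ (hτN' y hy)).symm
  refine ⟨u, v, hadm, ?_, ?_⟩
  · have hi : Integrable (fun y => (u y).1 * (v y).2) := by
      refine Continuous.integrable_of_hasCompactSupport (by fun_prop)
        (HasCompactSupport.intro (isCompact_Icc (a := Y (-N)) (b := Y N)) fun y hy => ?_)
      simp [hv, hz _ (hout y hy)]
    have := area_of_int hi
    rw [← hcv (fun t => (γ t).1 * (w t).2)]
    convert this using 3
    simp only [hv, hu, Prod.smul_snd, smul_eq_mul]; ring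
  · have e1 : En W u v = ∫ t, ((1/2) * n t ^ 2 / ρ t + W (γ t) * ρ t) := by
      rw [← hcv, En]
      congr 1; funext y
      have := (hρ0 (τ y)).ne'
      simp only [dens, hv, hu, Prod.smul_snd, Prod.smul_fst, smul_eq_mul, hn2]
      field_simp
    have e2 : ∀ t, (1/2) * n t ^ 2 / ρ t + W (γ t) * ρ t ≤ S t * n t + a / 2 * (n t + S t) := by
      intro t
      have p1 : 0 < n t + a := by linarith [hn0 t]
      have p2 : 0 < S t + a := by linarith [hS0 t]
      have q1 : (1/2) * n t ^ 2 / ρ t ≤ 1/2 * n t * (S t + a) := by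
        rw [div_le_iff₀ (hρ0 t)]
        have : 1/2 * n t * (S t + a) * ρ t = 1 / 2 * n t * (n t + a) := by
          simp only [hρ]; field_simp
        rw [this]; nlinarith [hn0 t]
      have q2 : W (γ t) * ρ t ≤ 1/2 * S t * (n t + a) := by
        have : W (γ t) * ρ t = 1/2 * S t * (n t + a) * (S t / (S t + a)) := by
          have : W (γ t) = S t ^ 2 / 2 := by rw [hS2]; ring
          rw [this]; simp only [hρ]; field_simp
        rw [this]
        refine mul_le_of_le_one_right (by have := hS0 t; positivity) ?_
        rw [div_le_one p2]; linarith
      linarith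
    rw [e1]
    have i1 : Integrable (fun t => S t * n t + a / 2 * (n t + S t)) := iSn'.add (iSn.const_mul _)
    have e3 : ∫ t, ((1/2) * n t ^ 2 / ρ t + W (γ t) * ρ t) ≤ ∫ t, (S t * n t + a / 2 * (n t + S t)) := by
      refine integral_mono_of_nonneg (Eventually.of_forall fun t => ?_) i1 (Eventually.of_forall e2)
      have := hρ0 t; have := hW (γ t)
      simp only [Pi.zero_apply]; positivity
    rw [integral_add iSn' (iSn.const_mul _), integral_const_mul] at e3
    have e4 : a / 2 * I ≤ ε := by
      have : a * (I + 1) = ε := by rw [ha]; field_simp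
      nlinarith
    linarith

end TW

namespace TW
variable {W : ℝ × ℝ → ℝ} {pm pp : ℝ × ℝ} {u v : ℝ → ℝ × ℝ} {e0 C R κ : ℝ}

lemma iic_eq {w : ℝ → ℝ × ℝ} (hw : Integrable w) (t : ℝ) :
    ∫ x in Iic t, w x = (∫ x in Iic (0:ℝ), w x) + ∫ x in (0:ℝ)..t, w x := by
  rw [← intervalIntegral.integral_Iic_sub_Iic hw.integrableOn hw.integrableOn]
  abel

lemma iic_cont {w : ℝ → ℝ × ℝ} (hw : Integrable w) : Continuous fun t => ∫ x in Iic t, w x := by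
  rw [funext (iic_eq hw)]
  exact continuous_const.add (intervalIntegral.continuous_primitive (fun a b => hw.intervalIntegrable) 0)

lemma iic_bd {w : ℝ → ℝ × ℝ} (hw : Integrable w) (t : ℝ) : ‖∫ x in Iic t, w x‖ ≤ ∫ x, ‖w x‖ :=
  (norm_integral_le_integral_norm _).trans
    (setIntegral_le_integral hw.norm (Eventually.of_forall fun _ => norm_nonneg _))

lemma enorm2_lip (x y : ℝ × ℝ) : |enorm2 x - enorm2 y| ≤ 2 * ‖x - y‖ := by
  have key : ∀ z : ℝ × ℝ, enorm2 z = ‖(⟨z.1, z.2⟩ : ℂ)‖ := by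
    intro z
    rw [Complex.norm_eq_sqrt_sq_add_sq]; rfl
  refine le_trans ?_ (enorm2_le (x - y))
  rw [key, key, key]
  refine (abs_norm_sub_norm_le _ _).trans (le_of_eq ?_)
  congr 1

lemma geo_vel {γ : ℝ → ℝ × ℝ} (h : LocallyLipschitz γ) :
    ∃ f : ℝ → ℝ × ℝ, Integrable f ∧ (∀ t, t ∉ Ioc (0:ℝ) 1 → f t = 0) ∧
      (∀ t ∈ Icc (0:ℝ) 1, ∫ x in Iic t, f x = γ t - γ 0) ∧ (∫ x, f x = γ 1 - γ 0) ∧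
      ∀ᵐ t, t ∈ Ioc (0:ℝ) 1 → HasDerivAt γ (f t) t := by
  obtain ⟨K, hK⟩ := h.locallyLipschitzOn.exists_lipschitzOnWith_of_compact (isCompact_Icc (a := (0:ℝ)) (b := 1))
  have l1 : LipschitzOnWith (1 * K) (fun t => (γ t).1) (uIcc 0 1) := by
    rw [uIcc_of_le zero_le_one]; exact LipschitzWith.prod_fst.comp_lipschitzOnWith hK
  have l2 : LipschitzOnWith (1 * K) (fun t => (γ t).2) (uIcc 0 1) := by
    rw [uIcc_of_le zero_le_one]; exact LipschitzWith.prod_snd.comp_lipschitzOnWith hK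
  have a1 := l1.absolutelyContinuousOnInterval
  have a2 := l2.absolutelyContinuousOnInterval
  set d : ℝ → ℝ × ℝ := fun t => (deriv (fun t => (γ t).1) t, deriv (fun t => (γ t).2) t) with hd
  have i1 := a1.intervalIntegrable_deriv
  have i2 := a2.intervalIntegrable_deriv
  rw [intervalIntegrable_iff_integrableOn_Ioc_of_le zero_le_one] at i1 i2
  have id : IntegrableOn d (Ioc 0 1) := Integrable.prodMk i1 i2
  have hI : ∀ t ∈ Icc (0:ℝ) 1, ∫ x in Iic t, (Ioc (0:ℝ) 1).indicator d x = γ t - γ 0 := by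
    intro t ht
    have e : Iic t ∩ Ioc (0:ℝ) 1 = Ioc 0 t := by
      ext x; simp only [mem_inter_iff, mem_Iic, mem_Ioc]
      constructor
      · rintro ⟨a, b, c⟩; exact ⟨b, a⟩
      · rintro ⟨a, b⟩; exact ⟨b, a, b.trans ht.2⟩
    rw [setIntegral_indicator measurableSet_Ioc, e]
    have sub : uIcc 0 t ⊆ uIcc (0:ℝ) 1 := by
      rw [uIcc_of_le ht.1, uIcc_of_le zero_le_one]; exact Icc_subset_Icc_right ht.2
    have idt : IntegrableOn d (Ioc 0 t) := id.mono_set (Ioc_subset_Ioc_right ht.2)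
    have f1 := (a1.mono sub).integral_deriv_eq_sub
    have f2 := (a2.mono sub).integral_deriv_eq_sub
    rw [intervalIntegral.integral_of_le ht.1] at f1 f2
    refine Prod.ext ?_ ?_
    · rw [fst_integral idt]; exact f1
    · rw [snd_integral idt]; exact f2
  refine ⟨(Ioc (0:ℝ) 1).indicator d, (integrable_indicator_iff measurableSet_Ioc).2 id,
    fun t ht => indicator_of_notMem ht _, hI, ?_, ?_⟩
  · rw [← hI 1 ⟨zero_le_one, le_rfl⟩, setIntegral_eq_integral_of_forall_compl_eq_zero]
    intro x hx
    exact indicator_of_notMem (fun h => hx h.2) _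
  · filter_upwards [a1.ae_differentiableAt, a2.ae_differentiableAt] with t h1 h2 ht
    have ht' : t ∈ uIcc (0:ℝ) 1 := by rw [uIcc_of_le zero_le_one]; exact ⟨ht.1.le, ht.2⟩
    rw [indicator_of_mem ht]
    exact (h1 ht').hasDerivAt.prodMk (h2 ht').hasDerivAt

lemma approx_vel {f : ℝ → ℝ × ℝ} (hf : Integrable f) {δ : ℝ} (hδ : 0 < δ) :
    ∃ w : ℝ → ℝ × ℝ, Continuous w ∧ Integrable w ∧ (∃ N > 0, ∀ t, N ≤ |t| → w t = 0) ∧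
      (∫ x, w x = ∫ x, f x) ∧ ∫ x, ‖w x - f x‖ ≤ δ := by
  obtain ⟨g, gs, gd, gc, gi⟩ := hf.exists_hasCompactSupport_integral_sub_le (half_pos hδ)
  let B : ContDiffBump (0:ℝ) := default
  set χ : ℝ → ℝ := B.normed volume with hχ
  have χc : Continuous χ := B.continuous_normed
  have χs : HasCompactSupport χ := B.hasCompactSupport_normed
  have χi : Integrable χ := B.integrable_normed
  have χ1 : ∫ x, χ x = 1 := B.integral_normed
  have χ0 : ∀ x, 0 ≤ χ x := fun x => B.nonneg_normed x
  set z : ℝ × ℝ := (∫ x, f x) - ∫ x, g x with hz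
  have hzb : ‖z‖ ≤ δ / 2 := by
    rw [hz, ← integral_sub hf gi]
    exact (norm_integral_le_integral_norm _).trans gd
  have hsi : Integrable fun x => χ x • z := χi.smul_const z
  have hwi : Integrable fun x => g x + χ x • z := gi.add hsi
  obtain ⟨N1, hN1, h1⟩ := zero_outside χs
  obtain ⟨N2, hN2, h2⟩ := zero_outside gs.norm
  refine ⟨fun x => g x + χ x • z, by fun_prop, hwi, ⟨max N1 N2, lt_max_of_lt_left hN1, fun t ht => ?_⟩, ?_, ?_⟩
  · have := h1 t (le_trans (le_max_left _ _) ht)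
    have h3 := h2 t (le_trans (le_max_right _ _) ht)
    rw [norm_eq_zero] at h3
    simp [this, h3]
  · rw [integral_add gi hsi, integral_smul_const, χ1, one_smul, hz]; abel
  · have : ∫ x, ‖g x + χ x • z - f x‖ ≤ ∫ x, (‖f x - g x‖ + χ x * ‖z‖) := by
      refine integral_mono (hwi.sub hf).norm ((hf.sub gi).norm.add (χi.mul_const _)) fun x => ?_
      have e : g x + χ x • z - f x = χ x • z - (f x - g x) := by abel
      show ‖g x + χ x • z - f x‖ ≤ ‖f x - g x‖ + χ x * ‖z‖
      rw [e]
      refine (norm_sub_le _ _).trans ?_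
      rw [norm_smul, Real.norm_of_nonneg (χ0 x)]
      linarith
    have e2 : ∫ x, (‖f x - g x‖ + χ x * ‖z‖) = (∫ x, ‖f x - g x‖) + ‖z‖ := by
      refine (integral_add (hf.sub gi).norm (χi.mul_const _)).trans ?_
      rw [integral_mul_const, χ1, one_mul]
      rfl
    linarith

lemma conv_fun {Φ n : ℝ × ℝ → ℝ} (hΦ : Continuous Φ) (hn : ∀ x y, |n x - n y| ≤ 2 * ‖x - y‖)
    (hn0 : n 0 = 0) (hnc : Continuous n) (p : ℝ × ℝ) {f : ℝ → ℝ × ℝ} {w : ℕ → ℝ → ℝ × ℝ} (hf : Integrable f)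
    (hw : ∀ k, Integrable (w k)) (hl : Tendsto (fun k => ∫ x, ‖w k x - f x‖) atTop (𝓝 0)) :
    Tendsto (fun k => ∫ t, Φ (p + ∫ x in Iic t, w k x) * n (w k t)) atTop
      (𝓝 (∫ t, Φ (p + ∫ x in Iic t, f x) * n (f t))) := by
  have hni : ∀ {g : ℝ → ℝ × ℝ}, Integrable g → Integrable (fun t => n (g t)) := by
    intro g hg
    refine (hg.norm.const_mul 2).mono' (hnc.comp_aestronglyMeasurable hg.1) (Eventually.of_forall fun t => ?_)
    have := hn (g t) 0
    simpa [hn0] using this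
  obtain ⟨B, hB⟩ := hl.bddAbove_range
  have hB' : ∀ k t, ‖p + ∫ x in Iic t, w k x‖ ≤ ‖p‖ + ((∫ x, ‖f x‖) + B) := by
    intro k t
    refine (norm_add_le _ _).trans ?_
    have h1 := iic_bd (hw k) t
    have h2 : ∫ x, ‖w k x‖ ≤ ∫ x, (‖f x‖ + ‖w k x - f x‖) := by
      refine integral_mono (hw k).norm (hf.norm.add ((hw k).sub hf).norm) fun x => ?_
      show ‖w k x‖ ≤ ‖f x‖ + ‖w k x - f x‖
      have := norm_add_le (f x) (w k x - f x)
      rwa [add_sub_cancel] at this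
    have h3 : ∫ x, (‖f x‖ + ‖w k x - f x‖) = (∫ x, ‖f x‖) + ∫ x, ‖w k x - f x‖ :=
      integral_add hf.norm ((hw k).sub hf).norm
    have h4 : ∫ x, ‖w k x - f x‖ ≤ B := hB ⟨k, rfl⟩
    linarith
  obtain ⟨M, hM0, hM⟩ := bdd_ball hΦ (‖p‖ + ((∫ x, ‖f x‖) + B))
  have hcm : ∀ {g : ℝ → ℝ × ℝ}, Integrable g → Continuous fun t => Φ (p + ∫ x in Iic t, g x) := fun hg =>
    hΦ.comp (continuous_const.add (iic_cont hg))
  have hγ : ∀ t, Tendsto (fun k => ∫ x in Iic t, w k x) atTop (𝓝 (∫ x in Iic t, f x)) := by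
    intro t
    rw [tendsto_iff_norm_sub_tendsto_zero]
    refine squeeze_zero (fun _ => norm_nonneg _) (fun k => ?_) hl
    rw [← integral_sub (hw k).integrableOn hf.integrableOn]
    exact iic_bd ((hw k).sub hf) t
  have T1 : Tendsto (fun k => ∫ t, Φ (p + ∫ x in Iic t, w k x) * n (f t)) atTop
      (𝓝 (∫ t, Φ (p + ∫ x in Iic t, f x) * n (f t))) := by
    refine tendsto_integral_of_dominated_convergence (fun t => M * |n (f t)|)
      (fun k => (hcm (hw k)).aestronglyMeasurable.mul (hni hf).1) ((hni hf).abs.const_mul M)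
      (fun k => Eventually.of_forall fun t => ?_) (Eventually.of_forall fun t => ?_)
    · rw [norm_mul, Real.norm_eq_abs, Real.norm_eq_abs]
      exact mul_le_mul_of_nonneg_right (hM _ (hB' k t)) (abs_nonneg _)
    · exact ((hΦ.tendsto _).comp ((hγ t).const_add p)).mul_const _
  have hI : ∀ k {g : ℝ → ℝ × ℝ}, Integrable g → Integrable fun t => Φ (p + ∫ x in Iic t, w k x) * n (g t) := by
    intro k g hg
    refine (hni hg).bdd_mul (c := M) (hcm (hw k)).aestronglyMeasurable (Eventually.of_forall fun t => ?_)
    exact hM _ (hB' k t)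
  have T2 : Tendsto (fun k => (∫ t, Φ (p + ∫ x in Iic t, w k x) * n (w k t)) -
      ∫ t, Φ (p + ∫ x in Iic t, w k x) * n (f t)) atTop (𝓝 0) := by
    refine squeeze_zero_norm (a := fun k => M * 2 * ∫ x, ‖w k x - f x‖) (fun k => ?_)
      (by simpa using hl.const_mul (M * 2))
    rw [← integral_sub (hI k (hw k)) (hI k hf), ← integral_const_mul]
    refine norm_integral_le_of_norm_le (((hw k).sub hf).norm.const_mul _) (Eventually.of_forall fun t => ?_)
    rw [← mul_sub, norm_mul, mul_assoc]
    exact mul_le_mul (hM _ (hB' k t)) (hn _ _) (norm_nonneg _) hM0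
  simpa using T2.add T1

lemma ub_geo (hT : TwoWell W pm pp) {γ : ℝ → ℝ × ℝ} (hγ : IsCurve 0 1 γ pm pp) :
    UB W pm pp (Real.sqrt 2 * degLen (fun p => Real.sqrt (W p)) 0 1 γ) (sArea 0 1 γ) := by
  obtain ⟨-, hlip, h0, h1⟩ := hγ
  obtain ⟨f, hf, fz, fI, fT, fd⟩ := geo_vel hlip
  rw [h0] at fI fT
  rw [h1] at fT
  have hWc := hT.smooth.continuous
  have eq1 : ∫ t, Real.sqrt (2 * W (pm + ∫ x in Iic t, f x)) * enorm2 (f t) =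
      Real.sqrt 2 * degLen (fun p => Real.sqrt (W p)) 0 1 γ := by
    unfold degLen
    rw [intervalIntegral.integral_of_le zero_le_one, ← integral_const_mul,
      ← setIntegral_eq_integral_of_forall_compl_eq_zero (s := Ioc (0:ℝ) 1)]
    · refine setIntegral_congr_ae measurableSet_Ioc ?_
      filter_upwards [fd] with t ht hm
      rw [fI t ⟨hm.1.le, hm.2⟩, (ht hm).deriv, add_sub_cancel, Real.sqrt_mul (by norm_num), mul_assoc]
    · intro t ht
      rw [fz t ht]; simp [enorm2]
  have eq2 : ∫ t, (pm + ∫ x in Iic t, f x).1 * (f t).2 = sArea 0 1 γ := by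
    unfold sArea
    rw [intervalIntegral.integral_of_le zero_le_one,
      ← setIntegral_eq_integral_of_forall_compl_eq_zero (s := Ioc (0:ℝ) 1)]
    · refine setIntegral_congr_ae measurableSet_Ioc ?_
      filter_upwards [fd] with t ht hm
      rw [fI t ⟨hm.1.le, hm.2⟩, (hd_snd (ht hm)).deriv, add_sub_cancel]
    · intro t ht
      rw [fz t ht]; simp
  choose w wc wi wN wT wl using fun k : ℕ => approx_vel hf (δ := 1 / ((k:ℝ) + 1)) (by positivity)
  have hl : Tendsto (fun k => ∫ x, ‖w k x - f x‖) atTop (𝓝 0) :=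
    squeeze_zero (fun k => integral_nonneg fun _ => norm_nonneg _) wl tendsto_one_div_add_atTop_nhds_zero_nat
  have L1 := conv_fun (Φ := fun p => Real.sqrt (2 * W p)) (n := enorm2) (by fun_prop) enorm2_lip
    (by simp [enorm2]) enorm2_cont pm hf wi hl
  have L2 := conv_fun (Φ := fun p => p.1) (n := fun p => p.2) (by fun_prop)
    (fun x y => by
      have := norm_snd_le (x - y)
      have h := norm_nonneg (x - y)
      rw [Prod.snd_sub, Real.norm_eq_abs] at this
      linarith) rfl continuous_snd pm hf wi hl
  rw [eq1] at L1
  rw [eq2] at L2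
  intro ε hε
  have E1 := L1.eventually (gt_mem_nhds (show _ < Real.sqrt 2 * degLen (fun p => Real.sqrt (W p)) 0 1 γ + ε / 2 by linarith))
  have E2 := L2.eventually (Metric.closedBall_mem_nhds _ hε)
  obtain ⟨k, k1, k2⟩ := (E1.and E2).exists
  obtain ⟨N, hN, hz⟩ := wN k
  have hd : ∀ t, HasDerivAt (fun t => pm + ∫ x in Iic t, w k x) (w k t) t := by
    intro t
    have e : (fun t => pm + ∫ x in Iic t, w k x) =
        fun t => (pm + ∫ x in Iic (0:ℝ), w k x) + ∫ x in (0:ℝ)..t, w k x := by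
      funext t; rw [iic_eq (wi k) t, add_assoc]
    rw [e]
    exact (intervalIntegral.integral_hasDerivAt_right ((wc k).intervalIntegrable _ _)
      ((wc k).stronglyMeasurableAtFilter _ _) (wc k).continuousAt).const_add _
  obtain ⟨u, v, hA, ha, hE⟩ := timechange hT (wc k) hd hN hz
    (fun t ht => by
      have : ∫ x in Iic t, w k x = 0 := by
        refine setIntegral_eq_zero_of_forall_eq_zero fun x hx => hz x ?_
        have : x ≤ t := hx
        rw [abs_of_nonpos (by linarith)]; linarith
      show pm + ∫ x in Iic t, w k x = pm
      rw [this, add_zero])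
    (fun t ht => by
      have : ∫ x in Iic t, w k x = pp - pm := by
        rw [setIntegral_eq_integral_of_forall_compl_eq_zero, wT k, fT]
        intro x hx
        refine hz x ?_
        have : t < x := not_le.1 hx
        rw [abs_of_nonneg (by linarith)]; linarith
      show pm + ∫ x in Iic t, w k x = pp
      rw [this, add_sub_cancel]) (half_pos hε)
  refine ⟨u, v, _, hA, ha, ?_, ?_⟩
  · linarith
  · simpa [Real.dist_eq] using k2

end TW

/-- for `A` close enough to `𝒜(γ₀)` there is a minimizer `U` of `H` over `G_A`
which is a smooth traveling wave: `U'' = ∇W(U) − ν J U'` for some wave speed `ν`, with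
`U(±∞) = p±` and the equipartition relation `|U'|² = 2W(U)`. -/
theorem traveling_wave_existence
    (W : ℝ × ℝ → ℝ) (pm pp : ℝ × ℝ) (hW : TwoWell W pm pp)
    (F : ℝ × ℝ → ℝ) (hF : F = fun p => Real.sqrt (W p))
    (γ0 : ℝ → ℝ × ℝ) (hγ0 : IsCurve 0 1 γ0 pm pp)
    (hmin : ∀ a b γ, IsCurve a b γ pm pp → degLen F 0 1 γ0 ≤ degLen F a b γ)
    (g : ℝ → ℝ × ℝ) (hg : ContDiff ℝ (⊤ : ℕ∞) g)
    (hgp : ∀ᶠ y in atTop, g y = pp) (hgm : ∀ᶠ y in atBot, g y = pm) :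
    ∃ ε1 > (0:ℝ), ∀ A : ℝ, |A - sArea 0 1 γ0| < ε1 →
      ∃ (U : ℝ → ℝ × ℝ) (ν : ℝ),
        InGA g A U ∧
        (∀ u, InGA g A u → Hfun W U ≤ Hfun W u) ∧
        ContDiff ℝ (⊤ : ℕ∞) U ∧
        (∀ y : ℝ, deriv (deriv U) y = gradW W (U y) - ν • Jv (deriv U y)) ∧
        Tendsto U atBot (𝓝 pm) ∧ Tendsto U atTop (𝓝 pp) ∧
        (∀ y : ℝ, enorm2 (deriv U y) ^ 2 = 2 * W (U y)) := by
  subst hF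
  obtain ⟨C, hC, hL⟩ := TW.lower hW.smooth.continuous hW.nonneg hmin
  exact TW.main_of_UB hW ⟨hC, hL⟩ (TW.ub_geo hW hγ0) g hg hgp hgm
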